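/- Let F ∈ R^{l×m} with l < m and rank r, and suppose d_r(F) is associated to (z_1 − f) h, where f ∈ K[z_2, …, z_n] and h ∈ K[z_n]. Then F is equivalent to its Smith form if and only if J_k(F) = R for every k = 1, …, r. -/

import Mathlib

open MvPolynomial Matrix

section Defs

variable {A : Type*} [CommRing A]

/-- The set of all `k × k` minors of a matrix. -/
def minorsSet {l m : ℕ} (F : Matrix (Fin l) (Fin m) A) (k : ℕ) : Set A :=
  { p | ∃ (r : Fin k ↪ Fin l) (c : Fin k ↪ Fin m), p = (F.submatrix ⇑r ⇑c).det }

/-- `d` is a greatest common divisor of the `k × k` minors of `F`. -/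
def IsGcdMinors {l m : ℕ} (F : Matrix (Fin l) (Fin m) A) (k : ℕ) (d : A) : Prop :=
  (∀ p ∈ minorsSet F k, d ∣ p) ∧ ∀ e : A, (∀ p ∈ minorsSet F k, e ∣ p) → e ∣ d

/-- The ideal generated by the `k × k` reduced minors of `F`, relative to a gcd `d`
of the `k × k` minors (the reduced minors are the `v` with `d * v` a minor). -/
def reducedIdeal {l m : ℕ} (F : Matrix (Fin l) (Fin m) A) (k : ℕ) (d : A) : Ideal A :=
  Ideal.span { v : A | d * v ∈ minorsSet F k }

/-- `J_k(F) = R`: the `k × k` reduced minors of `F` generate the unit ideal. -/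
def JkUnit {l m : ℕ} (F : Matrix (Fin l) (Fin m) A) (k : ℕ) : Prop :=
  ∃ d : A, IsGcdMinors F k d ∧ reducedIdeal F k d = ⊤

/-- `F` has rank `r`: some `r × r` minor is nonzero and all `(r+1) × (r+1)` minors vanish. -/
def HasRank {l m : ℕ} (F : Matrix (Fin l) (Fin m) A) (r : ℕ) : Prop :=
  (∃ p ∈ minorsSet F r, p ≠ 0) ∧ ∀ p ∈ minorsSet F (r + 1), p = 0

/-- Equivalence of matrices: `F₁ = U * F₂ * V` for unimodular `U`, `V`. -/
def MatEquiv {l m : ℕ} (F₁ F₂ : Matrix (Fin l) (Fin m) A) : Prop :=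
  ∃ (U : Matrix (Fin l) (Fin l) A) (V : Matrix (Fin m) (Fin m) A),
    IsUnit U.det ∧ IsUnit V.det ∧ F₁ = U * F₂ * V

/-- The rectangular diagonal matrix with diagonal entries `Φ`. -/
def smithDiag {l m : ℕ} (Φ : Fin l → A) : Matrix (Fin l) (Fin m) A :=
  Matrix.of fun i j => if (i : ℕ) = (j : ℕ) then Φ i else 0

/-- `F` (of rank `r`) is equivalent to its Smith form: there are diagonal entries `Φ` such that
for each `i ≤ r` the product `Φ_1 ⋯ Φ_i` is a gcd of the `i × i` minors of `F`
(i.e. `Φ_i = d_i(F)/d_{i-1}(F)`), `Φ_i = 0` for `i > r`, and `F` is equivalent to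
the diagonal matrix with entries `Φ`. -/
def SmithEquivAt {l m : ℕ} (F : Matrix (Fin l) (Fin m) A) (r : ℕ) : Prop :=
  ∃ Φ : Fin l → A,
    (∀ i : Fin l, (i : ℕ) < r →
      IsGcdMinors F ((i : ℕ) + 1) (∏ j ∈ Finset.Iic i, Φ j)) ∧
    (∀ i : Fin l, r ≤ (i : ℕ) → Φ i = 0) ∧
    MatEquiv F (smithDiag Φ)

/-- `F` is equivalent to its Smith form. -/
def EquivToSmith {l m : ℕ} (F : Matrix (Fin l) (Fin m) A) : Prop :=
  ∃ r : ℕ, HasRank F r ∧ SmithEquivAt F r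

end Defs

/-! For `k ≤ r`, `J_k(F) = R` says that the determinantal ideal `I_k(F)`, generated by the `k × k`
minors, is principal. These ideals are invariant under equivalence, and those of a Smith form
equivalent to `F` are principal. Conversely, let `I_1(F), …, I_r(F)` be principal.

* As `I_r(F)` is generated by `d_r(F)`, the row space of `F` spans the image of an idempotent
  matrix, which is free by the Quillen–Suslin theorem. So `F` is equivalent to a square matrix of
  full rank bordered by zeros.
* Let `A` be a principal ideal domain and `F` an `r × r` matrix over `A[z_1, …, z_N]` whose
  determinantal ideals are generated by `H_1 ⋯ H_k` with `H_i ∈ A` for `k < r`, and whose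
  determinant is a multiple of `H_1 ⋯ H_r`. Row operations of determinant one make its `i`-th row
  divisible by `H_i`. Pivoting over `(A / p)[z_1, …, z_N]` gives such operations for the powers of
  each prime `p`, and the Chinese remainder theorem glues them because matrices of determinant one
  lift from `(A / p^e)[z_1, …, z_N]`.
* Let `A = K[z_n]` and `det F = g * h` with `g = z_1 - f`. As `∂g / ∂z_1 = 1`, differentiating the
  determinant shows that `g` divides no proper determinantal divisor. So the previous step writes
  `F` as `diag(H_1, …, H_r) * W` with `det W = g`, up to row operations.
* Modulo `g` the matrix `W` has a left kernel vector that can be completed to a unimodular matrix,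
  whence `W = Q * diag(1, …, 1, g) * P` with `Q` free of `z_1` and `P` unimodular. Substituting
  `z_1 = f` in `diag(H_1, …, H_r) * Q * diag(1, …, 1, g)` kills its last column only. The others
  have the determinantal divisors `H_1 ⋯ H_k`, so row operations bring them to the shape
  `diag(H_1, …, H_{r-1})`, and the ideals of `F` force the last column to be clearable. -/

/-! ### Determinantal ideals -/

section DetIdeal

variable {A : Type*} [CommRing A] {l m n o : Type*}

/-- The determinantal ideal of size `k`, generated by all `k × k` minors. The index functions are
arbitrary rather than injective: repeated rows or columns only add zeros. -/
def detIdeal (k : ℕ) (F : Matrix m n A) : Ideal A :=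
  Ideal.span {x | ∃ (r : Fin k → m) (c : Fin k → n), x = (F.submatrix r c).det}

lemma det_submatrix_mem_detIdeal {k : ℕ} (F : Matrix m n A) (r : Fin k → m) (c : Fin k → n) :
    (F.submatrix r c).det ∈ detIdeal k F :=
  Ideal.subset_span ⟨r, c, rfl⟩

lemma detIdeal_le_iff {k : ℕ} {F : Matrix m n A} {I : Ideal A} :
    detIdeal k F ≤ I ↔ ∀ (r : Fin k → m) (c : Fin k → n), (F.submatrix r c).det ∈ I := by
  refine ⟨fun h r c => h (det_submatrix_mem_detIdeal F r c), fun h => Ideal.span_le.2 ?_⟩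
  rintro _ ⟨r, c, rfl⟩
  exact h r c

lemma detIdeal_transpose_le (k : ℕ) (F : Matrix m n A) : detIdeal k Fᵀ ≤ detIdeal k F := by
  refine detIdeal_le_iff.2 fun r c => ?_
  rw [← transpose_submatrix, det_transpose]
  exact det_submatrix_mem_detIdeal F c r

lemma detIdeal_transpose (k : ℕ) (F : Matrix m n A) : detIdeal k Fᵀ = detIdeal k F :=
  (detIdeal_transpose_le k F).antisymm (detIdeal_transpose_le k Fᵀ)

lemma detIdeal_mul_le_right [Fintype m] (k : ℕ) (P : Matrix l m A) (Q : Matrix m n A) :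
    detIdeal k (P * Q) ≤ detIdeal k Q := by
  classical
  refine detIdeal_le_iff.2 fun r c => ?_
  have rows_eq : ((P * Q).submatrix r c).det =
      (detRowAlternating (R := A) (n := Fin k)).toMultilinearMap
        (fun i => ∑ x : m, P (r i) x • (fun j => Q x (c j))) := by
    change det _ = det _
    congr 1
    ext i j
    simp [Matrix.mul_apply, Finset.sum_apply]
  rw [rows_eq, MultilinearMap.map_sum]
  refine Ideal.sum_mem _ fun s _ => ?_
  rw [MultilinearMap.map_smul_univ]
  exact Ideal.mul_mem_left _ _ (det_submatrix_mem_detIdeal Q s c)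

lemma detIdeal_mul_le_left [Fintype m] (k : ℕ) (P : Matrix l m A) (Q : Matrix m n A) :
    detIdeal k (P * Q) ≤ detIdeal k P := by
  rw [← detIdeal_transpose, transpose_mul, ← detIdeal_transpose k P]
  exact detIdeal_mul_le_right _ _ _

lemma detIdeal_mul_mul_le [Fintype m] [Fintype n] (k : ℕ) (P : Matrix l m A) (F : Matrix m n A)
    (Q : Matrix n o A) : detIdeal k (P * F * Q) ≤ detIdeal k F :=
  (detIdeal_mul_le_left _ _ _).trans (detIdeal_mul_le_right _ _ _)

lemma detIdeal_isUnit_mul [Fintype m] [DecidableEq m] (k : ℕ) {U : Matrix m m A}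
    (hU : IsUnit U.det) (F : Matrix m n A) : detIdeal k (U * F) = detIdeal k F := by
  refine (detIdeal_mul_le_right _ _ _).antisymm ?_
  simpa [← Matrix.mul_assoc, nonsing_inv_mul _ hU] using detIdeal_mul_le_right k U⁻¹ (U * F)

lemma detIdeal_mul_isUnit [Fintype n] [DecidableEq n] (k : ℕ) (F : Matrix m n A)
    {V : Matrix n n A} (hV : IsUnit V.det) : detIdeal k (F * V) = detIdeal k F := by
  refine (detIdeal_mul_le_left _ _ _).antisymm ?_
  simpa [Matrix.mul_assoc, mul_nonsing_inv _ hV] using detIdeal_mul_le_left k (F * V) V⁻¹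

lemma detIdeal_map {B : Type*} [CommRing B] (k : ℕ) (F : Matrix m n A) (φ : A →+* B) :
    detIdeal k (F.map φ) = (detIdeal k F).map φ := by
  have det_map (r : Fin k → m) (c : Fin k → n) :
      ((F.map φ).submatrix r c).det = φ (F.submatrix r c).det := (RingHom.map_det φ _).symm
  refine le_antisymm (detIdeal_le_iff.2 fun r c => ?_) (Ideal.map_le_iff_le_comap.2 ?_)
  · exact det_map r c ▸ Ideal.mem_map_of_mem φ (det_submatrix_mem_detIdeal F r c)
  · refine detIdeal_le_iff.2 fun r c => Ideal.mem_comap.2 ?_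
    exact det_map r c ▸ det_submatrix_mem_detIdeal (F.map φ) r c

lemma detIdeal_zero (F : Matrix m n A) : detIdeal 0 F = ⊤ := by
  rw [Ideal.eq_top_iff_one]
  simpa using det_submatrix_mem_detIdeal F (Fin.elim0 : Fin 0 → m) Fin.elim0

lemma detIdeal_succ_le (k : ℕ) (F : Matrix m n A) : detIdeal (k + 1) F ≤ detIdeal k F := by
  refine detIdeal_le_iff.2 fun r c => ?_
  rw [det_succ_row_zero]
  refine Ideal.sum_mem _ fun s _ => Ideal.mul_mem_left _ _ ?_
  rw [submatrix_submatrix]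
  exact det_submatrix_mem_detIdeal F _ _

lemma detIdeal_antitone (F : Matrix m n A) : Antitone fun k => detIdeal k F :=
  antitone_nat_of_succ_le fun k => detIdeal_succ_le k F

lemma detIdeal_smul (k : ℕ) (a : A) (F : Matrix m n A) :
    detIdeal k (a • F) = Ideal.span {a ^ k} * detIdeal k F := by
  rw [detIdeal, detIdeal, Ideal.span_mul_span', Set.singleton_mul]
  congr 1
  ext x
  have det_smul_submatrix (r : Fin k → m) (c : Fin k → n) :
      ((a • F).submatrix r c).det = a ^ k * (F.submatrix r c).det := by
    rw [show (a • F).submatrix r c = a • F.submatrix r c from rfl, det_smul, Fintype.card_fin]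
  simp only [det_smul_submatrix, Set.mem_image, Set.mem_ofPred_eq]
  constructor
  · rintro ⟨r, c, rfl⟩
    exact ⟨_, ⟨r, c, rfl⟩, rfl⟩
  · rintro ⟨_, ⟨r, c, rfl⟩, rfl⟩
    exact ⟨r, c, rfl⟩

lemma detIdeal_submatrix_le (k : ℕ) (F : Matrix m n A) (r : l → m) (c : o → n) :
    detIdeal k (F.submatrix r c) ≤ detIdeal k F := by
  refine detIdeal_le_iff.2 fun r' c' => ?_
  rw [submatrix_submatrix]
  exact det_submatrix_mem_detIdeal F _ _

lemma detIdeal_eq_bot_of_card_rows_lt [Fintype m] {k : ℕ} (h : Fintype.card m < k)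
    (F : Matrix m n A) : detIdeal k F = ⊥ := by
  refine eq_bot_iff.2 (detIdeal_le_iff.2 fun r c => ?_)
  obtain ⟨i, j, hij, he⟩ := Fintype.exists_ne_map_eq_of_card_lt r (by simpa using h)
  exact Ideal.mem_bot.2 (det_zero_of_row_eq hij (by ext x; simp [he]))

lemma detIdeal_eq_bot_of_card_cols_lt [Fintype n] {k : ℕ} (h : Fintype.card n < k)
    (F : Matrix m n A) : detIdeal k F = ⊥ := by
  rw [← detIdeal_transpose]
  exact detIdeal_eq_bot_of_card_rows_lt h _

lemma detIdeal_square {r : ℕ} (F : Matrix (Fin r) (Fin r) A) :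
    detIdeal r F = Ideal.span {F.det} := by
  apply le_antisymm
  · refine detIdeal_le_iff.2 fun r c => Ideal.mem_span_singleton.2 ?_
    have factor : F.submatrix r c =
        (1 : Matrix _ _ A).submatrix r id * F * (1 : Matrix _ _ A).submatrix id c := by
      ext i j
      simp [Matrix.mul_apply, Matrix.one_apply]
    rw [factor, det_mul, det_mul]
    exact (dvd_mul_left _ _).mul_right _
  · rw [Ideal.span_singleton_le_iff_mem]
    simpa using det_submatrix_mem_detIdeal F id id

section Pivot

variable {a b : ℕ} (F : Matrix (Fin (a + 1)) (Fin (b + 1)) A)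

lemma det_submatrix_mem_detIdeal_succ (hcol : ∀ i : Fin a, F i.succ 0 = 0) {k : ℕ}
    (r : Fin k → Fin (a + 1)) (c : Fin k → Fin (b + 1)) (hr : ∀ i, r i ≠ 0) :
    (F.submatrix r c).det ∈ detIdeal k (F.submatrix Fin.succ Fin.succ) := by
  choose r' hr' using fun i => Fin.exists_succ_eq.2 (hr i)
  obtain rfl : Fin.succ ∘ r' = r := funext hr'
  by_cases hc : ∃ j, c j = 0
  · obtain ⟨j, hj⟩ := hc
    rw [det_eq_zero_of_column_eq_zero j fun i => by simp [hj, hcol]]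
    exact Ideal.zero_mem _
  · push Not at hc
    choose c' hc' using fun i => Fin.exists_succ_eq.2 (hc i)
    obtain rfl : Fin.succ ∘ c' = c := funext hc'
    rw [← submatrix_submatrix]
    exact det_submatrix_mem_detIdeal _ r' c'

lemma detIdeal_succ_of_pivot (h00 : F 0 0 = 1) (hrow : ∀ j : Fin b, F 0 j.succ = 0)
    (hcol : ∀ i : Fin a, F i.succ 0 = 0) (k : ℕ) :
    detIdeal (k + 1) F = detIdeal k (F.submatrix Fin.succ Fin.succ) := by
  apply le_antisymm
  · refine detIdeal_le_iff.2 fun r c => ?_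
    by_cases hr : ∃ i, r i = 0
    · obtain ⟨i, hi⟩ := hr
      by_cases hdup : ∃ i', i' ≠ i ∧ r i' = 0
      · obtain ⟨i', hne, hi'⟩ := hdup
        rw [det_zero_of_row_eq hne (by ext; simp [hi, hi'])]
        exact Ideal.zero_mem _
      · push Not at hdup
        rw [det_succ_row _ i]
        refine Ideal.sum_mem _ fun s _ => Ideal.mul_mem_left _ _ ?_
        rw [submatrix_submatrix]
        exact det_submatrix_mem_detIdeal_succ F hcol _ _ fun t => hdup _ (Fin.succAbove_ne i t)
    · push Not at hr
      exact detIdeal_succ_le _ _ (det_submatrix_mem_detIdeal_succ F hcol r c hr)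
  · refine detIdeal_le_iff.2 fun r c => ?_
    convert det_submatrix_mem_detIdeal F (Fin.cons 0 (Fin.succ ∘ r))
      (Fin.cons 0 (Fin.succ ∘ c)) using 1
    rw [det_succ_row_zero, Fin.sum_univ_succ]
    simp [h00, hrow, submatrix_submatrix]

end Pivot

lemma span_minorsSet {l m : ℕ} (F : Matrix (Fin l) (Fin m) A) (k : ℕ) :
    Ideal.span (minorsSet F k) = detIdeal k F := by
  apply le_antisymm
  · refine Ideal.span_mono ?_
    rintro x ⟨r, c, rfl⟩
    exact ⟨r, c, rfl⟩
  · refine detIdeal_le_iff.2 fun r c => ?_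
    by_cases hr : Function.Injective r
    · by_cases hc : Function.Injective c
      · exact Ideal.subset_span ⟨⟨r, hr⟩, ⟨c, hc⟩, rfl⟩
      · obtain ⟨i, j, he, hij⟩ := Function.not_injective_iff.1 hc
        rw [det_zero_of_column_eq hij (by simp [he])]
        exact Ideal.zero_mem _
    · obtain ⟨i, j, he, hij⟩ := Function.not_injective_iff.1 hr
      rw [det_zero_of_row_eq hij (by ext; simp [he])]
      exact Ideal.zero_mem _

lemma span_singleton_mul_reducedIdeal {l m k : ℕ} {F : Matrix (Fin l) (Fin m) A} {d : A}
    (hd : ∀ p ∈ minorsSet F k, d ∣ p) :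
    Ideal.span {d} * reducedIdeal F k d = detIdeal k F := by
  rw [reducedIdeal, Ideal.span_mul_span', Set.singleton_mul, ← span_minorsSet]
  congr 1
  ext p
  constructor
  · rintro ⟨v, hv, rfl⟩
    exact hv
  · intro hp
    obtain ⟨v, rfl⟩ := hd p hp
    exact ⟨v, hp, rfl⟩

lemma detIdeal_eq_span_of_reducedIdeal_eq_top {l m k : ℕ} {F : Matrix (Fin l) (Fin m) A} {d : A}
    (hd : ∀ p ∈ minorsSet F k, d ∣ p) (htop : reducedIdeal F k d = ⊤) :
    detIdeal k F = Ideal.span {d} := by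
  rw [← span_singleton_mul_reducedIdeal hd, htop, Ideal.mul_top]

lemma isGcdMinors_of_detIdeal_eq_span {l m k : ℕ} {F : Matrix (Fin l) (Fin m) A} {d : A}
    (hd : detIdeal k F = Ideal.span {d}) : IsGcdMinors F k d := by
  rw [← span_minorsSet] at hd
  refine ⟨fun p hp => Ideal.mem_span_singleton.1 (hd ▸ Ideal.subset_span hp), fun e he => ?_⟩
  have span_le : Ideal.span (minorsSet F k) ≤ Ideal.span {e} :=
    Ideal.span_le.2 fun p hp => Ideal.mem_span_singleton.2 (he p hp)
  exact Ideal.mem_span_singleton.1 (span_le (hd ▸ Ideal.mem_span_singleton_self d))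

lemma reducedIdeal_eq_top_of_detIdeal_eq_span [IsDomain A] {l m k : ℕ}
    {F : Matrix (Fin l) (Fin m) A} {d : A} (hd0 : d ≠ 0) (hd : detIdeal k F = Ideal.span {d}) :
    reducedIdeal F k d = ⊤ := by
  refine (Ideal.span_singleton_mul_right_inj hd0).1 ?_
  rw [span_singleton_mul_reducedIdeal (isGcdMinors_of_detIdeal_eq_span hd).1, hd, Ideal.mul_top]

end DetIdeal

/-! ### Nagata's change of variables -/

section Nagata

variable {A B : Type*} [CommRing A] [CommRing B] {n : ℕ}

/-- The substitution fixing `X 0` and sending `X (i + 1)` to `X (i + 1) + g i (X 0)`. -/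
noncomputable def shearHom (g : Fin n → Polynomial A) :
    MvPolynomial (Fin (n + 1)) A →ₐ[A] MvPolynomial (Fin (n + 1)) A :=
  aeval (Fin.cons (X 0) fun i => X i.succ + Polynomial.aeval (X 0) (g i))

lemma shearHom_comp (g h : Fin n → Polynomial A) :
    (shearHom g).comp (shearHom h) = shearHom (g + h) := by
  ext i : 1
  cases i using Fin.cases <;>
    simp [shearHom, ← Polynomial.aeval_algHom_apply, add_assoc]

lemma shearHom_zero : shearHom (0 : Fin n → Polynomial A) = AlgHom.id A _ := by
  ext i : 1
  cases i using Fin.cases <;> simp [shearHom]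

/-- The isomorphism `A[X₀, …, Xₙ] ≃ A[X₁, …, Xₙ][X]` of Nagata's proof of Noether normalization,
sending `X₀` to `X` and `Xᵢ` to `Xᵢ + X ^ (u ^ i)` for `0 < i`. For large `u` it takes a given
polynomial to one whose leading coefficient is constant. -/
noncomputable def nagataEquiv (u : ℕ) :
    MvPolynomial (Fin (n + 1)) A ≃ₐ[A] Polynomial (MvPolynomial (Fin n) A) :=
  let g : Fin n → Polynomial A := fun i => Polynomial.X ^ u ^ (i + 1 : ℕ)
  (AlgEquiv.ofAlgHom (shearHom g) (shearHom (-g))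
    (by rw [shearHom_comp, add_neg_cancel, shearHom_zero])
    (by rw [shearHom_comp, neg_add_cancel, shearHom_zero])).trans (finSuccEquiv A n)

lemma nagataEquiv_C (u : ℕ) (a : A) :
    nagataEquiv u (C a : MvPolynomial (Fin (n + 1)) A) = Polynomial.C (C a) :=
  (nagataEquiv u).commutes a

lemma nagataEquiv_X_zero (u : ℕ) :
    nagataEquiv u (X 0 : MvPolynomial (Fin (n + 1)) A) = Polynomial.X := by
  simp [nagataEquiv, shearHom, finSuccEquiv_X_zero]

lemma nagataEquiv_X_succ (u : ℕ) (i : Fin n) :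
    nagataEquiv u (X i.succ : MvPolynomial (Fin (n + 1)) A) =
      Polynomial.X ^ u ^ (i + 1 : ℕ) + Polynomial.C (X i) := by
  simp [nagataEquiv, shearHom, finSuccEquiv_X_zero, finSuccEquiv_X_succ, add_comm]

lemma map_nagataEquiv (φ : A →+* B) (u : ℕ) (p : MvPolynomial (Fin (n + 1)) A) :
    (nagataEquiv u p).map (MvPolynomial.map φ) = nagataEquiv u (MvPolynomial.map φ p) := by
  induction p using MvPolynomial.induction_on with
  | C a => simp [nagataEquiv_C]
  | add p q hp hq => simp [hp, hq]
  | mul_X p i hp =>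
    simp only [map_mul, Polynomial.map_mul, hp, MvPolynomial.map_X]
    cases i using Fin.cases <;> simp [nagataEquiv_X_zero, nagataEquiv_X_succ]

lemma monic_nagataEquiv_X {u : ℕ} (hu : 0 < u) (i : Fin (n + 1)) :
    (nagataEquiv u (X i : MvPolynomial (Fin (n + 1)) A)).Monic := by
  cases i using Fin.cases with
  | zero => exact nagataEquiv_X_zero (A := A) (n := n) u ▸ Polynomial.monic_X
  | succ i =>
    exact nagataEquiv_X_succ (A := A) u i ▸ Polynomial.monic_X_pow_add_C _ (pow_pos hu _).ne'

lemma natDegree_nagataEquiv_X [Nontrivial A] (u : ℕ) (i : Fin (n + 1)) :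
    (nagataEquiv u (X i : MvPolynomial (Fin (n + 1)) A)).natDegree = u ^ (i : ℕ) := by
  cases i using Fin.cases <;> simp [nagataEquiv_X_zero, nagataEquiv_X_succ]

lemma nagataEquiv_monomial (u : ℕ) (v : Fin (n + 1) →₀ ℕ) (a : A) :
    nagataEquiv u (monomial v a) = Polynomial.C (C a) * ∏ i, nagataEquiv u (X i) ^ v i := by
  rw [monomial_eq, Finsupp.prod_fintype _ _ fun _ => pow_zero _]
  simp only [map_mul, map_prod, map_pow, nagataEquiv_C]

lemma monic_prod_nagataEquiv_X_pow {u : ℕ} (hu : 0 < u) (v : Fin (n + 1) →₀ ℕ) :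
    (∏ i, nagataEquiv u (X i : MvPolynomial (Fin (n + 1)) A) ^ v i).Monic :=
  Polynomial.monic_prod_of_monic _ _ fun i _ => (monic_nagataEquiv_X hu i).pow _

lemma leadingCoeff_nagataEquiv_monomial {u : ℕ} (hu : 0 < u) (v : Fin (n + 1) →₀ ℕ) (a : A) :
    (nagataEquiv u (monomial v a)).leadingCoeff = C a := by
  rw [nagataEquiv_monomial, Polynomial.leadingCoeff_mul_monic (monic_prod_nagataEquiv_X_pow hu v),
    Polynomial.leadingCoeff_C]

lemma natDegree_nagataEquiv_monomial {u : ℕ} (hu : 0 < u) (v : Fin (n + 1) →₀ ℕ) {a : A}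
    (ha : a ≠ 0) : (nagataEquiv u (monomial v a)).natDegree = ∑ i, v i * u ^ (i : ℕ) := by
  have := nontrivial_of_ne a 0 ha
  rw [nagataEquiv_monomial, mul_comm,
    (monic_prod_nagataEquiv_X_pow hu v).natDegree_mul' (by simpa using ha),
    Polynomial.natDegree_C, add_zero,
    Polynomial.natDegree_prod_of_monic _ _ fun i _ => (monic_nagataEquiv_X hu i).pow _]
  simp only [(monic_nagataEquiv_X hu _).natDegree_pow, natDegree_nagataEquiv_X]

lemma injOn_sum_mul_pow (m u : ℕ) :
    Set.InjOn (fun v : Fin m → ℕ => ∑ i, v i * u ^ (i : ℕ)) {v | ∀ i, v i < u} := by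
  intro v hv w hw h
  have digits_eq : finFunctionFinEquiv (fun i => (⟨v i, hv i⟩ : Fin u)) =
      finFunctionFinEquiv fun i => ⟨w i, hw i⟩ := Fin.ext (by simpa using h)
  funext i
  simpa using congrFun (finFunctionFinEquiv.injective digits_eq) i

lemma exists_leadingCoeff_sum_eq {ι : Type*} {s : Finset ι} (hs : s.Nonempty)
    {p : ι → Polynomial A} (hp : ∀ i ∈ s, p i ≠ 0)
    (hdeg : Set.InjOn (fun i => (p i).natDegree) s) :
    ∃ i ∈ s, (∑ j ∈ s, p j).leadingCoeff = (p i).leadingCoeff := by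
  classical
  obtain ⟨i, hi, hmax⟩ := s.exists_max_image (fun i => (p i).natDegree) hs
  refine ⟨i, hi, ?_⟩
  rw [← Finset.sum_erase_add _ _ hi]
  refine Polynomial.leadingCoeff_add_of_degree_lt ((Polynomial.degree_sum_le _ _).trans_lt ?_)
  refine (Finset.sup_lt_iff (bot_lt_iff_ne_bot.2 (mt Polynomial.degree_eq_bot.1 (hp i hi)))).2 ?_
  intro j hj
  obtain ⟨hne, hjs⟩ := Finset.mem_erase.1 hj
  exact Polynomial.degree_lt_degree ((hmax j hjs).lt_of_ne fun h => hne (hdeg hjs hi h))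

lemma exists_leadingCoeff_nagataEquiv_eq_C {f : MvPolynomial (Fin (n + 1)) A} (hf : f ≠ 0) :
    ∃ (u : ℕ) (a : A), a ≠ 0 ∧ (nagataEquiv u f).leadingCoeff = C a := by
  set u := f.totalDegree + 1
  have hu : 0 < u := Nat.succ_pos _
  have exponent_lt : ∀ v ∈ f.support, ∀ i, v i < u := fun v hv i =>
    Nat.lt_succ_of_le ((monomial_le_degreeOf i hv).trans (degreeOf_le_totalDegree f i))
  have hcoeff : ∀ v ∈ f.support, coeff v f ≠ 0 := fun v => mem_support_iff.1
  obtain ⟨v, hv, hlead⟩ := exists_leadingCoeff_sum_eq (s := f.support)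
    (p := fun v => nagataEquiv u (monomial v (coeff v f))) (support_nonempty.2 hf)
    (fun v hv => by simpa using hcoeff v hv) fun v hv w hw h => by
      dsimp only at h
      rw [natDegree_nagataEquiv_monomial hu _ (hcoeff v hv),
        natDegree_nagataEquiv_monomial hu _ (hcoeff w hw)] at h
      exact DFunLike.coe_injective
        (injOn_sum_mul_pow _ u (exponent_lt v hv) (exponent_lt w hw) h)
  refine ⟨u, coeff v f, hcoeff v hv, ?_⟩
  rw [← leadingCoeff_nagataEquiv_monomial hu v, ← hlead, ← map_sum, support_sum_monomial_coeff]

lemma exists_monic_nagataEquiv {k : Type*} [Field k] {f : MvPolynomial (Fin (n + 1)) k}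
    (hf : f ≠ 0) : ∃ (u : ℕ) (c : k), c ≠ 0 ∧ (nagataEquiv u (C c * f)).Monic := by
  obtain ⟨u, a, ha, hlead⟩ := exists_leadingCoeff_nagataEquiv_eq_C hf
  refine ⟨u, a⁻¹, inv_ne_zero ha, ?_⟩
  rw [map_mul, nagataEquiv_C, Polynomial.Monic, Polynomial.leadingCoeff_mul, hlead,
    Polynomial.leadingCoeff_C, ← C_mul, inv_mul_cancel₀ ha, C_1]

end Nagata

/-! ### Horrocks' theorem for idempotent matrices -/

section ImageFrame

variable {R : Type*} [CommRing R] {N S : Type*} [Fintype N]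

/-- The matrices `ι : R^S → R^N` and `κ : R^N → R^S` are, up to the factor `g`, inverse isomorphisms
between the free module `R^S` and the image of `X` (which is idempotent in all applications). -/
structure IsImageFrame [Fintype S] [DecidableEq S] (X : Matrix N N R) (g : R) (ι : Matrix N S R)
    (κ : Matrix S N R) : Prop where
  mul_eq_smul_one : κ * ι = g • (1 : Matrix S S R)
  mul_eq_smul : ι * κ = g • X

/-- The image of `X` becomes free of rank `s` once `g` is inverted. -/
def FreeImageOfRank (s : ℕ) (X : Matrix N N R) (g : R) : Prop :=
  ∃ (ι : Matrix N (Fin s) R) (κ : Matrix (Fin s) N R), IsImageFrame X g ι κ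

/-- The image of `X` becomes free once `g` is inverted. -/
def FreeImage (X : Matrix N N R) (g : R) : Prop :=
  ∃ s, FreeImageOfRank s X g

/-- Finitely generated projective modules over `R` are free, stated for images of idempotents. -/
def ProjectivesFree (R : Type*) [CommRing R] : Prop :=
  ∀ (N : ℕ) (X : Matrix (Fin N) (Fin N) R), X * X = X → FreeImage X 1

section Frame

variable [Fintype S] [DecidableEq S] {X : Matrix N N R} {g : R} {ι : Matrix N S R}
  {κ : Matrix S N R}

lemma IsImageFrame.smul_left (h : IsImageFrame X g ι κ) (a : R) :
    IsImageFrame X (a * g) (a • ι) κ :=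
  ⟨by rw [Matrix.mul_smul, h.mul_eq_smul_one, smul_smul],
    by rw [Matrix.smul_mul, h.mul_eq_smul, smul_smul]⟩

lemma IsImageFrame.of_smul_left [IsDomain R] {a : R} (ha : a ≠ 0)
    (h : IsImageFrame X (a * g) (a • ι) κ) : IsImageFrame X g ι κ := by
  obtain ⟨h₁, h₂⟩ := h
  rw [Matrix.mul_smul, SemigroupAction.mul_smul] at h₁
  rw [Matrix.smul_mul, SemigroupAction.mul_smul] at h₂
  exact ⟨smul_right_injective _ ha h₁, smul_right_injective _ ha h₂⟩

lemma IsImageFrame.of_smul_right [IsDomain R] {a : R} (ha : a ≠ 0)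
    (h : IsImageFrame X (a * g) ι (a • κ)) : IsImageFrame X g ι κ := by
  obtain ⟨h₁, h₂⟩ := h
  rw [Matrix.smul_mul, SemigroupAction.mul_smul] at h₁
  rw [Matrix.mul_smul, SemigroupAction.mul_smul] at h₂
  exact ⟨smul_right_injective _ ha h₁, smul_right_injective _ ha h₂⟩

lemma IsImageFrame.mul_image [IsDomain R] (hg : g ≠ 0) (h : IsImageFrame X g ι κ) :
    κ * X = κ := by
  refine smul_right_injective _ hg ?_
  simp only
  rw [← Matrix.mul_smul, ← h.mul_eq_smul, ← Matrix.mul_assoc, h.mul_eq_smul_one, Matrix.smul_mul,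
    Matrix.one_mul]

lemma IsImageFrame.image_mul [IsDomain R] (hg : g ≠ 0) (h : IsImageFrame X g ι κ) :
    X * ι = ι := by
  refine smul_right_injective _ hg ?_
  simp only
  rw [← Matrix.smul_mul, ← h.mul_eq_smul, Matrix.mul_assoc, h.mul_eq_smul_one, Matrix.mul_smul,
    Matrix.mul_one]

lemma IsImageFrame.map {B : Type*} [CommRing B] (φ : R →+* B) (h : IsImageFrame X g ι κ) :
    IsImageFrame (X.map φ) (φ g) (ι.map φ) (κ.map φ) := by
  constructor
  · rw [← Matrix.map_mul, h.mul_eq_smul_one, Matrix.map_smul' _ _ _ (map_mul φ),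
      Matrix.map_one φ (map_zero φ) (map_one φ)]
  · rw [← Matrix.map_mul, h.mul_eq_smul, Matrix.map_smul' _ _ _ (map_mul φ)]

lemma IsImageFrame.conj [DecidableEq N] {Y E E' : Matrix N N R} (h : IsImageFrame Y g ι κ)
    (hEE' : E * E' = 1) (hE'E : E' * E = 1) (hXY : E * Y = X * E) :
    IsImageFrame X g (E * ι) (κ * E') := by
  constructor
  · rw [Matrix.mul_assoc, ← Matrix.mul_assoc E', hE'E, Matrix.one_mul, h.mul_eq_smul_one]
  · rw [Matrix.mul_assoc, ← Matrix.mul_assoc ι, h.mul_eq_smul, Matrix.smul_mul, Matrix.mul_smul,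
      ← Matrix.mul_assoc, hXY, Matrix.mul_assoc, hEE', Matrix.mul_one]

lemma IsImageFrame.freeImage (h : IsImageFrame X g ι κ) : FreeImage X g := by
  let e := (Fintype.equivFin S).symm
  refine ⟨Fintype.card S, ι.submatrix id e, κ.submatrix e id, ?_, ?_⟩
  · rw [← submatrix_mul _ _ _ _ _ Function.bijective_id, h.mul_eq_smul_one]
    ext i j
    simp [Matrix.one_apply]
  · rw [submatrix_mul_equiv, h.mul_eq_smul]
    rfl

end Frame

variable {X : Matrix N N R}

lemma FreeImage.mul_left {g : R} (a : R) : FreeImage X g → FreeImage X (a * g) := by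
  rintro ⟨s, ι, κ, h⟩
  exact ⟨s, _, _, h.smul_left a⟩

lemma FreeImage.map {B : Type*} [CommRing B] (φ : R →+* B) {g : R} :
    FreeImage X g → FreeImage (X.map φ) (φ g) := by
  rintro ⟨s, ι, κ, h⟩
  exact ⟨s, _, _, h.map φ⟩

lemma FreeImage.conj [DecidableEq N] {Y E E' : Matrix N N R} {g : R} (hEE' : E * E' = 1)
    (hE'E : E' * E = 1) (hXY : E * Y = X * E) : FreeImage Y g → FreeImage X g := by
  rintro ⟨s, ι, κ, h⟩
  exact ⟨s, _, _, h.conj hEE' hE'E hXY⟩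

lemma FreeImage.of_rank_zero [IsDomain R] {g : R} (hg : g ≠ 0) :
    FreeImageOfRank 0 X g → FreeImage X 1 := by
  rintro ⟨ι, κ, h⟩
  have image_eq_zero : X = 0 := by
    refine smul_right_injective _ hg ?_
    simp only
    rw [← h.mul_eq_smul, smul_zero]
    ext
    simp [Matrix.mul_apply]
  exact ⟨0, ι, κ, Subsingleton.elim _ _, by ext; simp [Matrix.mul_apply, image_eq_zero]⟩

lemma exists_eq_smul_of_forall_dvd {m n : Type*} {a : R} {M : Matrix m n R}
    (h : ∀ i j, a ∣ M i j) : ∃ M', M = a • M' := by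
  choose M' hM' using h
  exact ⟨M', by ext i j; exact hM' i j⟩

lemma FreeImageOfRank.one_of_prime_mul [IsDomain R] {p a : R} (hp : Prime p) :
    FreeImageOfRank 1 X (p * a) → FreeImageOfRank 1 X a := by
  rintro ⟨ι, κ, h⟩
  have dvd_mul : ∀ i j, p ∣ ι i 0 * κ 0 j := fun i j => by
    have entry := congrFun (congrFun h.mul_eq_smul i) j
    simp only [Matrix.mul_apply, Finset.univ_unique, Finset.sum_singleton, Fin.default_eq_zero,
      Matrix.smul_apply, smul_eq_mul, mul_assoc] at entry
    exact ⟨_, entry⟩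
  by_cases hι : ∀ i, p ∣ ι i 0
  · obtain ⟨ι', rfl⟩ := exists_eq_smul_of_forall_dvd (a := p) (M := ι) fun i j =>
      Subsingleton.elim 0 j ▸ hι i
    exact ⟨ι', κ, h.of_smul_left hp.ne_zero⟩
  · push Not at hι
    obtain ⟨i, hi⟩ := hι
    obtain ⟨κ', rfl⟩ := exists_eq_smul_of_forall_dvd (a := p) (M := κ) fun j' j =>
      Subsingleton.elim 0 j' ▸ (hp.dvd_or_dvd (dvd_mul i j)).resolve_left hi
    exact ⟨ι, κ', h.of_smul_right hp.ne_zero⟩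

lemma FreeImageOfRank.one_of_ne_zero [IsDomain R] [UniqueFactorizationMonoid R] {f : R}
    (hf : f ≠ 0) : FreeImageOfRank 1 X f → FreeImageOfRank 1 X 1 := by
  induction f using UniqueFactorizationMonoid.induction_on_prime with
  | h₁ => exact absurd rfl hf
  | h₂ f hu =>
    rintro ⟨ι, κ, h⟩
    obtain ⟨u, rfl⟩ := hu
    exact ⟨_, κ, by simpa using h.smul_left ↑u⁻¹⟩
  | h₃ a p ha hp ih => exact fun h => ih ha (h.one_of_prime_mul hp)

section Split

variable {q φ : N → R}

/-! If `X q = q`, `φ X = φ` and `φ q = 1`, then `q φ` is a rank one idempotent and the image of `X`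
is the direct sum of the line spanned by `q` and the image of `X - q φ`. -/

lemma sub_vecMulVec_mulVec (hq : X *ᵥ q = q) (hφq : φ ⬝ᵥ q = 1) :
    (X - vecMulVec q φ) *ᵥ q = 0 := by
  rw [Matrix.sub_mulVec, hq, vecMulVec_mulVec, hφq]
  simp

lemma vecMul_sub_vecMulVec (hφ : φ ᵥ* X = φ) (hφq : φ ⬝ᵥ q = 1) :
    φ ᵥ* (X - vecMulVec q φ) = 0 := by
  rw [Matrix.vecMul_sub, hφ, vecMul_vecMulVec, hφq, one_smul, sub_self]

lemma isIdempotent_sub_vecMulVec (hX : X * X = X) (hq : X *ᵥ q = q) (hφ : φ ᵥ* X = φ)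
    (hφq : φ ⬝ᵥ q = 1) : (X - vecMulVec q φ) * (X - vecMulVec q φ) = X - vecMulVec q φ := by
  rw [Matrix.mul_sub, mul_vecMulVec, sub_vecMulVec_mulVec hq hφq, Matrix.sub_mul, hX,
    vecMulVec_mul, hφ]
  simp

lemma FreeImage.of_sub_vecMulVec [IsDomain R] (hq : X *ᵥ q = q)
    (hφ : φ ᵥ* X = φ) (hφq : φ ⬝ᵥ q = 1) :
    FreeImage (X - vecMulVec q φ) 1 → FreeImage X 1 := by
  rintro ⟨s, ι, κ, h⟩
  have hκ : κ * (X - vecMulVec q φ) = κ := h.mul_image one_ne_zero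
  have hι : (X - vecMulVec q φ) * ι = ι := h.image_mul one_ne_zero
  have φ_mul_ι : replicateRow Unit φ * ι = 0 := by
    rw [← hι, ← Matrix.mul_assoc, ← replicateRow_vecMul, vecMul_sub_vecMulVec hφ hφq,
      replicateRow_zero, Matrix.zero_mul]
  have κ_mul_q : κ * replicateCol Unit q = 0 := by
    rw [← hκ, Matrix.mul_assoc, ← replicateCol_mulVec, sub_vecMulVec_mulVec hq hφq,
      replicateCol_zero, Matrix.mul_zero]
  refine IsImageFrame.freeImage (ι := fromCols (replicateCol Unit q) ι)
    (κ := fromRows (replicateRow Unit φ) κ) ⟨?_, ?_⟩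
  · have φ_mul_q : replicateRow Unit φ * replicateCol Unit q = 1 := by
      ext
      simp [replicateRow_mul_replicateCol_apply, hφq]
    rw [fromRows_mul_fromCols, φ_mul_q, h.mul_eq_smul_one, φ_mul_ι, κ_mul_q]
    simp
  · rw [fromCols_mul_fromRows, h.mul_eq_smul, ← vecMulVec_eq]
    simp

lemma submatrix_succ_mul_submatrix_succ {m n : Type*} {s : ℕ} (P : Matrix m (Fin (s + 1)) R)
    {Q : Matrix (Fin (s + 1)) n R} (hQ : Q 0 = 0) :
    P.submatrix id Fin.succ * Q.submatrix Fin.succ id = P * Q := by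
  ext i j
  simp [Matrix.mul_apply, Fin.sum_univ_succ, hQ]

lemma IsImageFrame.sub_vecMulVec [IsDomain R] {s : ℕ} {f : R} (hf : f ≠ 0)
    {ι : Matrix N (Fin (s + 1)) R} {κ : Matrix (Fin (s + 1)) N R} (h : IsImageFrame X f ι κ)
    (hX : X * X = X) (hq : X *ᵥ q = q) (hφ : φ ᵥ* X = φ) (hφq : φ ⬝ᵥ q = 1) :
    FreeImageOfRank s (X - vecMulVec q φ) (f * (κ 0 ⬝ᵥ q)) := by
  set g := κ 0 ⬝ᵥ q
  set X' := X - vecMulVec q φ with hX'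
  set T := g • κ - vecMulVec (κ *ᵥ q) (κ 0) with hT
  have hκ : κ * X = κ := h.mul_image hf
  have hκ0 : κ 0 ᵥ* X = κ 0 := congrFun hκ 0
  have T_mul_X' : T * X' = T := by
    rw [hX', Matrix.mul_sub, mul_vecMulVec, hT, Matrix.sub_mul, Matrix.smul_mul, hκ, vecMulVec_mul,
      hκ0, Matrix.sub_mulVec, Matrix.smul_mulVec, vecMulVec_mulVec]
    simp [g]
  have T_zero : T 0 = 0 := by
    ext j
    simp [hT, vecMulVec_apply, g, mulVec]
  have T_mul_ι (i j) : (T * ι) i (Fin.succ j) = (f * g) • (1 : Matrix _ _ R) i j.succ := by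
    have hκ0ι : (κ 0 ᵥ* ι) j.succ = 0 := by
      change (κ * ι) 0 j.succ = 0
      simp [h.mul_eq_smul_one, (Fin.succ_ne_zero j).symm]
    rw [hT, Matrix.sub_mul, Matrix.smul_mul, h.mul_eq_smul_one, vecMulVec_mul]
    rw [Matrix.sub_apply, vecMulVec_apply, hκ0ι, mul_zero, sub_zero, smul_smul, Matrix.smul_apply,
      mul_comm]
  have X'_mul_ι_mul_κ : X' * ι * κ = f • X' := by
    rw [Matrix.mul_assoc, h.mul_eq_smul, Matrix.mul_smul, hX', Matrix.sub_mul, hX, vecMulVec_mul,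
      hφ]
  refine ⟨(X' * ι).submatrix id Fin.succ, T.submatrix Fin.succ id, ?_, ?_⟩
  · rw [← submatrix_mul _ _ _ _ _ Function.bijective_id, ← Matrix.mul_assoc, T_mul_X']
    ext i j
    rw [submatrix_apply, T_mul_ι]
    simp [Matrix.one_apply]
  · have X'_mul_q : (X' * ι) *ᵥ (κ *ᵥ q) = 0 := by
      rw [mulVec_mulVec, X'_mul_ι_mul_κ, smul_mulVec, sub_vecMulVec_mulVec hq hφq, smul_zero]
    rw [submatrix_succ_mul_submatrix_succ _ T_zero, hT, Matrix.mul_sub, Matrix.mul_smul,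
      mul_vecMulVec, X'_mul_q, X'_mul_ι_mul_κ]
    simp [smul_smul, mul_comm]

end Split

end ImageFrame

section Horrocks

variable {N : Type*} [Fintype N]

lemma exists_eq_smul_and_dotProduct_eq_one {D : Type*} [CommRing D] [IsDomain D]
    [IsPrincipalIdealRing D] {v : N → D} (hv : v ≠ 0) :
    ∃ (d : D) (w y : N → D), d ≠ 0 ∧ v = d • w ∧ w ⬝ᵥ y = 1 := by
  obtain ⟨d, hd⟩ := (IsPrincipalIdealRing.principal (Ideal.span (Set.range v))).principal
  rw [Ideal.submodule_span_eq] at hd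
  have d_dvd (i) : d ∣ v i := Ideal.mem_span_singleton.1 (hd ▸ Ideal.subset_span ⟨i, rfl⟩)
  choose w hw using d_dvd
  obtain rfl : v = d • w := funext hw
  have hd0 : d ≠ 0 := by
    rintro rfl
    exact hv (zero_smul _ w)
  obtain ⟨y, hy⟩ := Ideal.mem_span_range_iff_exists_fun.1 (hd ▸ Ideal.mem_span_singleton_self d)
  refine ⟨d, w, y, hd0, rfl, mul_left_cancel₀ hd0 ?_⟩
  rw [← smul_eq_mul, ← smul_dotProduct, dotProduct_comm, mul_one]
  exact hy

lemma exists_vecMul_eq_self_and_dotProduct_eq_one {D : Type*} [CommRing D] [IsDomain D]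
    [IsPrincipalIdealRing D] {X : Matrix N N D} {k v : N → D} (hk : k ≠ 0) (hkX : k ᵥ* X = k)
    (hkv : k ⬝ᵥ v = 0) : ∃ w y : N → D, w ᵥ* X = w ∧ w ⬝ᵥ v = 0 ∧ w ⬝ᵥ y = 1 := by
  obtain ⟨d, w, y, hd, rfl, hwy⟩ := exists_eq_smul_and_dotProduct_eq_one hk
  rw [smul_vecMul] at hkX
  rw [smul_dotProduct] at hkv
  exact ⟨w, y, smul_right_injective _ hd hkX, (smul_eq_zero.1 hkv).resolve_left hd, hwy⟩

lemma exists_C_mem_of_monic_mem {B : Type*} [CommRing B] {J : Ideal (Polynomial B)}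
    {g : Polynomial B} (hg : g.Monic) (hgJ : g ∈ J) {I : Ideal B}
    (hJI : J ⊔ I.map Polynomial.C = ⊤) : ∃ c : B, c - 1 ∈ I ∧ Polynomial.C c ∈ J := by
  have : Module.Finite B (Polynomial B ⧸ Ideal.span {g}) := (AdjoinRoot.powerBasis' hg).finite
  have hle : Ideal.span {g} ≤ J := (Ideal.span_singleton_le_iff_mem _).2 hgJ
  have : Module.Finite B (Polynomial B ⧸ J) :=
    Module.Finite.of_surjective (Ideal.Quotient.factorₐ B hle).toLinearMap
      (Ideal.Quotient.factor_surjective hle)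
  have map_eq_top : I.map (algebraMap B (Polynomial B ⧸ J)) = ⊤ := by
    have := congrArg (Ideal.map (Ideal.Quotient.mk J)) hJI
    rwa [Ideal.map_sup, Ideal.map_quotient_self, bot_sup_eq, Ideal.map_map, Ideal.map_top] at this
  have top_le : (⊤ : Submodule B (Polynomial B ⧸ J)) ≤ I • ⊤ := by
    rw [Ideal.smul_top_eq_map, map_eq_top]
    exact fun x _ => trivial
  obtain ⟨c, hc, hc0⟩ := Submodule.exists_sub_one_mem_and_smul_eq_zero_of_fg_of_le_smul I ⊤
    Module.Finite.fg_top top_le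
  refine ⟨c, hc, Ideal.Quotient.eq_zero_iff_mem.1 ?_⟩
  have hc1 : Ideal.Quotient.mk J (c • 1) = 0 := hc0 1 trivial
  rwa [Polynomial.smul_eq_C_mul, mul_one] at hc1

variable {B : Type*} [CommRing B]

lemma monic_X_pow_mul_add {f : Polynomial B} (hf : f.Monic) (p : Polynomial B) :
    (Polynomial.X ^ (p.natDegree + 1) * f + p).Monic := by
  nontriviality B
  refine ((Polynomial.monic_X_pow _).mul hf).add_of_left (Polynomial.degree_lt_degree ?_)
  rw [(Polynomial.monic_X_pow _).natDegree_mul hf, Polynomial.natDegree_X_pow]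
  omega

variable [IsLocalRing B]

local notation "π" => Polynomial.mapRingHom (IsLocalRing.residue B)

lemma exists_dotProduct_eq_one_of_residue {q : N → Polynomial B} {g : Polynomial B}
    (hg : g.Monic) (hgq : g ∈ Ideal.span (Set.range q))
    {w : N → Polynomial (IsLocalRing.ResidueField B)} (hwq : w ⬝ᵥ (π ∘ q) = 1) :
    ∃ φ, φ ⬝ᵥ q = 1 := by
  have hπ : Function.Surjective π := Polynomial.map_surjective _ IsLocalRing.residue_surjective
  have span_map : (Ideal.span (Set.range q)).map π = ⊤ := by
    rw [Ideal.map_span, ← Set.range_comp, Ideal.eq_top_iff_one]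
    exact Ideal.mem_span_range_iff_exists_fun.2 ⟨w, hwq⟩
  have span_sup : Ideal.span (Set.range q) ⊔ (IsLocalRing.maximalIdeal B).map Polynomial.C = ⊤ := by
    rw [← IsLocalRing.ker_residue, ← Polynomial.ker_mapRingHom,
      ← Ideal.comap_map_of_surjective' _ hπ, span_map, Ideal.comap_top]
  obtain ⟨c, hc, hcq⟩ := exists_C_mem_of_monic_mem hg hgq span_sup
  have c_isUnit : IsUnit c := by
    rw [← IsLocalRing.ker_residue, RingHom.mem_ker, map_sub, map_one, sub_eq_zero] at hc
    exact (IsLocalRing.residue_ne_zero_iff_isUnit c).1 (hc ▸ one_ne_zero)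
  have span_eq_top := Ideal.eq_top_of_isUnit_mem _ hcq (c_isUnit.map Polynomial.C)
  exact Ideal.mem_span_range_iff_exists_fun.1 (span_eq_top ▸ Submodule.mem_top)

/- The first column `v` of `ι` satisfies `κ₀ v = f`, while the second row of `κ` kills `v` without
vanishing modulo the maximal ideal. So a vector `y` of the image can be made unimodular modulo the
maximal ideal by pairing with that row only, and adding a high power of `X` times `v` to `y` makes
`κ₀ q` monic. -/
lemma IsImageFrame.exists_unimodular [IsDomain B] {s : ℕ} {X : Matrix N N (Polynomial B)}
    {f : Polynomial B} (hf : f.Monic) {ι : Matrix N (Fin (s + 2)) (Polynomial B)}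
    {κ : Matrix (Fin (s + 2)) N (Polynomial B)} (hX : X * X = X) (h : IsImageFrame X f ι κ) :
    ∃ q φ : N → Polynomial B, X *ᵥ q = q ∧ φ ⬝ᵥ q = 1 ∧ (κ 0 ⬝ᵥ q).Monic := by
  have hκX : κ 1 ᵥ* X = κ 1 := congrFun (h.mul_image hf.ne_zero) 1
  set v : N → Polynomial B := fun i => ι i 0
  have hXv : X *ᵥ v = v := by
    ext1 i
    exact congrFun (congrFun (h.image_mul hf.ne_zero) i) 0
  have κ_dot (i j) : κ i ⬝ᵥ (fun x => ι x j) = if i = j then f else 0 := by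
    change (κ * ι) i j = _
    simp [h.mul_eq_smul_one, Matrix.one_apply]
  have residue_κ_ne_zero : π ∘ κ 1 ≠ 0 := by
    intro h0
    refine (hf.map (IsLocalRing.residue B)).ne_zero ?_
    have := RingHom.map_dotProduct π (κ 1) fun x => ι x 1
    rwa [h0, zero_dotProduct, κ_dot, if_pos rfl] at this
  obtain ⟨w, y, hwX, hwv, hwy⟩ := exists_vecMul_eq_self_and_dotProduct_eq_one
    (X := X.map π) (v := π ∘ v) residue_κ_ne_zero
    (by ext1 i; rw [← RingHom.map_vecMul, hκX, Function.comp_apply])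
    (by rw [← RingHom.map_dotProduct, κ_dot, if_neg one_ne_zero, map_zero])
  have hπ : Function.Surjective π := Polynomial.map_surjective _ IsLocalRing.residue_surjective
  obtain ⟨y, rfl⟩ := hπ.comp_left y
  set M := (κ 0 ⬝ᵥ X *ᵥ y).natDegree + 1
  set q := (Polynomial.X ^ M : Polynomial B) • v + X *ᵥ y
  have hκq : (κ 0 ⬝ᵥ q).Monic := by
    rw [dotProduct_add, dotProduct_smul, κ_dot, if_pos rfl, smul_eq_mul]
    exact monic_X_pow_mul_add hf _
  have hwq : w ⬝ᵥ (π ∘ q) = 1 := by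
    have residue_q : π ∘ q = π (Polynomial.X ^ M) • (π ∘ v) + X.map π *ᵥ (π ∘ y) := by
      ext1 i
      simp only [q, Function.comp_apply, Pi.add_apply, Pi.smul_apply, smul_eq_mul, map_add, map_mul,
        RingHom.map_mulVec]
    rw [residue_q, dotProduct_add, dotProduct_smul, hwv, smul_zero, zero_add, dotProduct_mulVec,
      hwX, hwy]
  obtain ⟨φ, hφ⟩ := exists_dotProduct_eq_one_of_residue hκq
    (Ideal.sum_mem _ fun i _ => Ideal.mul_mem_left _ _ (Ideal.subset_span ⟨i, rfl⟩)) hwq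
  exact ⟨q, φ, by rw [mulVec_add, mulVec_smul, hXv, mulVec_mulVec, hX], hφ, hκq⟩

theorem FreeImageOfRank.freeImage_of_monic [IsDomain B]
    [UniqueFactorizationMonoid (Polynomial B)] (s : ℕ) {X : Matrix N N (Polynomial B)}
    {f : Polynomial B} (hf : f.Monic) (hX : X * X = X) :
    FreeImageOfRank s X f → FreeImage X 1 := by
  induction s generalizing X f with
  | zero => exact FreeImage.of_rank_zero hf.ne_zero
  | succ s ih =>
    intro h
    rcases s with _ | s
    · exact ⟨1, h.one_of_ne_zero hf.ne_zero⟩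
    obtain ⟨ι, κ, h⟩ := h
    obtain ⟨q, φ, hq, hφ, hκq⟩ := h.exists_unimodular hf hX
    have hφX : (φ ᵥ* X) ᵥ* X = φ ᵥ* X := by rw [vecMul_vecMul, hX]
    have hφXq : (φ ᵥ* X) ⬝ᵥ q = 1 := by rw [← dotProduct_mulVec, hq, hφ]
    refine FreeImage.of_sub_vecMulVec hq hφX hφXq ?_
    exact ih (hf.mul hκq) (isIdempotent_sub_vecMulVec hX hq hφX hφXq)
      (h.sub_vecMulVec hf.ne_zero hX hq hφX hφXq)

end Horrocks

/-! ### Quillen patching and the Quillen–Suslin theorem -/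

section QuillenSuslin

lemma exists_map_eq_smul_of_isLocalization {A A' : Type*} [CommRing A] [CommRing A'] [Algebra A A']
    (S : Submonoid A) [IsLocalization S A'] {m n : Type*} [Finite m] [Finite n]
    (P : Matrix m n A') :
    ∃ c ∈ S, ∃ Q : Matrix m n A, Q.map (algebraMap A A') = algebraMap A A' c • P := by
  obtain ⟨b, hb⟩ := IsLocalization.exist_integer_multiples_of_finite S
    (fun x : m × n => P x.1 x.2)
  choose Q hQ using hb
  refine ⟨b, b.2, Matrix.of fun i j => Q (i, j), ?_⟩
  ext i j
  simp [hQ, Algebra.smul_def]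

lemma map_smul_one {A B N : Type*} [CommRing A] [CommRing B] [DecidableEq N] (χ : A →+* B) (g : A) :
    (g • (1 : Matrix N N A)).map χ = χ g • 1 := by
  rw [Matrix.map_smul' _ _ _ (map_mul _), Matrix.map_one _ (map_zero _) (map_one _)]

lemma ProjectivesFree.of_ringEquiv {A B : Type*} [CommRing A] [CommRing B] (e : A ≃+* B)
    (h : ProjectivesFree A) : ProjectivesFree B := by
  intro n X hX
  have h1 := (h n (X.map e.symm) (by rw [← Matrix.map_mul, hX])).map (e : A →+* B)
  rw [map_one] at h1
  convert h1
  ext1 i j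
  simp

variable {N : Type*}

lemma exists_map_mul_map_eq_smul {A B : Type*} [CommRing A] [CommRing B] [DecidableEq N]
    {T : Type*} [Fintype T] {P : Matrix N T A} {Q : Matrix T N A} {g : A} (hPQ : P * Q = g • 1)
    (φ : A →+* B) {ψ : A →+* B} (hφψ : ∀ p, ψ g ∣ φ p - ψ p) :
    ∃ E, P.map φ * Q.map ψ = ψ g • E := by
  obtain ⟨Y, hY⟩ := exists_eq_smul_of_forall_dvd (M := P.map φ - P.map ψ) fun i j => hφψ (P i j)
  refine ⟨1 + Y * Q.map ψ, ?_⟩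
  rw [eq_add_of_sub_eq' hY, Matrix.add_mul, ← Matrix.map_mul, hPQ, map_smul_one, Matrix.smul_mul,
    smul_add]

variable [Fintype N]

lemma FreeImage.exists_of_localization {A A' : Type*} [CommRing A] [CommRing A'] [Algebra A A']
    (S : Submonoid A) [IsLocalization S A'] (hinj : Function.Injective (algebraMap A A'))
    {X : Matrix N N A} (h : FreeImage (X.map (algebraMap A A')) 1) : ∃ c ∈ S, FreeImage X c := by
  obtain ⟨s, ι, κ, h⟩ := h
  obtain ⟨a, ha, ι', hι⟩ := exists_map_eq_smul_of_isLocalization S ι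
  obtain ⟨b, hb, κ', hκ⟩ := exists_map_eq_smul_of_isLocalization S κ
  refine ⟨a * b, S.mul_mem ha hb, s, ι', κ', Matrix.map_injective hinj ?_,
    Matrix.map_injective hinj ?_⟩
  · beta_reduce
    rw [Matrix.map_mul, hι, hκ, Matrix.smul_mul, Matrix.mul_smul, h.mul_eq_smul_one,
      map_smul_one, one_smul, smul_smul, map_mul, mul_comm]
  · beta_reduce
    rw [Matrix.map_mul, hι, hκ, Matrix.smul_mul, Matrix.mul_smul, h.mul_eq_smul,
      Matrix.map_smul' _ _ _ (map_mul _), smul_smul, smul_smul, map_mul, mul_one]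

lemma freeImage_one_of_field {K : Type*} [Field K] {X : Matrix N N K} (hX : X * X = X) :
    FreeImage X 1 := by
  classical
  let f := X.toLin'
  let b := Module.finBasis K (LinearMap.range f)
  have f_rangeRestrict (v : LinearMap.range f) : f.rangeRestrict v = v := by
    obtain ⟨_, w, rfl⟩ := v
    ext1
    change X.toLin' (X.toLin' w) = X.toLin' w
    rw [← LinearMap.comp_apply, ← toLin'_mul, hX]
  let ι : (Fin _ → K) →ₗ[K] N → K := (LinearMap.range f).subtype ∘ₗ b.equivFun.symm.toLinearMap
  let κ : (N → K) →ₗ[K] Fin _ → K := b.equivFun.toLinearMap ∘ₗ f.rangeRestrict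
  refine ⟨_, ι.toMatrix', κ.toMatrix', ?_, ?_⟩
  · rw [← LinearMap.toMatrix'_comp, one_smul, ← LinearMap.toMatrix'_id]
    congr 1
    refine LinearMap.ext fun v => ?_
    simp only [ι, κ, LinearMap.comp_apply, Submodule.subtype_apply, LinearEquiv.coe_coe,
      f_rangeRestrict, LinearEquiv.apply_symm_apply, LinearMap.id_apply]
  · rw [← LinearMap.toMatrix'_comp, one_smul, ← LinearMap.toMatrix'_toLin' X]
    congr 1
    refine LinearMap.ext fun v => ?_
    simp only [ι, κ, LinearMap.comp_apply, Submodule.subtype_apply, LinearEquiv.coe_coe,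
      LinearEquiv.symm_apply_apply]
    rfl

lemma FreeImage.exists_ne_zero {A : Type*} [CommRing A] [IsDomain A] {X : Matrix N N A}
    (hX : X * X = X) : ∃ g : A, g ≠ 0 ∧ FreeImage X g := by
  obtain ⟨c, hc, h⟩ := FreeImage.exists_of_localization (A' := FractionRing A) (nonZeroDivisors A)
    (IsFractionRing.injective A _) (X := X)
    (freeImage_one_of_field (by rw [← Matrix.map_mul, hX]))
  exact ⟨c, nonZeroDivisors.ne_zero hc, h⟩

lemma isConj_map_of_factorization {A B : Type*} [CommRing A] [CommRing B] [IsDomain B]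
    [DecidableEq N] {T : Type*} [Fintype T] [DecidableEq T] {X : Matrix N N A} {P : Matrix N T A}
    {Q : Matrix T N A} {D : Matrix T T A} {g : A} (hPQ : P * Q = g • 1) (hQP : Q * P = g • 1)
    (hXP : X * P = P * D) (hQX : Q * X = D * Q) {φ ψ : A →+* B} (hD : D.map φ = D.map ψ)
    (hg : φ g = ψ g) (hg0 : ψ g ≠ 0) (hφψ : ∀ p, ψ g ∣ φ p - ψ p) :
    IsConj (X.map ψ) (X.map φ) := by
  obtain ⟨E, hE⟩ := exists_map_mul_map_eq_smul hPQ φ hφψ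
  obtain ⟨E', hE'⟩ := exists_map_mul_map_eq_smul hPQ ψ (ψ := φ) fun p => by
    rw [hg, dvd_sub_comm]
    exact hφψ p
  have hEE' : E * E' = 1 := by
    refine smul_right_injective _ (mul_ne_zero hg0 hg0) ?_
    calc (ψ g * ψ g) • (E * E')
      _ = P.map φ * (Q.map ψ * P.map ψ) * Q.map φ := by
        rw [mul_smul, ← Matrix.mul_smul, ← Matrix.smul_mul, ← hE, ← hg, ← hE']
        simp only [Matrix.mul_assoc]
      _ = (ψ g * ψ g) • 1 := by
        rw [← Matrix.map_mul, hQP, map_smul_one, Matrix.mul_smul, Matrix.mul_one, Matrix.smul_mul,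
          ← Matrix.map_mul, hPQ, map_smul_one, hg, smul_smul]
  refine ⟨⟨E, E', hEE', mul_eq_one_comm.1 hEE'⟩, smul_right_injective _ hg0 ?_⟩
  change ψ g • (E * X.map ψ) = ψ g • (X.map φ * E)
  rw [← Matrix.smul_mul, ← Matrix.mul_smul, ← hE, Matrix.mul_assoc, ← Matrix.map_mul, hQX,
    ← Matrix.mul_assoc (X.map φ), ← Matrix.map_mul, hXP, Matrix.map_mul, Matrix.map_mul, hD,
    Matrix.mul_assoc]

lemma IsImageFrame.mul_image_eq_zero {A T : Type*} [CommRing A] [IsDomain A] [DecidableEq N]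
    [Fintype T] [DecidableEq T] {X : Matrix N N A} {g : A} {ι : Matrix N T A} {κ : Matrix T N A}
    (hX : X * X = X) (hg : g ≠ 0) (h : IsImageFrame (1 - X) g ι κ) : κ * X = 0 := by
  rw [← h.mul_image hg, Matrix.mul_assoc, Matrix.sub_mul, hX, Matrix.one_mul, sub_self,
    Matrix.mul_zero]

lemma IsImageFrame.image_mul_eq_zero {A T : Type*} [CommRing A] [IsDomain A] [DecidableEq N]
    [Fintype T] [DecidableEq T] {X : Matrix N N A} {g : A} {ι : Matrix N T A} {κ : Matrix T N A}
    (hX : X * X = X) (hg : g ≠ 0) (h : IsImageFrame (1 - X) g ι κ) : X * ι = 0 := by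
  rw [← h.image_mul hg, ← Matrix.mul_assoc, Matrix.mul_sub, hX, Matrix.mul_one, sub_self,
    Matrix.zero_mul]

section Complement

variable {A : Type*} [CommRing A] [DecidableEq N] {X : Matrix N N A} {g : A}
  {S T : Type*} [Fintype S] [DecidableEq S] [Fintype T] [DecidableEq T] {ι : Matrix N S A}
  {κ : Matrix S N A} {ι' : Matrix N T A} {κ' : Matrix T N A}

lemma IsImageFrame.fromCols_mul_fromRows (h : IsImageFrame X g ι κ)
    (h' : IsImageFrame (1 - X) g ι' κ') : fromCols ι ι' * fromRows κ κ' = g • 1 := by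
  rw [Matrix.fromCols_mul_fromRows, h.mul_eq_smul, h'.mul_eq_smul, ← smul_add, add_sub_cancel]

lemma IsImageFrame.fromRows_mul_fromCols [IsDomain A] (hX : X * X = X) (hg : g ≠ 0)
    (h : IsImageFrame X g ι κ) (h' : IsImageFrame (1 - X) g ι' κ') :
    fromRows κ κ' * fromCols ι ι' = g • 1 := by
  have κι' : κ * ι' = 0 := by
    rw [← h.mul_image hg, Matrix.mul_assoc, h'.image_mul_eq_zero hX hg, Matrix.mul_zero]
  have κ'ι : κ' * ι = 0 := by
    rw [← h.image_mul hg, ← Matrix.mul_assoc, h'.mul_image_eq_zero hX hg, Matrix.zero_mul]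
  rw [Matrix.fromRows_mul_fromCols, h.mul_eq_smul_one, h'.mul_eq_smul_one, κι', κ'ι,
    ← fromBlocks_one, fromBlocks_smul, smul_zero, smul_zero]

end Complement

lemma FreeImage.isConj_map {A B : Type*} [CommRing A] [IsDomain A] [CommRing B] [IsDomain B]
    [DecidableEq N] {X : Matrix N N A} {g : A} (hX : X * X = X) (h : FreeImage X g)
    (h' : FreeImage (1 - X) g) {φ ψ : A →+* B} (hg : φ g = ψ g) (hg0 : ψ g ≠ 0)
    (hφψ : ∀ p, ψ g ∣ φ p - ψ p) : IsConj (X.map ψ) (X.map φ) := by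
  have g_ne_zero : g ≠ 0 := by
    rintro rfl
    exact hg0 (map_zero ψ)
  obtain ⟨s, ι, κ, h⟩ := h
  obtain ⟨s', ι', κ', h'⟩ := h'
  refine isConj_map_of_factorization (D := fromBlocks 1 0 0 0) (h.fromCols_mul_fromRows h')
    (h.fromRows_mul_fromCols hX g_ne_zero h') ?_ ?_ ?_ hg hg0 hφψ
  · rw [mul_fromCols, h.image_mul g_ne_zero, h'.image_mul_eq_zero hX g_ne_zero,
      fromCols_mul_fromBlocks]
    simp
  · rw [fromRows_mul, h.mul_image g_ne_zero, h'.mul_image_eq_zero hX g_ne_zero,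
      fromBlocks_mul_fromRows]
    simp
  · rw [fromBlocks_map, fromBlocks_map]
    simp

lemma comp_sub_dvd {B : Type*} [CommRing B] (p b b' : Polynomial B) :
    b - b' ∣ p.comp b - p.comp b' := by
  simpa only [Polynomial.comp, Polynomial.eval₂_eq_eval_map] using
    Polynomial.sub_dvd_eval_sub b b' (p.map Polynomial.C)

/-- Quillen's ideal: those `c` for which substituting polynomials that are congruent modulo `c` into
`X` gives conjugate matrices. -/
def quillenIdeal {B : Type*} [CommRing B] [DecidableEq N] (X : Matrix N N (Polynomial B)) :
    Ideal B where
  carrier := {c | ∀ b b' : Polynomial B, Polynomial.C c ∣ b - b' →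
    IsConj (X.map (Polynomial.compRingHom b')) (X.map (Polynomial.compRingHom b))}
  zero_mem' := by
    intro b b' h
    rw [map_zero, zero_dvd_iff, sub_eq_zero] at h
    rw [h]
  add_mem' := by
    rintro c₁ c₂ h₁ h₂ b b' ⟨e, he⟩
    rw [map_add] at he
    exact (h₂ (b' + Polynomial.C c₂ * e) b' ⟨e, by ring⟩).trans
      (h₁ b _ ⟨e, by linear_combination he⟩)
  smul_mem' := by
    intro a c hc b b' h
    refine hc b b' (dvd_trans ?_ h)
    rw [smul_eq_mul, map_mul]
    exact dvd_mul_left _ _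

variable {B : Type*} [CommRing B] [IsDomain B]

lemma FreeImage.exists_C_notMem_of_monic [UniqueFactorizationMonoid B]
    {X : Matrix N N (Polynomial B)} (hX : X * X = X) {g : Polynomial B} (hg : g.Monic)
    (h : FreeImage X g) (m : Ideal B) [m.IsPrime] : ∃ c ∉ m, FreeImage X (Polynomial.C c) := by
  let B' := Localization.AtPrime m
  have : IsDomain B' := IsLocalization.isDomain_localization m.primeCompl_le_nonZeroDivisors
  have : UniqueFactorizationMonoid B' := inferInstance
  let : Algebra (Polynomial B) (Polynomial B') := Polynomial.algebra B B'
  have : IsLocalization (m.primeCompl.map Polynomial.C) (Polynomial B') :=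
    Polynomial.isLocalization m.primeCompl B'
  have hinj : Function.Injective (algebraMap (Polynomial B) (Polynomial B')) :=
    Polynomial.map_injective _ (IsLocalization.injective B' m.primeCompl_le_nonZeroDivisors)
  have freeImage_map : FreeImage (X.map (algebraMap (Polynomial B) (Polynomial B'))) 1 := by
    obtain ⟨s, hs⟩ := h.map (algebraMap (Polynomial B) (Polynomial B'))
    exact hs.freeImage_of_monic s (hg.map (algebraMap B B')) (by rw [← Matrix.map_mul, hX])
  obtain ⟨_, ⟨c, hc, rfl⟩, h⟩ :=
    FreeImage.exists_of_localization (m.primeCompl.map Polynomial.C) hinj freeImage_map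
  exact ⟨c, hc, h⟩

variable [DecidableEq N]

lemma FreeImage.mem_quillenIdeal {X : Matrix N N (Polynomial B)} (hX : X * X = X) {c : B}
    (hc : c ≠ 0) (h : FreeImage X (Polynomial.C c)) (h' : FreeImage (1 - X) (Polynomial.C c)) :
    c ∈ quillenIdeal X := by
  intro b b' hcb
  refine FreeImage.isConj_map hX h h' ?_ ?_ ?_
  · simp
  · simpa using hc
  · intro p
    simpa using hcb.trans (comp_sub_dvd p b b')

lemma isConj_constantCoeff {X : Matrix N N (Polynomial B)} (hX : X * X = X)
    (h : ∀ m : Ideal B, m.IsMaximal → ∃ c, c ∉ m ∧ FreeImage X (Polynomial.C c) ∧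
      FreeImage (1 - X) (Polynomial.C c)) :
    IsConj ((X.map Polynomial.constantCoeff).map Polynomial.C) X := by
  have quillenIdeal_eq_top : quillenIdeal X = ⊤ := by
    by_contra hne
    obtain ⟨m, hm, hIm⟩ := Ideal.exists_le_maximal _ hne
    obtain ⟨c, hc, h, h'⟩ := h m hm
    have hc0 : c ≠ 0 := by
      rintro rfl
      exact hc m.zero_mem
    exact hc (hIm (FreeImage.mem_quillenIdeal hX hc0 h h'))
  have h1 := (Ideal.eq_top_iff_one _).1 quillenIdeal_eq_top Polynomial.X 0 (by simp)
  convert h1 using 1 <;> ext1 i j <;> simp [Polynomial.coeff_zero_eq_eval_zero]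

lemma ProjectivesFree.freeImage_of_monic [UniqueFactorizationMonoid B] (hB : ProjectivesFree B)
    {n : ℕ} {X : Matrix (Fin n) (Fin n) (Polynomial B)} (hX : X * X = X) {g : Polynomial B}
    (hg : g.Monic) (h : FreeImage X g) (h' : FreeImage (1 - X) g) : FreeImage X 1 := by
  have isConj_X := isConj_constantCoeff hX fun m hm => by
    obtain ⟨c, hc, hcX⟩ := h.exists_C_notMem_of_monic hX hg m
    obtain ⟨c', hc', hcX'⟩ := h'.exists_C_notMem_of_monic (IsIdempotentElem.one_sub hX) hg m
    refine ⟨c * c', hm.isPrime.mul_notMem hc hc', ?_, ?_⟩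
    · rw [mul_comm, map_mul]
      exact hcX.mul_left _
    · rw [map_mul]
      exact hcX'.mul_left _
  obtain ⟨u, hu⟩ := isConj_X
  refine FreeImage.conj u.mul_inv u.inv_mul hu ?_
  simpa using (hB n (X.map Polynomial.constantCoeff) (by rw [← Matrix.map_mul, hX])).map
    (Polynomial.C : B →+* Polynomial B)

lemma ProjectivesFree.freeImage_of_ringEquiv {A : Type*} [CommRing A]
    [UniqueFactorizationMonoid B] (hB : ProjectivesFree B) (e : A ≃+* Polynomial B) {n : ℕ}
    {X : Matrix (Fin n) (Fin n) A} (hX : X * X = X) {g : A} (hg : (e g).Monic)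
    (h : FreeImage X g) (h' : FreeImage (1 - X) g) : FreeImage X 1 := by
  have h_map' : FreeImage (1 - X.map (e : A →+* Polynomial B)) (e g) := by
    have := h'.map (e : A →+* Polynomial B)
    rwa [Matrix.map_sub _ (map_sub _), Matrix.map_one _ (map_zero _) (map_one _)] at this
  have := (hB.freeImage_of_monic (by rw [← Matrix.map_mul, hX]) hg (h.map (e : A →+* Polynomial B))
    h_map').map (e.symm : Polynomial B →+* A)
  rw [map_one] at this
  convert this
  ext1 i j
  simp

theorem projectivesFree_mvPolynomial (k : Type*) [Field k] (n : ℕ) :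
    ProjectivesFree (MvPolynomial (Fin n) k) := by
  induction n with
  | zero =>
    exact ProjectivesFree.of_ringEquiv (MvPolynomial.isEmptyRingEquiv k (Fin 0)).symm
      fun N X hX => freeImage_one_of_field hX
  | succ n ih =>
    intro N X hX
    obtain ⟨g, hg, h⟩ := FreeImage.exists_ne_zero hX
    obtain ⟨g', hg', h'⟩ := FreeImage.exists_ne_zero (IsIdempotentElem.one_sub hX)
    obtain ⟨u, c, -, hc⟩ := exists_monic_nagataEquiv (mul_ne_zero hg hg')
    refine ih.freeImage_of_ringEquiv (nagataEquiv u).toRingEquiv hX hc ?_ ?_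
    · rw [mul_comm g]
      exact (h.mul_left g').mul_left _
    · exact (h'.mul_left g).mul_left _

end QuillenSuslin

/-! ### Reduction to a square matrix of full rank -/

section Padding

variable {R : Type*} [CommRing R]

/-- The matrix `G` followed by zero columns (or cut off) so as to have `m` columns. -/
def padCols {l : Type*} {r : ℕ} (m : ℕ) (G : Matrix l (Fin r) R) : Matrix l (Fin m) R :=
  Matrix.of fun i j => if h : (j : ℕ) < r then G i ⟨j, h⟩ else 0

/-- The matrix `G` followed by zero rows (or cut off) so as to have `l` rows. -/
def padRows {m : Type*} {r : ℕ} (l : ℕ) (G : Matrix (Fin r) m R) : Matrix (Fin l) m R :=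
  Matrix.of fun i j => if h : (i : ℕ) < r then G ⟨i, h⟩ j else 0

lemma padRows_transpose {m : Type*} {r : ℕ} (l : ℕ) (G : Matrix (Fin r) m R) :
    (padRows l G)ᵀ = padCols l Gᵀ := rfl

lemma padCols_eq_mul {l : Type*} {r : ℕ} (m : ℕ) (G : Matrix l (Fin r) R) :
    padCols m G = G * padCols m (1 : Matrix (Fin r) (Fin r) R) := by
  ext i j
  simp only [padCols, of_apply, Matrix.mul_apply]
  split_ifs with h
  · simp [Matrix.one_apply]
  · simp

lemma mul_padCols {l n : Type*} [Fintype n] {r : ℕ} (m : ℕ) (U : Matrix l n R)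
    (G : Matrix n (Fin r) R) : U * padCols m G = padCols m (U * G) := by
  rw [padCols_eq_mul, padCols_eq_mul m (U * G), Matrix.mul_assoc]

lemma padRows_mul {m n : Type*} [Fintype m] {r : ℕ} (l : ℕ) (G : Matrix (Fin r) m R)
    (V : Matrix m n R) : padRows l G * V = padRows l (G * V) :=
  transpose_injective (by
    rw [transpose_mul, padRows_transpose, mul_padCols, padRows_transpose, transpose_mul])

lemma padCols_submatrix_castLE {l : Type*} {r m : ℕ} (h : r ≤ m) (G : Matrix l (Fin r) R) :
    (padCols m G).submatrix id (Fin.castLE h) = G := by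
  ext i j
  simp [padCols]

lemma detIdeal_padCols {l : Type*} {r m : ℕ} (h : r ≤ m) (G : Matrix l (Fin r) R) (k : ℕ) :
    detIdeal k (padCols m G) = detIdeal k G := by
  apply le_antisymm
  · rw [padCols_eq_mul]
    exact detIdeal_mul_le_left _ _ _
  · conv_lhs => rw [← padCols_submatrix_castLE h G]
    exact detIdeal_submatrix_le _ _ _ _

lemma detIdeal_padRows {m : Type*} {r l : ℕ} (h : r ≤ l) (G : Matrix (Fin r) m R) (k : ℕ) :
    detIdeal k (padRows l G) = detIdeal k G := by
  rw [← detIdeal_transpose, padRows_transpose, detIdeal_padCols h, detIdeal_transpose]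

end Padding

section RankFactorization

variable {R : Type*} [CommRing R]

lemma mul_adjugate_mul_of_det_fromBlocks_eq_zero [IsDomain R] {n : Type*} [Fintype n]
    [DecidableEq n] {M : Matrix n n R} {B : Matrix n (Fin 1) R} {C : Matrix (Fin 1) n R}
    {D : Matrix (Fin 1) (Fin 1) R} (hM : M.det ≠ 0) (h : (fromBlocks M B C D).det = 0) :
    C * M.adjugate * B = M.det • D := by
  have elimination : fromBlocks M B C D * fromBlocks M.adjugate (-(M.adjugate * B)) 0 (M.det • 1) =
      fromBlocks (M.det • 1) 0 (C * M.adjugate) (M.det • D - C * M.adjugate * B) := by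
    rw [fromBlocks_multiply]
    congr 1
    · simp [Matrix.mul_adjugate]
    · rw [Matrix.mul_neg, ← Matrix.mul_assoc, Matrix.mul_adjugate]
      simp
    · simp
    · rw [Matrix.mul_neg, ← Matrix.mul_assoc, Matrix.mul_smul, Matrix.mul_one, neg_add_eq_sub]
  have det_eq := congrArg Matrix.det elimination
  rw [det_mul, h, zero_mul, det_fromBlocks_zero₁₂, det_smul, det_one, mul_one] at det_eq
  have det_schur := (mul_eq_zero.1 det_eq.symm).resolve_left (pow_ne_zero _ hM)
  ext i j
  rw [Subsingleton.elim i 0, Subsingleton.elim j 0]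
  rw [det_fin_one, Matrix.sub_apply, sub_eq_zero] at det_schur
  exact det_schur.symm

variable {m n : Type*} {r : ℕ}

lemma submatrix_mul_adjugate_mul_submatrix [IsDomain R] {F : Matrix m n R}
    (hF : detIdeal (r + 1) F = ⊥) {ρ : Fin r → m} {c : Fin r → n}
    (hM : (F.submatrix ρ c).det ≠ 0) :
    F.submatrix id c * (F.submatrix ρ c).adjugate * F.submatrix ρ id =
      (F.submatrix ρ c).det • F := by
  ext i j
  have bordered_eq : fromBlocks (F.submatrix ρ c) (F.submatrix ρ fun _ => j)
      (F.submatrix (fun _ => i) c) (F.submatrix (fun _ : Fin 1 => i) fun _ : Fin 1 => j) =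
      F.submatrix (Sum.elim ρ fun _ => i) (Sum.elim c fun _ => j) := by
    ext (a | a) (b | b) <;> rfl
  have bordered_det : (F.submatrix (Sum.elim ρ fun _ : Fin 1 => i)
      (Sum.elim c fun _ : Fin 1 => j)).det = 0 := by
    rw [← det_submatrix_equiv_self finSumFinEquiv.symm, submatrix_submatrix, ← Ideal.mem_bot, ← hF]
    exact det_submatrix_mem_detIdeal _ _ _
  exact congrFun (congrFun (mul_adjugate_mul_of_det_fromBlocks_eq_zero hM
    (bordered_eq ▸ bordered_det)) 0) 0

lemma adjugate_mul_submatrix_apply (F : Matrix m n R) (ρ : Fin r → m) (c : Fin r → n) (t : Fin r)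
    (j : n) : ((F.submatrix ρ c).adjugate * F.submatrix ρ id) t j =
      (F.submatrix ρ (Function.update c t j)).det := by
  change ((F.submatrix ρ c).adjugate *ᵥ fun x => F (ρ x) j) t = _
  rw [← cramer_eq_adjugate_mulVec, cramer_apply]
  congr 1
  ext a b
  by_cases hb : b = t
  · subst hb
    simp
  · simp [updateCol_ne hb, Function.update_of_ne hb]

variable [Fintype m] [Fintype n]

lemma exists_mul_mul_eq_smul_of_mem_detIdeal [IsDomain R] {F : Matrix m n R}
    (hF : detIdeal (r + 1) F = ⊥) {x : R} (hx : x ∈ detIdeal r F) :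
    ∃ Z : Matrix n m R, F * Z * F = x • F ∧ ∀ i j, (Z * F) i j ∈ detIdeal r F := by
  classical
  induction hx using Submodule.span_induction with
  | mem x hx =>
    obtain ⟨ρ, c, rfl⟩ := hx
    by_cases hM : (F.submatrix ρ c).det = 0
    · exact ⟨0, by simp [hM], by simp⟩
    have mul_one_submatrix : F * (1 : Matrix n n R).submatrix id c = F.submatrix id c :=
      mul_submatrix_one (Equiv.refl n) c F
    have one_submatrix_mul : (1 : Matrix m m R).submatrix ρ id * F = F.submatrix ρ id :=
      one_submatrix_mul ρ (Equiv.refl m) F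
    refine ⟨(1 : Matrix n n R).submatrix id c * ((F.submatrix ρ c).adjugate *
      (1 : Matrix m m R).submatrix ρ id), ?_, fun i j => ?_⟩
    · rw [← Matrix.mul_assoc F, mul_one_submatrix, Matrix.mul_assoc, Matrix.mul_assoc,
        one_submatrix_mul, ← Matrix.mul_assoc, submatrix_mul_adjugate_mul_submatrix hF hM]
    · rw [Matrix.mul_assoc, Matrix.mul_assoc, one_submatrix_mul, Matrix.mul_apply]
      refine Ideal.sum_mem _ fun t _ => Ideal.mul_mem_left _ _ ?_
      rw [adjugate_mul_submatrix_apply]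
      exact det_submatrix_mem_detIdeal _ _ _
  | zero => exact ⟨0, by simp, by simp⟩
  | add x y _ _ ihx ihy =>
    obtain ⟨Z, hZ, hZF⟩ := ihx
    obtain ⟨Z', hZ', hZF'⟩ := ihy
    refine ⟨Z + Z', ?_, fun i j => ?_⟩
    · rw [Matrix.mul_add, Matrix.add_mul, hZ, hZ', add_smul]
    · rw [Matrix.add_mul]
      exact add_mem (hZF i j) (hZF' i j)
  | smul a x _ ih =>
    obtain ⟨Z, hZ, hZF⟩ := ih
    refine ⟨a • Z, ?_, fun i j => ?_⟩
    · rw [Matrix.mul_smul, Matrix.smul_mul, hZ, smul_smul, smul_eq_mul]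
    · rw [Matrix.smul_mul]
      exact Ideal.mul_mem_left _ _ (hZF i j)

lemma exists_isIdempotent_of_detIdeal_eq_span [IsDomain R] {F : Matrix m n R} {d : R}
    (hd0 : d ≠ 0) (hd : detIdeal r F = Ideal.span {d}) (hF : detIdeal (r + 1) F = ⊥) :
    ∃ (Z : Matrix n m R) (X : Matrix n n R), Z * F = d • X ∧ F * X = F ∧ X * X = X := by
  obtain ⟨Z, hZ, hZF⟩ :=
    exists_mul_mul_eq_smul_of_mem_detIdeal hF (hd ▸ Ideal.mem_span_singleton_self d)
  obtain ⟨X, hX⟩ := exists_eq_smul_of_forall_dvd (a := d) fun i j =>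
    Ideal.mem_span_singleton.1 (hd ▸ hZF i j)
  have hFX : F * X = F := by
    refine smul_right_injective _ hd0 ?_
    beta_reduce
    rw [← Matrix.mul_smul, ← hX, ← Matrix.mul_assoc, hZ]
  refine ⟨Z, X, hX, hFX, smul_right_injective _ hd0 ?_⟩
  beta_reduce
  rw [← Matrix.smul_mul, ← hX, Matrix.mul_assoc, hFX]

lemma IsImageFrame.card_eq [IsDomain R] {F : Matrix m n R} {d : R} (hd0 : d ≠ 0)
    (hd : detIdeal r F = Ideal.span {d}) (hF : detIdeal (r + 1) F = ⊥) {Z : Matrix n m R}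
    {X : Matrix n n R} (hZ : Z * F = d • X) (hFX : F * X = F) {s : ℕ} {ι : Matrix n (Fin s) R}
    {κ : Matrix (Fin s) n R} (h : IsImageFrame X 1 ι κ) : s = r := by
  apply le_antisymm <;> by_contra! hlt
  · have mul_eq : κ * Z * F * ι = d • 1 := by
      rw [Matrix.mul_assoc κ, hZ, Matrix.mul_smul, Matrix.smul_mul, h.mul_image one_ne_zero,
        h.mul_eq_smul_one, one_smul]
    have detIdeal_le : detIdeal s (κ * Z * F * ι) ≤ ⊥ :=
      hF ▸ (detIdeal_mul_mul_le _ _ _ _).trans (detIdeal_antitone _ hlt)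
    rw [mul_eq, detIdeal_square, Ideal.span_singleton_le_iff_mem, Ideal.mem_bot, det_smul, det_one,
      mul_one] at detIdeal_le
    exact pow_ne_zero _ hd0 detIdeal_le
  · have hFικ : F * (ι * κ) = F := by rw [h.mul_eq_smul, one_smul, hFX]
    have detIdeal_eq_bot : detIdeal r F = ⊥ := by
      rw [eq_bot_iff, ← hFικ, ← Matrix.mul_assoc]
      refine (detIdeal_mul_le_right _ _ _).trans ?_
      rw [detIdeal_eq_bot_of_card_rows_lt (by simpa using hlt)]
    rw [hd, Ideal.span_singleton_eq_bot] at detIdeal_eq_bot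
    exact hd0 detIdeal_eq_bot

end RankFactorization

section NormalForm

variable {R : Type*} [CommRing R] [IsDomain R]

lemma ProjectivesFree.exists_isUnit_mul_eq_padCols (hR : ProjectivesFree R) {m : ℕ}
    {X : Matrix (Fin m) (Fin m) R} (hX : X * X = X) :
    ∃ s ≤ m, ∃ (ι : Matrix (Fin m) (Fin s) R) (κ : Matrix (Fin s) (Fin m) R)
      (V : Matrix (Fin m) (Fin m) R), IsImageFrame X 1 ι κ ∧ IsUnit V.det ∧
        X * V = padCols m ι := by
  obtain ⟨s, ι, κ, h⟩ := hR m X hX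
  obtain ⟨s', ι', κ', h'⟩ := hR m (1 - X) (IsIdempotentElem.one_sub hX)
  have mul_eq_one : fromCols ι ι' * fromRows κ κ' = 1 := by
    rw [h.fromCols_mul_fromRows h', one_smul]
  obtain rfl : m = s + s' := by
    have mul_eq_one' : fromRows κ κ' * fromCols ι ι' = 1 := by
      rw [h.fromRows_mul_fromCols hX one_ne_zero h', one_smul]
    simpa using Matrix.square_of_invertible _ _ mul_eq_one mul_eq_one'
  let e : Fin s ⊕ Fin s' ≃ Fin (s + s') := finSumFinEquiv
  have mul_submatrix : (fromCols ι ι').submatrix id e.symm *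
      (fromRows κ κ').submatrix e.symm id = 1 := by
    rw [← submatrix_mul _ _ _ _ _ e.symm.bijective, mul_eq_one, submatrix_id_id]
  refine ⟨s, Nat.le_add_right _ _, ι, κ, (fromCols ι ι').submatrix id e.symm, h,
    (Matrix.isUnit_iff_isUnit_det _).1 (IsUnit.of_mul_eq_one _ mul_submatrix), ?_⟩
  calc X * (fromCols ι ι').submatrix id e.symm
    _ = (X * fromCols ι ι').submatrix id e.symm := rfl
    _ = (fromCols ι 0).submatrix id e.symm := by
      rw [mul_fromCols, h.image_mul one_ne_zero, h'.image_mul_eq_zero hX one_ne_zero]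
    _ = padCols (s + s') ι := by
      ext i j
      refine Fin.addCases (fun j => ?_) (fun j => ?_) j <;> simp [padCols, e]

lemma ProjectivesFree.exists_mul_eq_padCols (hR : ProjectivesFree R) {l m r : ℕ}
    {F : Matrix (Fin l) (Fin m) R} {d : R} (hd0 : d ≠ 0) (hd : detIdeal r F = Ideal.span {d})
    (hF : detIdeal (r + 1) F = ⊥) :
    r ≤ m ∧ ∃ (V : Matrix (Fin m) (Fin m) R) (G : Matrix (Fin l) (Fin r) R), IsUnit V.det ∧
      F * V = padCols m G ∧ ∀ k, detIdeal k G = detIdeal k F := by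
  obtain ⟨Z, X, hZ, hFX, hX⟩ := exists_isIdempotent_of_detIdeal_eq_span hd0 hd hF
  obtain ⟨s, hs, ι, κ, V, h, hV, hXV⟩ := hR.exists_isUnit_mul_eq_padCols hX
  obtain rfl := h.card_eq hd0 hd hF hZ hFX
  refine ⟨hs, V, F * ι, hV, ?_, fun k => le_antisymm (detIdeal_mul_le_left _ _ _) ?_⟩
  · rw [← hFX, Matrix.mul_assoc, hXV, mul_padCols, hFX]
  · have hFικ : F * ι * κ = F := by rw [Matrix.mul_assoc, h.mul_eq_smul, one_smul, hFX]
    conv_lhs => rw [← hFικ]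
    exact detIdeal_mul_le_left _ _ _

theorem ProjectivesFree.exists_mul_mul_eq_padCols_padRows (hR : ProjectivesFree R) {l m r : ℕ}
    {F : Matrix (Fin l) (Fin m) R} {d : R} (hd0 : d ≠ 0) (hd : detIdeal r F = Ideal.span {d})
    (hF : detIdeal (r + 1) F = ⊥) :
    r ≤ l ∧ r ≤ m ∧ ∃ (U : Matrix (Fin l) (Fin l) R) (V : Matrix (Fin m) (Fin m) R)
      (G : Matrix (Fin r) (Fin r) R), IsUnit U.det ∧ IsUnit V.det ∧
      U * F * V = padCols m (padRows l G) ∧ ∀ k, detIdeal k G = detIdeal k F := by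
  obtain ⟨hm, V, G, hV, hFV, hG⟩ := hR.exists_mul_eq_padCols hd0 hd hF
  obtain ⟨hl, U, G', hU, hGU, hG'⟩ := hR.exists_mul_eq_padCols (r := r) (F := Gᵀ) hd0
    (by rw [detIdeal_transpose, hG, hd]) (by rw [detIdeal_transpose, hG, hF])
  refine ⟨hl, hm, Uᵀ, V, G'ᵀ, by rwa [det_transpose], hV, ?_, fun k => ?_⟩
  · rw [Matrix.mul_assoc, hFV, mul_padCols, ← transpose_transpose G, ← transpose_mul, hGU]
    rfl
  · rw [detIdeal_transpose, hG', detIdeal_transpose, hG]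

end NormalForm

/-! ### Lifting matrices of determinant one -/

section CongruenceSubgroup

variable {R S : Type*} [CommRing R] [CommRing S] {N : Type*} [Fintype N] [DecidableEq N] {q : R}

/-- Membership in the principal congruence subgroup of level `q` of the special linear group:
matrices of determinant one congruent to the identity modulo `q`. -/
def IsCongrSL (q : R) (U : Matrix N N R) : Prop :=
  U.det = 1 ∧ ∃ Y, U = 1 + q • Y

lemma isCongrSL_one (q : R) : IsCongrSL q (1 : Matrix N N R) :=
  ⟨det_one, 0, by simp⟩

lemma IsCongrSL.mul {U V : Matrix N N R} (hU : IsCongrSL q U) (hV : IsCongrSL q V) :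
    IsCongrSL q (U * V) := by
  obtain ⟨hU, Y, rfl⟩ := hU
  obtain ⟨hV, Z, rfl⟩ := hV
  refine ⟨by rw [det_mul, hU, hV, one_mul], Y + Z + q • (Y * Z), ?_⟩
  simp only [Matrix.add_mul, Matrix.mul_add, Matrix.one_mul, Matrix.mul_one, smul_add,
    Matrix.smul_mul, Matrix.mul_smul, smul_smul]
  abel

lemma IsCongrSL.adjugate {U : Matrix N N R} (hU : IsCongrSL q U) : IsCongrSL q U.adjugate := by
  obtain ⟨hU, Y, hY⟩ := hU
  refine ⟨by rw [det_adjugate, hU, one_pow], -(Y * U.adjugate), ?_⟩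
  have hinv : (1 + q • Y) * U.adjugate = 1 := by rw [← hY, mul_adjugate, hU, one_smul]
  rw [Matrix.add_mul, Matrix.one_mul, Matrix.smul_mul] at hinv
  rw [smul_neg, ← sub_eq_add_neg, ← hinv, add_sub_cancel_right]

lemma IsCongrSL.map {U : Matrix N N R} (hU : IsCongrSL q U) (φ : R →+* S) :
    IsCongrSL (φ q) (U.map φ) := by
  obtain ⟨hU, Y, rfl⟩ := hU
  refine ⟨?_, Y.map φ, ?_⟩
  · rw [← RingHom.mapMatrix_apply, ← RingHom.map_det, hU, map_one]
  · rw [Matrix.map_add _ (map_add φ), Matrix.map_one _ (map_zero φ) (map_one φ),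
      Matrix.map_smul' _ _ _ (map_mul φ)]

lemma isCongrSL_one_add_smul_vecMulVec (q : R) {u y : N → R} (h : y ⬝ᵥ u = 0) :
    IsCongrSL q (1 + q • vecMulVec u y) := by
  refine ⟨?_, _, rfl⟩
  rw [← smul_vecMulVec, vecMulVec_eq Unit, det_one_add_replicateCol_mul_replicateRow,
    dotProduct_smul, h, smul_zero, add_zero]

lemma vecMul_one_add_vecMulVec (v u y : N → R) :
    v ᵥ* (1 + vecMulVec u y) = v + (v ⬝ᵥ u) • y := by
  rw [vecMul_add, vecMul_one, vecMul_vecMulVec]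

end CongruenceSubgroup

section RowReducible

variable {R Q : Type*} [CommRing R] [CommRing Q] {π : R →+* Q} {q e : R} {n : ℕ}

/-- The row `v` over `Q` is moved to the first standard row by the image of a matrix over `R` in
the congruence subgroup of level `q`. -/
def RowReducible (π : R →+* Q) (q : R) (v : Fin (n + 2) → Q) : Prop :=
  ∃ U, IsCongrSL q U ∧ v ᵥ* U.map π = Pi.single 0 1

lemma RowReducible.of_vecMul {v : Fin (n + 2) → Q} {U : Matrix (Fin (n + 2)) (Fin (n + 2)) R}
    (hU : IsCongrSL q U) (h : RowReducible π q (v ᵥ* U.map π)) : RowReducible π q v := by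
  obtain ⟨V, hV, hv⟩ := h
  exact ⟨U * V, hU.mul hV, by rw [Matrix.map_mul, ← vecMul_vecMul, hv]⟩

lemma exists_isCongrSL_map_eq (hπ : Function.Surjective π) (he : π (q * e) = 1) {N : Type*}
    [Fintype N] [DecidableEq N] {u y : N → Q} (h : ∀ i, y i = 0 ∨ u i = 0) :
    ∃ U, IsCongrSL q U ∧ U.map π = 1 + vecMulVec u y := by
  classical
  choose s hs using hπ
  set σ : Q → R := fun a => if a = 0 then 0 else s a
  have hσ : ∀ a, π (σ a) = a := fun a => by by_cases ha : a = 0 <;> simp [σ, ha, hs]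
  have horth : (e • σ ∘ y) ⬝ᵥ (σ ∘ u) = 0 := by
    refine Finset.sum_eq_zero fun i _ => ?_
    rcases h i with hi | hi <;> simp [σ, hi]
  refine ⟨1 + q • vecMulVec (σ ∘ u) (e • σ ∘ y), isCongrSL_one_add_smul_vecMulVec q horth, ?_⟩
  rw [vecMulVec_smul, smul_smul, Matrix.map_add _ (map_add π),
    Matrix.map_one _ (map_zero π) (map_one π), Matrix.map_smul' _ _ _ (map_mul π), he, one_smul]
  congr 1
  ext i j
  simp [vecMulVec_apply, hσ]

lemma RowReducible.of_add_smul (hπ : Function.Surjective π) (he : π (q * e) = 1)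
    {v y : Fin (n + 2) → Q} (i : Fin (n + 2)) (hy : y i = 0)
    (h : RowReducible π q (v + v i • y)) : RowReducible π q v := by
  obtain ⟨U, hU, hUπ⟩ := exists_isCongrSL_map_eq hπ he (u := Pi.single i 1) (y := y) fun j => by
    by_cases hj : j = i
    · exact .inl (hj ▸ hy)
    · exact .inr (Pi.single_eq_of_ne hj 1)
  refine RowReducible.of_vecMul hU ?_
  rwa [hUπ, vecMul_one_add_vecMulVec, dotProduct_single_one]

lemma RowReducible.of_isUnit (hπ : Function.Surjective π) (he : π (q * e) = 1)
    {v : Fin (n + 2) → Q} (h : IsUnit (v 0)) : RowReducible π q v := by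
  obtain ⟨b, hb⟩ := h.exists_right_inv
  have hb' : ∀ a, v 0 * (b * a) = a := fun a => by rw [← mul_assoc, hb, one_mul]
  -- `(v₀, v₁, …) → (v₀, 0, …) → (v₀, 1, 0, …) → (1, 1, 0, …) → (1, 0, …)`
  refine .of_add_smul hπ he 0 (y := fun j => if j = 0 then 0 else -(b * v j)) (by simp) ?_
  refine .of_add_smul hπ he 0 (y := Pi.single 1 b) (by simp) ?_
  refine .of_add_smul hπ he 1 (y := Pi.single 0 (1 - v 0)) (by simp) ?_
  refine .of_add_smul hπ he 0 (y := Pi.single 1 (-1)) (by simp) ?_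
  refine ⟨1, isCongrSL_one q, ?_⟩
  rw [Matrix.map_one _ (map_zero π) (map_one π), vecMul_one]
  ext j
  refine Fin.cases ?_ (Fin.cases ?_ fun j => ?_) j
  · simp [hb, hb']
  · simp [hb, hb']
  · simp [Fin.succ_succ_ne_one, hb']

lemma RowReducible.of_smul (hπ : Function.Surjective π) (he : π (q * e) = 1)
    {v : Fin (n + 2) → Q} {a : Q} (h : RowReducible π q (a • v)) : RowReducible π q v := by
  obtain ⟨U, hU, hv⟩ := h
  refine .of_vecMul hU (.of_isUnit hπ he (IsUnit.of_mul_eq_one_right a ?_))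
  simpa [smul_vecMul] using congrFun hv 0

lemma RowReducible.map {R' Q' : Type*} [CommRing R'] [CommRing Q'] {π' : R' →+* Q'} {φ : R →+* R'}
    {ψ : Q →+* Q'} (hφψ : ∀ x, π' (φ x) = ψ (π x)) {v : Fin (n + 2) → Q}
    (h : RowReducible π q v) : RowReducible π' (φ q) (ψ ∘ v) := by
  obtain ⟨U, hU, hv⟩ := h
  refine ⟨U.map φ, hU.map φ, ?_⟩
  have hU' : (U.map φ).map π' = (U.map π).map ψ := by ext i j; simp [hφψ]
  ext j
  rw [hU', ← RingHom.map_vecMul, hv]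
  simp [Pi.single_apply, apply_ite ψ]

lemma RowReducible.of_ne_zero [Nontrivial Q] (hπ : Function.Surjective π) (he : π (q * e) = 1)
    (H : ∀ w : Fin (n + 2) → Q, (∃ z, w ⬝ᵥ z = 1) → w 0 ≠ 0 → RowReducible π q w)
    {v : Fin (n + 2) → Q} (hv : ∃ z, v ⬝ᵥ z = 1) : RowReducible π q v := by
  by_cases h0 : v 0 = 0
  · obtain ⟨z, hz⟩ := hv
    obtain ⟨i, hi⟩ : ∃ i, v i ≠ 0 := by
      by_contra! hv0
      simp [show v = 0 from funext hv0] at hz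
    have hi0 : i ≠ 0 := by rintro rfl; exact hi h0
    refine .of_add_smul hπ he i (y := Pi.single 0 1) (by simp [hi0])
      (H _ ⟨z - z 0 • Pi.single i 1, ?_⟩ ?_)
    · simp [add_dotProduct, dotProduct_sub, hz, hi0, mul_comm]
    · simp [h0, hi]
  · exact H v hv h0

end RowReducible

section UnimodularRow

lemma exists_isCoprime_add_mul {D : Type*} [CommRing D] [IsDomain D] [IsPrincipalIdealRing D]
    {a b c : D} (ha : a ≠ 0) (h : ∀ p, Prime p → p ∣ a → p ∣ b → ¬ p ∣ c) :
    ∃ t, IsCoprime a (b + t * c) := by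
  classical
  obtain ⟨s, hs, hsa⟩ := UniqueFactorizationMonoid.exists_prime_factors a ha
  -- `t` is the product of the prime factors of `a` not dividing `b`
  refine ⟨(s.filter fun p => ¬ p ∣ b).prod, isCoprime_of_prime_dvd (by simp [ha]) ?_⟩
  intro p hp hpa hpb
  by_cases hb : p ∣ b
  · refine ((hp.dvd_or_dvd ((dvd_add_right hb).1 hpb)).resolve_right (h p hp hpa hb)).elim ?_
    intro x hx
    obtain ⟨p', hp', hpp'⟩ := hp.exists_mem_multiset_dvd (Dvd.intro x hx.symm)
    obtain ⟨hp's, hp'b⟩ := Multiset.mem_filter.1 hp'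
    exact hp'b ((hp.associated_of_dvd (hs p' hp's) hpp').symm.dvd.trans hb)
  · obtain ⟨p', hp's, hpp'⟩ := hp.exists_mem_multiset_dvd (hpa.trans hsa.symm.dvd)
    have hp' : p' ∈ s.filter fun p => ¬ p ∣ b :=
      Multiset.mem_filter.2 ⟨hp's, fun hp'b => hb (hpp'.trans hp'b)⟩
    exact hb ((dvd_add_left ((hpp'.trans (Multiset.dvd_prod hp')).mul_right c)).1 hpb)

lemma exists_isCoprime_add_sum {D : Type*} [CommRing D] [IsDomain D] [IsPrincipalIdealRing D]
    {n : ℕ} {v : Fin (n + 2) → D} (h0 : v 0 ≠ 0) (hv : ∃ z, v ⬝ᵥ z = 1) :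
    ∃ μ : Fin n → D, IsCoprime (v 0) (v 1 + ∑ j, μ j * v j.succ.succ) := by
  obtain ⟨z, hz⟩ := hv
  obtain ⟨c, hc⟩ := (IsPrincipalIdealRing.principal
    (Ideal.span (Set.range fun j : Fin n => v j.succ.succ))).principal
  replace hc : _ = Ideal.span {c} := hc
  obtain ⟨μ, hμ⟩ := Ideal.mem_span_range_iff_exists_fun.1 (hc ▸ Ideal.mem_span_singleton_self c)
  have c_dvd : ∀ j : Fin n, c ∣ v j.succ.succ := fun j =>
    Ideal.mem_span_singleton.1 (hc ▸ Ideal.subset_span ⟨j, rfl⟩)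
  obtain ⟨t, ht⟩ := exists_isCoprime_add_mul (b := v 1) (c := c) h0 fun p hp hp0 hp1 hpc => by
    refine hp.not_dvd_one (hz ▸ Finset.dvd_sum fun i _ => Dvd.dvd.mul_right ?_ _)
    exact Fin.cases hp0 (Fin.cases hp1 fun i => hpc.trans (c_dvd i)) i
  refine ⟨fun j => t * μ j, ?_⟩
  simpa only [mul_assoc, ← Finset.mul_sum, hμ] using ht

lemma exists_matrix_row_zero_eq_det_eq {R : Type*} [CommRing R] {n : ℕ} (v : Fin (n + 2) → R)
    (μ : Fin n → R) (α β : R) :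
    ∃ M : Matrix (Fin (n + 2)) (Fin (n + 2)) R, M 0 = v ∧
      M.det = α * v 0 + β * (v 1 + ∑ j, μ j * v j.succ.succ) := by
  let e : Fin 2 ⊕ Fin n ≃ Fin (n + 2) := finSumFinEquiv.trans (finCongr (Nat.add_comm 2 n))
  let M : Matrix (Fin 2 ⊕ Fin n) (Fin 2 ⊕ Fin n) R :=
    fromBlocks !![v 0, v 1; -β, α] (Matrix.of ![fun j => v j.succ.succ, 0])
      (Matrix.of fun j => ![0, -μ j]) 1
  have e_zero : e (Sum.inl 0) = 0 := rfl
  have e_one : e (Sum.inl 1) = 1 := by ext; simp [e]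
  have e_inr : ∀ j, e (Sum.inr j) = j.succ.succ := fun j => by ext; simp [e]
  refine ⟨M.submatrix e.symm e.symm, ?_, ?_⟩
  · ext j
    obtain ⟨j, rfl⟩ := e.surjective j
    rw [submatrix_apply, ← e_zero, e.symm_apply_apply, e.symm_apply_apply]
    rcases j with j | j
    · fin_cases j
      · simp [M, e_zero]
      · simp [M, e_one]
    · simp [M, e_inr]
  · rw [det_submatrix_equiv_self, det_fromBlocks_one₂₂, det_fin_two]
    simp only [Matrix.sub_apply, Matrix.mul_apply, of_apply, cons_val_zero, cons_val_one]
    simp only [mul_neg, mul_zero, Pi.zero_apply, zero_mul, neg_zero, Finset.sum_const_zero,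
      Finset.sum_neg_distrib, mul_comm (v _) (μ _)]
    ring

lemma exists_matrix_row_zero_eq_det_eq_C {B : Type*} [CommRing B] {m : Ideal B} [m.IsMaximal]
    {n : ℕ} {v : Fin (n + 2) → Polynomial B} (h0 : (v 0).Monic)
    (hv : ∃ z, (Polynomial.map (Ideal.Quotient.mk m) ∘ v) ⬝ᵥ z = 1) :
    ∃ c ∉ m, ∃ M : Matrix (Fin (n + 2)) (Fin (n + 2)) (Polynomial B),
      M 0 = v ∧ M.det = Polynomial.C c := by
  let _ : Field (B ⧸ m) := Ideal.Quotient.field m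
  obtain ⟨μ, a, b, hab⟩ := exists_isCoprime_add_sum (h0.map (Ideal.Quotient.mk m)).ne_zero hv
  choose σ hσ using Polynomial.map_surjective _ (Ideal.Quotient.mk_surjective (I := m))
  set w := v 1 + ∑ j, σ (μ j) * v j.succ.succ
  have hmem : σ a * v 0 + σ b * w - 1 ∈ m.map Polynomial.C := by
    rw [← Ideal.mk_ker (I := m), ← Polynomial.ker_mapRingHom, RingHom.mem_ker]
    simpa [w, hσ, Polynomial.map_sum, sub_eq_zero] using hab
  obtain ⟨c, hc1, hc⟩ := exists_C_mem_of_monic_mem (J := Ideal.span {v 0, w}) h0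
    (Ideal.subset_span (by simp)) (I := m) <| by
      rw [Ideal.eq_top_iff_one, ← sub_sub_cancel (σ a * v 0 + σ b * w) 1]
      exact Ideal.sub_mem _ (Ideal.mem_sup_left (Ideal.mem_span_pair.2 ⟨_, _, rfl⟩))
        (Ideal.mem_sup_right hmem)
  obtain ⟨α, β, hαβ⟩ := Ideal.mem_span_pair.1 hc
  obtain ⟨M, hM0, hdet⟩ := exists_matrix_row_zero_eq_det_eq v (σ ∘ μ) α β
  refine ⟨c, fun hcm => ?_, M, hM0, hdet.trans hαβ⟩
  exact Ideal.IsPrime.ne_top' ((Ideal.eq_top_iff_one m).2 (by simpa using m.sub_mem hcm hc1))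

end UnimodularRow

section TranslationIdeal

lemma exists_isCongrSL_map_mul_eq_map {A B : Type*} [CommRing A] [CommRing B] [IsDomain B]
    {N : Type*} [Fintype N] [DecidableEq N] {M : Matrix N N A} {φ ψ : A →+* B} {q : B}
    (hdet : φ M.det = ψ M.det) (h0 : ψ M.det ≠ 0) (h : ∀ p, ψ M.det * q ∣ φ p - ψ p) :
    ∃ Γ, IsCongrSL q Γ ∧ M.map φ * Γ = M.map ψ := by
  have map_mul_map_adjugate : ∀ χ : A →+* B, M.map χ * M.adjugate.map χ = χ M.det • 1 := fun χ => by
    rw [← Matrix.map_mul, mul_adjugate, map_smul_one]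
  have map_adjugate_mul_map : M.adjugate.map ψ * M.map ψ = ψ M.det • 1 := by
    rw [← Matrix.map_mul, adjugate_mul, map_smul_one]
  obtain ⟨Y, hY⟩ := exists_eq_smul_of_forall_dvd (M := M.adjugate.map φ - M.adjugate.map ψ)
    fun i j => h (M.adjugate i j)
  -- `Γ = adj(M)^φ M^ψ / ψ (det M)`
  have hΓ : M.adjugate.map φ * M.map ψ = ψ M.det • (1 + q • (Y * M.map ψ)) := by
    rw [← sub_add_cancel (M.adjugate.map φ) (M.adjugate.map ψ), hY, Matrix.add_mul,
      map_adjugate_mul_map, smul_add, Matrix.smul_mul, smul_smul, add_comm]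
  have hmul : M.map φ * (1 + q • (Y * M.map ψ)) = M.map ψ := by
    refine smul_right_injective _ h0 ?_
    beta_reduce
    rw [← Matrix.mul_smul, ← hΓ, ← Matrix.mul_assoc, map_mul_map_adjugate, hdet, Matrix.smul_mul,
      Matrix.one_mul]
  refine ⟨_, ⟨mul_left_cancel₀ h0 ?_, _, rfl⟩, hmul⟩
  have det_map : ∀ χ : A →+* B, (M.map χ).det = χ M.det := fun χ => (RingHom.map_det χ M).symm
  rw [← hdet, ← det_map φ, ← det_mul, hmul, det_map, det_map, mul_one, hdet]

variable {B : Type*} [CommRing B] {N : Type*} [Fintype N] [DecidableEq N]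

/-- The ideal of those `c` for which substituting polynomials that are congruent modulo `c` into
the row `v` gives rows that differ by a matrix in the congruence subgroup of level `q`. -/
def translationIdeal (q : B) (v : N → Polynomial B) : Ideal B where
  carrier := {c | ∀ b b' : Polynomial B, Polynomial.C c ∣ b - b' →
    ∃ Γ : Matrix N N (Polynomial B), IsCongrSL (Polynomial.C q) Γ ∧
      (Polynomial.compRingHom b ∘ v) ᵥ* Γ = Polynomial.compRingHom b' ∘ v}
  zero_mem' := by
    intro b b' h
    obtain rfl : b = b' := by simpa [sub_eq_zero] using h
    exact ⟨1, isCongrSL_one _, vecMul_one _⟩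
  add_mem' := by
    rintro c c' hc hc' b b' ⟨t, ht⟩
    obtain ⟨Γ, hΓ, h⟩ := hc b (b' + Polynomial.C c' * t)
      ⟨t, by rw [← sub_sub, ht, map_add]; ring⟩
    obtain ⟨Γ', hΓ', h'⟩ := hc' (b' + Polynomial.C c' * t) b' ⟨t, by ring⟩
    exact ⟨Γ * Γ', hΓ.mul hΓ', by rw [← vecMul_vecMul, h, h']⟩
  smul_mem' := by
    intro a c hc b b' h
    exact hc b b' ((Dvd.intro_left (Polynomial.C a) (by rw [smul_eq_mul, map_mul])).trans h)

lemma mul_mem_translationIdeal [IsDomain B] (q : B) {M : Matrix N N (Polynomial B)} {c : B}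
    (hc : c ≠ 0) (hdet : M.det = Polynomial.C c) (i : N) : c * q ∈ translationIdeal q (M i) := by
  intro b b' h
  have map_det : ∀ b, Polynomial.compRingHom b M.det = Polynomial.C c := fun b => by simp [hdet]
  obtain ⟨Γ, hΓ, hmul⟩ := exists_isCongrSL_map_mul_eq_map (M := M) (q := Polynomial.C q)
    (φ := Polynomial.compRingHom b) (ψ := Polynomial.compRingHom b') (by rw [map_det, map_det])
    (by simpa [map_det] using hc)
    fun p => by
      rw [map_det, ← map_mul]
      exact h.trans (comp_sub_dvd p b b')
  exact ⟨Γ, hΓ, congrFun hmul i⟩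

lemma translationIdeal_sup_ker [IsDomain B] {B' : Type*} [CommRing B'] {π : B →+* B'} {q e : B}
    (he : π (q * e) = 1) {n : ℕ} {v : Fin (n + 2) → Polynomial B} (h0 : (v 0).Monic)
    (hv : ∃ z, Polynomial.map π (v ⬝ᵥ z) = 1) : translationIdeal q v ⊔ RingHom.ker π = ⊤ := by
  by_contra hne
  obtain ⟨m, hmax, hle⟩ := Ideal.exists_le_maximal _ hne
  obtain ⟨hI, hker⟩ := sup_le_iff.1 hle
  obtain ⟨z, hz⟩ := hv
  have one_notMem : (1 : B) ∉ m := fun h => hmax.ne_top ((Ideal.eq_top_iff_one m).2 h)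
  have hz1 : Polynomial.map (Ideal.Quotient.mk m) (v ⬝ᵥ z - 1) = 0 := by
    rw [← Polynomial.coe_mapRingHom, ← RingHom.mem_ker, Polynomial.ker_mapRingHom, Ideal.mk_ker]
    refine Ideal.map_mono hker ?_
    rw [← Polynomial.ker_mapRingHom, RingHom.mem_ker]
    simp [hz]
  obtain ⟨c, hcm, M, rfl, hdet⟩ := exists_matrix_row_zero_eq_det_eq_C (m := m) h0
    ⟨Polynomial.map (Ideal.Quotient.mk m) ∘ z, by
      rw [Polynomial.map_sub, Polynomial.map_one, sub_eq_zero] at hz1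
      exact (RingHom.map_dotProduct (Polynomial.mapRingHom _) v z).symm.trans hz1⟩
  have hc0 : c ≠ 0 := fun h => hcm (h ▸ m.zero_mem)
  have hqm : q ∉ m := fun hq => one_notMem <| by
    have hqe : q * e - 1 ∈ m := hker (by rw [RingHom.mem_ker, map_sub, he, map_one, sub_self])
    simpa using m.sub_mem (m.mul_mem_right e hq) hqe
  exact (hmax.isPrime.mem_or_mem (hI (mul_mem_translationIdeal q hc0 hdet 0))).elim hcm hqm

end TranslationIdeal

section UnimodularRowsOverPolynomials

lemma exists_dotProduct_eq_one_map {A B N F : Type*} [CommRing A] [CommRing B] [Fintype N]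
    [FunLike F A B] [RingHomClass F A B] (φ : F) {v : N → A} (hv : ∃ z, v ⬝ᵥ z = 1) :
    ∃ z, (φ ∘ v) ⬝ᵥ z = 1 := by
  obtain ⟨z, hz⟩ := hv
  refine ⟨φ ∘ z, ?_⟩
  rw [← map_one φ, ← hz]
  simp [dotProduct]

lemma exists_map_comp_eq_and_monic {B B' : Type*} [CommRing B] [CommRing B'] {π : B →+* B'}
    (hπ : Function.Surjective π) {n : ℕ} {v : Fin (n + 1) → Polynomial B'} (h0 : (v 0).Monic) :
    ∃ w : Fin (n + 1) → Polynomial B, Polynomial.map π ∘ w = v ∧ (w 0).Monic := by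
  obtain ⟨f, hfv, -, hf⟩ := Polynomial.lifts_and_natDegree_eq_and_monic
    ((Polynomial.lifts_iff_coeff_lifts (f := π) _).2 fun k => hπ _) h0
  choose s hs using Polynomial.map_surjective π hπ
  refine ⟨Fin.cons f fun i => s (v i.succ), ?_, hf⟩
  ext1 i
  cases i using Fin.cases <;> simp [hfv, hs]

lemma RowReducible.of_monic {B B' : Type*} [CommRing B] [IsDomain B] [CommRing B'] {π : B →+* B'}
    (hπ : Function.Surjective π) {q e : B} (he : π (q * e) = 1) {n : ℕ}
    (H : ∀ w : Fin (n + 2) → B', (∃ z, w ⬝ᵥ z = 1) → RowReducible π q w)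
    {v : Fin (n + 2) → Polynomial B'} (h0 : (v 0).Monic) (hv : ∃ z, v ⬝ᵥ z = 1) :
    RowReducible (Polynomial.mapRingHom π) (Polynomial.C q) v := by
  obtain ⟨z, hz⟩ := hv
  obtain ⟨w, rfl, hw0⟩ := exists_map_comp_eq_and_monic hπ h0
  choose s hs using Polynomial.map_surjective π hπ
  have htop := translationIdeal_sup_ker he hw0 ⟨s ∘ z, by
    rw [← hz, ← Polynomial.coe_mapRingHom, RingHom.map_dotProduct]
    congr 1
    exact funext fun i => hs (z i)⟩
  obtain ⟨c, hc, k, hk, hck⟩ := Submodule.mem_sup.1 (htop ▸ Submodule.mem_top : (1 : B) ∈ _)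
  have hπc : π c = 1 := by simpa [RingHom.mem_ker.1 hk] using congrArg π hck
  -- since `π c = 1`, translating `X` to `(1 - c) X` amounts to evaluating at `0` over `B'`
  obtain ⟨Γ, hΓ, hwΓ⟩ := hc Polynomial.X (Polynomial.C (1 - c) * Polynomial.X)
    ⟨Polynomial.X, by rw [map_sub, map_one]; ring⟩
  refine .of_vecMul hΓ ?_
  have hrow : (Polynomial.map π ∘ w) ᵥ* Γ.map (Polynomial.mapRingHom π) =
      Polynomial.C ∘ fun i => ((w i).map π).coeff 0 := by
    ext1 i
    have hi := congrFun hwΓ i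
    simp only [Polynomial.coe_compRingHom, Function.comp_def, Polynomial.comp_X] at hi
    refine (RingHom.map_vecMul (Polynomial.mapRingHom π) Γ w i).symm.trans ?_
    simp [hi, Polynomial.map_comp, hπc, Polynomial.coeff_zero_eq_eval_zero]
  rw [hrow]
  exact RowReducible.map (φ := Polynomial.C) (by simp)
    (H _ (exists_dotProduct_eq_one_map Polynomial.constantCoeff ⟨z, hz⟩))

variable {A L : Type*} [CommRing A] [Field L] {ρ : A →+* L} {q e : A}

lemma RowReducible.of_nagataEquiv {k n u : ℕ} {v : Fin (n + 2) → MvPolynomial (Fin (k + 1)) L}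
    (h : RowReducible (Polynomial.mapRingHom (MvPolynomial.map ρ)) (Polynomial.C (C q))
      (nagataEquiv u ∘ v)) : RowReducible (MvPolynomial.map ρ) (C q) v := by
  convert h.map (φ := (nagataEquiv (A := A) u).symm.toRingEquiv.toRingHom)
    (ψ := (nagataEquiv (A := L) u).symm.toRingEquiv.toRingHom)
    (π' := MvPolynomial.map ρ) fun p => ?_
  · simp [← nagataEquiv_C u]
  · ext1 i
    simp
  · obtain ⟨p, rfl⟩ := (nagataEquiv u).surjective p
    simp [map_nagataEquiv]

theorem rowReducible_mvPolynomial [IsDomain A] (hρ : Function.Surjective ρ)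
    (he : ρ (q * e) = 1) (k : ℕ) {n : ℕ} {v : Fin (n + 2) → MvPolynomial (Fin k) L}
    (hv : ∃ z, v ⬝ᵥ z = 1) : RowReducible (MvPolynomial.map ρ) (C q) v := by
  have he' : ∀ k, MvPolynomial.map ρ (C q * C e : MvPolynomial (Fin k) A) = 1 := fun k => by
    rw [← C_mul, map_C, he, C_1]
  have hρ' : ∀ k, Function.Surjective (MvPolynomial.map (σ := Fin k) ρ) := fun k =>
    MvPolynomial.map_surjective ρ hρ
  induction k with
  | zero =>
    refine .of_ne_zero (hρ' 0) (he' 0) (fun w _ hw => .of_isUnit (hρ' 0) (he' 0) ?_) hv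
    rw [← MulEquiv.isUnit_map (isEmptyAlgEquiv L (Fin 0)), isUnit_iff_ne_zero]
    exact (map_ne_zero_iff _ (isEmptyAlgEquiv L (Fin 0)).injective).2 hw
  | succ k ih =>
    refine .of_ne_zero (hρ' _) (he' _) (fun w ⟨z, hz⟩ hw => ?_) hv
    obtain ⟨u, c, hc, hmonic⟩ := exists_monic_nagataEquiv hw
    have hcw : ∃ y, ((C c : MvPolynomial (Fin (k + 1)) L) • w) ⬝ᵥ y = 1 := by
      refine ⟨(C c⁻¹ : MvPolynomial (Fin (k + 1)) L) • z, ?_⟩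
      rw [smul_dotProduct, dotProduct_smul, hz, smul_eq_mul, smul_eq_mul, mul_one, ← C_mul,
        mul_inv_cancel₀ hc, C_1]
    refine .of_smul (hρ' _) (he' _) (a := C c) (.of_nagataEquiv (u := u) ?_)
    exact .of_monic (hρ' k) (he' k) (fun w hw => ih hw) hmonic
      (exists_dotProduct_eq_one_map (nagataEquiv u) hcw)

end UnimodularRowsOverPolynomials

section LiftSL

variable {R Q : Type*} [CommRing R] [CommRing Q] {n : ℕ}

/-- The block diagonal matrix with blocks `1` and `W`. -/
def oneBlock (W : Matrix (Fin n) (Fin n) R) : Matrix (Fin (n + 1)) (Fin (n + 1)) R :=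
  Matrix.of (Fin.cons (Pi.single 0 1) fun i => Fin.cons 0 (W i) : Fin (n + 1) → Fin (n + 1) → R)

@[simp] lemma oneBlock_zero_zero (W : Matrix (Fin n) (Fin n) R) : oneBlock W 0 0 = 1 := by
  simp [oneBlock]

@[simp] lemma oneBlock_zero_succ (W : Matrix (Fin n) (Fin n) R) (j : Fin n) :
    oneBlock W 0 j.succ = 0 := by
  simp [oneBlock]

@[simp] lemma oneBlock_succ_zero (W : Matrix (Fin n) (Fin n) R) (i : Fin n) :
    oneBlock W i.succ 0 = 0 := by
  simp [oneBlock]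

@[simp] lemma oneBlock_succ_succ (W : Matrix (Fin n) (Fin n) R) (i j : Fin n) :
    oneBlock W i.succ j.succ = W i j := by
  simp [oneBlock]

lemma det_of_row_zero_eq_single {M : Matrix (Fin (n + 1)) (Fin (n + 1)) R}
    (h : M 0 = Pi.single 0 1) : M.det = (M.submatrix Fin.succ Fin.succ).det := by
  simp [det_succ_row_zero, Fin.sum_univ_succ, h]

lemma det_oneBlock (W : Matrix (Fin n) (Fin n) R) : (oneBlock W).det = W.det := by
  rw [det_of_row_zero_eq_single rfl]
  congr 1

lemma isCongrSL_oneBlock {q : R} {W : Matrix (Fin n) (Fin n) R} (hW : IsCongrSL q W) :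
    IsCongrSL q (oneBlock W) := by
  obtain ⟨hdet, Y, rfl⟩ := hW
  refine ⟨(det_oneBlock _).trans hdet,
    Matrix.of (Fin.cons 0 fun i => Fin.cons 0 (Y i) : Fin (n + 1) → Fin (n + 1) → R), ?_⟩
  ext i j
  cases i using Fin.cases <;> cases j using Fin.cases <;>
    simp [Matrix.one_apply, Fin.succ_ne_zero, (Fin.succ_ne_zero _).symm]

variable {π : R →+* Q} {q e : R}

lemma exists_isCongrSL_map_eq_of_row_zero (hπ : Function.Surjective π) (he : π (q * e) = 1)
    {M : Matrix (Fin (n + 1)) (Fin (n + 1)) Q} (h0 : M 0 = Pi.single 0 1)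
    {W : Matrix (Fin n) (Fin n) R} (hW : IsCongrSL q W)
    (hWM : W.map π = M.submatrix Fin.succ Fin.succ) : ∃ U, IsCongrSL q U ∧ U.map π = M := by
  obtain ⟨T, hT, hTπ⟩ := exists_isCongrSL_map_eq hπ he
    (u := Fin.cons 0 fun i => M i.succ 0) (y := (Pi.single 0 1 : Fin (n + 1) → Q))
    fun i => by cases i using Fin.cases <;> simp
  refine ⟨T * oneBlock W, hT.mul (isCongrSL_oneBlock hW), ?_⟩
  rw [Matrix.map_mul, hTπ, Matrix.add_mul, Matrix.one_mul, vecMulVec_mul]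
  have hW' : ∀ i j, π (W i j) = M i.succ j.succ := fun i j => congrFun₂ hWM i j
  ext i j
  cases i using Fin.cases <;> cases j using Fin.cases <;>
    simp [vecMulVec_apply, h0, hW']

theorem exists_isCongrSL_map_eq_of_det_eq_one (hπ : Function.Surjective π) (he : π (q * e) = 1)
    (H : ∀ {n : ℕ} (w : Fin (n + 2) → Q), (∃ z, w ⬝ᵥ z = 1) → RowReducible π q w) {n : ℕ}
    {M : Matrix (Fin n) (Fin n) Q} (hM : M.det = 1) :
    ∃ U : Matrix (Fin n) (Fin n) R, IsCongrSL q U ∧ U.map π = M := by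
  induction n with
  | zero => exact ⟨1, isCongrSL_one q, Subsingleton.elim _ _⟩
  | succ n ih =>
    rcases n with _ | n
    · refine ⟨1, isCongrSL_one q, ?_⟩
      rw [det_fin_one] at hM
      ext i j
      rw [Fin.fin_one_eq_zero i, Fin.fin_one_eq_zero j, Matrix.map_apply, hM, one_apply_eq,
        map_one]
    · obtain ⟨U, hU, hMU⟩ := H (M 0) ⟨fun j => M.adjugate j 0, by
        change (M * M.adjugate) 0 0 = 1
        rw [mul_adjugate, hM, one_smul, one_apply_eq]⟩
      have hrow : (M * U.map π) 0 = Pi.single 0 1 := hMU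
      have hdet : (M * U.map π).det = 1 := by rw [det_mul, hM, (hU.map π).1, one_mul]
      obtain ⟨W, hW, hWM⟩ := ih ((det_of_row_zero_eq_single hrow).symm.trans hdet)
      obtain ⟨V, hV, hVM⟩ := exists_isCongrSL_map_eq_of_row_zero hπ he hrow hW hWM
      refine ⟨V * U.adjugate, hV.mul hU.adjugate, ?_⟩
      rw [Matrix.map_mul, hVM, Matrix.mul_assoc, ← Matrix.map_mul, mul_adjugate, hU.1, one_smul,
        Matrix.map_one _ (map_zero π) (map_one π), Matrix.mul_one]

end LiftSL

section LiftPrimePower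

lemma map_quotient_mk_span_eq_iff {R : Type*} [CommRing R] {m n : Type*} {c : R}
    {M U : Matrix m n R} :
    U.map (Ideal.Quotient.mk (Ideal.span {c})) = M.map (Ideal.Quotient.mk (Ideal.span {c})) ↔
      ∃ Y, U = M + c • Y := by
  refine ⟨fun h => ?_, ?_⟩
  · obtain ⟨Y, hY⟩ := exists_eq_smul_of_forall_dvd (a := c) (M := U - M) fun i j =>
      Ideal.mem_span_singleton.1 (Ideal.Quotient.eq.1 (congrFun₂ h i j))
    exact ⟨Y, by rw [← hY, add_sub_cancel]⟩
  · rintro ⟨Y, rfl⟩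
    ext i j
    exact Ideal.Quotient.eq.2 (Ideal.mem_span_singleton.2 (by simp))

lemma exists_mk_mul_eq_one_of_isCoprime {R : Type*} [CommRing R] {q c : R} (h : IsCoprime q c) :
    ∃ e, Ideal.Quotient.mk (Ideal.span {c}) (q * e) = 1 := by
  obtain ⟨a, b, hab⟩ := h
  refine ⟨a, ?_⟩
  rw [← map_one (Ideal.Quotient.mk _), Ideal.Quotient.eq, Ideal.mem_span_singleton]
  exact ⟨-b, by linear_combination hab⟩

lemma RowReducible.of_comp_of_ker_isNilpotent {R Q S : Type*} [CommRing R] [CommRing Q]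
    [CommRing S] {π : R →+* Q} {ψ : Q →+* S} {q e : R} (hπ : Function.Surjective π)
    (he : π (q * e) = 1) (hψ : ∀ x, ψ x = 0 → IsNilpotent x) {n : ℕ} {w : Fin (n + 2) → Q}
    (h : RowReducible (ψ.comp π) q (ψ ∘ w)) : RowReducible π q w := by
  obtain ⟨U, hU, hw⟩ := h
  refine .of_vecMul hU (.of_isUnit hπ he ?_)
  have h0 : ψ ((w ᵥ* U.map π) 0) = 1 := by
    rw [RingHom.map_vecMul]
    exact (congrFun hw 0).trans (Pi.single_eq_same 0 1)
  rw [← sub_add_cancel ((w ᵥ* U.map π) 0) 1]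
  exact (hψ _ (by rw [map_sub, h0, map_one, sub_self])).isUnit_add_one

variable {A : Type*} [CommRing A] [IsDomain A] [IsPrincipalIdealRing A] {p q : A} {k : ℕ}

lemma rowReducible_quotient_pow (hp : Prime p) (hpq : IsCoprime q p) (E : ℕ) {n : ℕ}
    {w : Fin (n + 2) → MvPolynomial (Fin k) A ⧸ Ideal.span {(C p ^ (E + 1) : MvPolynomial _ A)}}
    (hw : ∃ z, w ⬝ᵥ z = 1) : RowReducible (Ideal.Quotient.mk _) (C q) w := by
  have : (Ideal.span {p}).IsMaximal :=
    PrincipalIdealRing.isMaximal_of_irreducible hp.irreducible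
  let _ : Field (A ⧸ Ideal.span {p}) := Ideal.Quotient.field _
  set I : Ideal (MvPolynomial (Fin k) A) := Ideal.span {C p ^ (E + 1)} with hI
  let red : MvPolynomial (Fin k) A →+* MvPolynomial (Fin k) (A ⧸ Ideal.span {p}) :=
    MvPolynomial.map (Ideal.Quotient.mk (Ideal.span {p}))
  have hker : RingHom.ker red = Ideal.span {C p} := by
    rw [MvPolynomial.ker_map, Ideal.mk_ker, Ideal.map_span, Set.image_singleton]
  have hIred : ∀ x ∈ I, red x = 0 := fun x hx => by
    rw [← RingHom.mem_ker, hker]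
    exact Ideal.span_singleton_le_span_singleton.2 (dvd_pow_self _ E.succ_ne_zero) hx
  have hnil : ∀ x, Ideal.Quotient.lift I red hIred x = 0 → IsNilpotent x := fun x hx => by
    obtain ⟨x, rfl⟩ := Ideal.Quotient.mk_surjective x
    rw [Ideal.Quotient.lift_mk, ← RingHom.mem_ker, hker, Ideal.mem_span_singleton] at hx
    refine ⟨E + 1, ?_⟩
    rw [← map_pow, Ideal.Quotient.eq_zero_iff_mem, hI, Ideal.mem_span_singleton]
    exact pow_dvd_pow_of_dvd hx _
  obtain ⟨e, he⟩ := exists_mk_mul_eq_one_of_isCoprime hpq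
  obtain ⟨e', he'⟩ : ∃ e', Ideal.Quotient.mk I (C q * e') = 1 :=
    exists_mk_mul_eq_one_of_isCoprime
      (by simpa using (hpq.pow_right (n := E + 1)).map (C : A →+* MvPolynomial (Fin k) A))
  exact .of_comp_of_ker_isNilpotent Ideal.Quotient.mk_surjective he' hnil
    (rowReducible_mvPolynomial Ideal.Quotient.mk_surjective he k
      (exists_dotProduct_eq_one_map (Ideal.Quotient.lift I red hIred) hw))

theorem exists_isCongrSL_eq_add_pow_smul (hp : Prime p) (hpq : IsCoprime q p) (E : ℕ) {n : ℕ}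
    {M : Matrix (Fin n) (Fin n) (MvPolynomial (Fin k) A)} (hM : C p ^ (E + 1) ∣ M.det - 1) :
    ∃ U, IsCongrSL (C q) U ∧ ∃ Y, U = M + (C p ^ (E + 1) : MvPolynomial (Fin k) A) • Y := by
  obtain ⟨e, he⟩ := exists_mk_mul_eq_one_of_isCoprime
    (by simpa using (hpq.pow_right (n := E + 1)).map (C : A →+* MvPolynomial (Fin k) A))
  have hdet : (M.map (Ideal.Quotient.mk (Ideal.span {C p ^ (E + 1)}))).det = 1 := by
    rw [← RingHom.mapMatrix_apply, ← RingHom.map_det, ← map_one (Ideal.Quotient.mk _),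
      Ideal.Quotient.eq]
    exact Ideal.mem_span_singleton.2 hM
  obtain ⟨U, hU, hUM⟩ := exists_isCongrSL_map_eq_of_det_eq_one Ideal.Quotient.mk_surjective he
    (fun _ hw => rowReducible_quotient_pow hp hpq E hw) hdet
  exact ⟨U, hU, map_quotient_mk_span_eq_iff.1 hUM⟩

end LiftPrimePower

/-! ### Row divisibility over a local base -/

section RowDivisible

variable {R : Type*} [CommRing R] {N M : Type*} [Fintype N] [DecidableEq N]

/-- Invertible row operations make the `i`-th row of `G` divisible by `d i` for all `i`. -/
def RowDivisible (d : N → R) (G : Matrix N M R) : Prop :=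
  ∃ U : Matrix N N R, IsUnit U.det ∧ ∀ i j, d i ∣ (U * G) i j

variable {d d' : N → R} {G : Matrix N M R}

lemma rowDivisible_of_forall_dvd (h : ∀ i j, d i ∣ G i j) : RowDivisible d G :=
  ⟨1, by simp, by simpa using h⟩

lemma RowDivisible.of_mul_mul [Fintype M] [DecidableEq M] {U : Matrix N N R} {V : Matrix M M R}
    (hU : IsUnit U.det) (hV : IsUnit V.det) (h : RowDivisible d (U * G * V)) :
    RowDivisible d G := by
  obtain ⟨W, hW, hd⟩ := h
  have hWU : W * U * G = W * (U * G * V) * V⁻¹ := by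
    rw [← Matrix.mul_assoc W (U * G) V, Matrix.mul_assoc _ V, mul_nonsing_inv _ hV,
      Matrix.mul_one, Matrix.mul_assoc]
  refine ⟨W * U, by rw [det_mul]; exact hW.mul hU, fun i j => ?_⟩
  rw [hWU, Matrix.mul_apply]
  exact Finset.dvd_sum fun t _ => (hd i t).mul_right _

lemma RowDivisible.smul {a : R} (h : RowDivisible d G) (hd : ∀ i, d' i ∣ a * d i) :
    RowDivisible d' (a • G) := by
  obtain ⟨U, hU, hUG⟩ := h
  refine ⟨U, hU, fun i j => ?_⟩
  rw [Matrix.mul_smul, Matrix.smul_apply, smul_eq_mul]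
  exact (hd i).trans (mul_dvd_mul_left a (hUG i j))

lemma RowDivisible.of_submatrix_succ {n m : ℕ} {G : Matrix (Fin (n + 1)) (Fin (m + 1)) R}
    {d : Fin (n + 1) → R} (hd : IsUnit (d 0)) (hcol : ∀ i : Fin n, G i.succ 0 = 0)
    (h : RowDivisible (fun i => d i.succ) (G.submatrix Fin.succ Fin.succ)) :
    RowDivisible d G := by
  obtain ⟨W, hW, hWG⟩ := h
  refine ⟨oneBlock W, by rwa [det_oneBlock], fun i j => ?_⟩
  cases i using Fin.cases with
  | zero => exact hd.dvd
  | succ i =>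
    cases j using Fin.cases with
    | zero => simp [Matrix.mul_apply, Fin.sum_univ_succ, hcol]
    | succ j => simpa [Matrix.mul_apply, Fin.sum_univ_succ] using hWG i j

end RowDivisible

section Pivot

lemma exists_mul_mul_clear_pivot {R : Type*} [CommRing R] {n m : ℕ}
    {G : Matrix (Fin (n + 1)) (Fin (m + 1)) R} (h : G 0 0 = 1) :
    ∃ (U : Matrix (Fin (n + 1)) (Fin (n + 1)) R) (V : Matrix (Fin (m + 1)) (Fin (m + 1)) R),
      U.det = 1 ∧ V.det = 1 ∧ (U * G * V) 0 0 = 1 ∧ (∀ j : Fin m, (U * G * V) 0 j.succ = 0) ∧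
      ∀ i : Fin n, (U * G * V) i.succ 0 = 0 := by
  let u : Fin (n + 1) → R := Fin.cons 0 fun i => -G i.succ 0
  let w : Fin (m + 1) → R := Fin.cons 0 fun j => -G 0 j.succ
  let U : Matrix (Fin (n + 1)) (Fin (n + 1)) R := 1 + (1 : R) • vecMulVec u (Pi.single 0 1)
  let V : Matrix (Fin (m + 1)) (Fin (m + 1)) R := 1 + (1 : R) • vecMulVec (Pi.single 0 1) w
  have hUGV : ∀ i j, (U * G * V) i j = G i j + u i * G 0 j + (G i 0 + u i * G 0 0) * w j :=
    fun i j => by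
      simp [U, V, Matrix.add_mul, Matrix.mul_add, vecMulVec_mul, mul_vecMulVec, vecMulVec_apply]
  refine ⟨U, V, (isCongrSL_one_add_smul_vecMulVec 1 (by simp [u])).1,
    (isCongrSL_one_add_smul_vecMulVec 1 (by simp [w])).1, ?_, fun j => ?_, fun i => ?_⟩ <;>
  simp [hUGV, u, w, h]

lemma exists_det_eq_and_mul_padRows {R : Type*} [CommRing R] {s l : ℕ} (h : s ≤ l)
    (N : Matrix (Fin s) (Fin s) R) : ∃ W : Matrix (Fin l) (Fin l) R, W.det = N.det ∧
      ∀ {m : Type*} (Y : Matrix (Fin s) m R), W * padRows l Y = padRows l (N * Y) := by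
  obtain ⟨t, rfl⟩ := Nat.exists_eq_add_of_le h
  have hpad : ∀ {m : Type _} (Y : Matrix (Fin s) m R), padRows (s + t) Y =
      (fromRows Y 0).submatrix finSumFinEquiv.symm id := fun Y => by
    ext i j
    cases i using Fin.addCases <;> simp [padRows]
  refine ⟨(fromBlocks N 0 0 1).submatrix finSumFinEquiv.symm finSumFinEquiv.symm, ?_, fun Y => ?_⟩
  · rw [det_submatrix_equiv_self, det_fromBlocks_zero₂₁, det_one, mul_one]
  · rw [hpad, hpad, submatrix_mul_equiv, fromBlocks_mul_fromRows]
    simp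

lemma ProjectivesFree.exists_mul_mul_eq_padCols_padRows_one {Q : Type*} [CommRing Q] [IsDomain Q]
    (hQ : ProjectivesFree Q) {l m s : ℕ} {F : Matrix (Fin l) (Fin m) Q}
    (htop : detIdeal s F = ⊤) (hbot : detIdeal (s + 1) F = ⊥) :
    ∃ (U : Matrix (Fin l) (Fin l) Q) (V : Matrix (Fin m) (Fin m) Q), IsUnit U.det ∧
      IsUnit V.det ∧ U * F * V = padCols m (padRows l (1 : Matrix (Fin s) (Fin s) Q)) := by
  obtain ⟨hl, -, U, V, N, hU, hV, hN, hdet⟩ := hQ.exists_mul_mul_eq_padCols_padRows (d := 1)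
    one_ne_zero (by rw [htop, Ideal.span_singleton_one]) hbot
  have hNdet : IsUnit N.det := by
    rw [← Ideal.span_singleton_eq_top, ← detIdeal_square, hdet, htop]
  obtain ⟨W, hW, hWpad⟩ := exists_det_eq_and_mul_padRows hl N⁻¹
  refine ⟨W * U, V, ?_, hV, ?_⟩
  · rw [det_mul, hW]
    exact (isUnit_nonsing_inv_det N hNdet).mul hU
  · rw [Matrix.mul_assoc W, Matrix.mul_assoc W, hN, mul_padCols, hWpad, nonsing_inv_mul _ hNdet]

variable {R Q : Type*} [CommRing R] [CommRing Q] {π : R →+* Q} [IsLocalHom π]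

lemma exists_isUnit_det_and_map_eq (hπ : Function.Surjective π) {N : Type*} [Fintype N]
    [DecidableEq N] {M : Matrix N N Q} (hM : IsUnit M.det) :
    ∃ M' : Matrix N N R, IsUnit M'.det ∧ M'.map π = M := by
  choose t ht using hπ
  have hmap : (M.map t).map π = M := by ext i j; exact ht _
  refine ⟨M.map t, (isUnit_map_iff π _).1 ?_, hmap⟩
  rwa [RingHom.map_det, RingHom.mapMatrix_apply, hmap]

lemma ProjectivesFree.exists_mul_mul_clear_pivot [IsDomain Q] (hQ : ProjectivesFree Q)
    (hπ : Function.Surjective π) {l m s : ℕ} {G : Matrix (Fin (l + 1)) (Fin (m + 1)) R}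
    (htop : detIdeal (s + 1) G = ⊤) (hbot : (detIdeal (s + 2) G).map π = ⊥) :
    ∃ (U : Matrix (Fin (l + 1)) (Fin (l + 1)) R) (V : Matrix (Fin (m + 1)) (Fin (m + 1)) R),
      IsUnit U.det ∧ IsUnit V.det ∧ (U * G * V) 0 0 = 1 ∧
      (∀ j : Fin m, (U * G * V) 0 j.succ = 0) ∧ ∀ i : Fin l, (U * G * V) i.succ 0 = 0 := by
  obtain ⟨Uπ, Vπ, hUπ, hVπ, hpad⟩ := hQ.exists_mul_mul_eq_padCols_padRows_one (s := s + 1)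
    (F := G.map π) (by rw [detIdeal_map, htop, Ideal.map_top]) (by rw [detIdeal_map, hbot])
  obtain ⟨U, hU, rfl⟩ := exists_isUnit_det_and_map_eq hπ hUπ
  obtain ⟨V, hV, rfl⟩ := exists_isUnit_det_and_map_eq hπ hVπ
  have hpivot : IsUnit ((U * G * V) 0 0) := by
    rw [← isUnit_map_iff π, ← Matrix.map_apply (f := π), Matrix.map_mul, Matrix.map_mul, hpad]
    simp [padCols, padRows, Matrix.one_apply]
  obtain ⟨b, hb⟩ := hpivot.exists_left_inv
  obtain ⟨U', V', hU', hV', hclear⟩ := _root_.exists_mul_mul_clear_pivot (G := b • U * G * V)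
    (by rw [Matrix.smul_mul, Matrix.smul_mul, Matrix.smul_apply, smul_eq_mul, hb])
  refine ⟨U' * (b • U), V * V', ?_, ?_, ?_⟩
  · rw [det_mul, hU', one_mul, det_smul]
    exact ((IsUnit.of_mul_eq_one _ hb).pow _).mul hU
  · rwa [det_mul, hV', mul_one]
  · simpa only [Matrix.mul_assoc] using hclear

end Pivot

section HasDetDivisors

variable {R : Type*} [CommRing R] {r : ℕ} {D : ℕ → R} {G : Matrix (Fin r) (Fin r) R}

/-- The square matrix `G` of size `r` has the determinantal divisors `D 0, …, D (r - 1)`, in the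
strong sense that they generate the determinantal ideals, and its determinant is a multiple
of `D r`. -/
def HasDetDivisors (D : ℕ → R) (G : Matrix (Fin r) (Fin r) R) : Prop :=
  (∀ j < r, detIdeal j G = Ideal.span {D j}) ∧ D r ∣ G.det

lemma HasDetDivisors.detIdeal_le (h : HasDetDivisors D G) {j : ℕ} (hj : j ≤ r) :
    detIdeal j G ≤ Ideal.span {D j} := by
  rcases hj.lt_or_eq with hj | rfl
  · exact (h.1 j hj).le
  · rw [detIdeal_square]
    exact Ideal.span_singleton_le_span_singleton.2 h.2

lemma HasDetDivisors.mul_mul (h : HasDetDivisors D G) {U V : Matrix (Fin r) (Fin r) R}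
    (hU : IsUnit U.det) (hV : IsUnit V.det) : HasDetDivisors D (U * G * V) := by
  refine ⟨fun j hj => ?_, ?_⟩
  · rw [detIdeal_mul_isUnit _ _ hV, detIdeal_isUnit_mul _ hU, h.1 j hj]
  · rw [det_mul, det_mul]
    exact (h.2.mul_left _).mul_right _

lemma HasDetDivisors.submatrix_succ {G : Matrix (Fin (r + 1)) (Fin (r + 1)) R}
    (h : HasDetDivisors D G) (h00 : G 0 0 = 1) (hrow : ∀ j : Fin r, G 0 j.succ = 0)
    (hcol : ∀ i : Fin r, G i.succ 0 = 0) :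
    HasDetDivisors (fun j => D (j + 1)) (G.submatrix Fin.succ Fin.succ) := by
  have hdet := detIdeal_succ_of_pivot G h00 hrow hcol
  refine ⟨fun j hj => ?_, ?_⟩
  · rw [← hdet, h.1 _ (by omega)]
  · rw [← Ideal.span_singleton_le_span_singleton, ← detIdeal_square, ← hdet]
    exact h.detIdeal_le le_rfl

variable [IsDomain R] {p : R}

lemma HasDetDivisors.mul_le_of_smul (hp0 : p ≠ 0) (hp : ¬ IsUnit p) {a : ℕ} {δ : ℕ → ℕ}
    (h : HasDetDivisors (fun j => p ^ δ j) (p ^ a • G)) {j : ℕ} (hj : j < r) : j * a ≤ δ j := by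
  have hle : Ideal.span {p ^ δ j} ≤ Ideal.span {p ^ (j * a)} := by
    rw [← h.1 j hj, detIdeal_smul, ← pow_mul, mul_comm a]
    exact Ideal.mul_le_left
  exact (pow_dvd_pow_iff hp0 hp).1 (Ideal.span_singleton_le_span_singleton.1 hle)

lemma HasDetDivisors.of_smul (hp0 : p ≠ 0) (hp : ¬ IsUnit p) {a : ℕ} {δ : ℕ → ℕ}
    (h : HasDetDivisors (fun j => p ^ δ j) (p ^ a • G)) :
    HasDetDivisors (fun j => p ^ (δ j - j * a)) G := by
  refine ⟨fun j hj => ?_, ?_⟩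
  · have hj' : _ = Ideal.span {p ^ δ j} := h.1 j hj
    rw [detIdeal_smul, ← pow_mul, mul_comm a, ← Nat.add_sub_cancel' (h.mul_le_of_smul hp0 hp hj),
      pow_add, ← Ideal.span_singleton_mul_span_singleton] at hj'
    exact (Ideal.span_singleton_mul_right_inj (pow_ne_zero _ hp0)).1 hj'
  · rcases Nat.le_total (r * a) (δ r) with hle | hle
    · have hdet : p ^ δ r ∣ _ := h.2
      rw [det_smul, Fintype.card_fin, ← pow_mul, mul_comm a, ← Nat.add_sub_cancel' hle,
        pow_add] at hdet
      exact (mul_dvd_mul_iff_left (pow_ne_zero _ hp0)).1 hdet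
    · simp [Nat.sub_eq_zero_of_le hle]

end HasDetDivisors

section LocalRows

variable {R Q : Type*} [CommRing R] [CommRing Q] [IsDomain Q] {π : R →+* Q} [IsLocalHom π] {p : R}

lemma not_isUnit_of_map_eq_zero {S T : Type*} [CommRing S] [CommRing T] [Nontrivial T]
    {φ : S →+* T} {x : S} (hx : φ x = 0) : ¬ IsUnit x := fun h =>
  not_isUnit_zero (hx ▸ h.map φ)

lemma HasDetDivisors.exists_mul_mul_clear_pivot (hQ : ProjectivesFree Q)
    (hπ : Function.Surjective π) (hp : π p = 0) {r : ℕ} {δ : ℕ → ℕ}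
    {G : Matrix (Fin (r + 1)) (Fin (r + 1)) R} (hG : HasDetDivisors (fun j => p ^ δ j) G)
    (h1 : δ 1 = 0) (h : ∃ j ≤ r, δ (j + 1) ≠ 0) :
    ∃ U V : Matrix (Fin (r + 1)) (Fin (r + 1)) R, IsUnit U.det ∧ IsUnit V.det ∧
      (U * G * V) 0 0 = 1 ∧ (∀ j : Fin r, (U * G * V) 0 j.succ = 0) ∧
      ∀ i : Fin r, (U * G * V) i.succ 0 = 0 := by
  classical
  obtain ⟨hr, hpos⟩ := Nat.find_spec h
  obtain ⟨s, hs⟩ : ∃ s, Nat.find h = s + 1 :=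
    Nat.exists_eq_succ_of_ne_zero fun h0 => by simp [h0, h1] at hpos
  rw [hs] at hr hpos
  have hzero : δ (s + 1) = 0 := by
    by_contra hne
    exact Nat.find_min h (m := s) (by omega) ⟨by omega, hne⟩
  refine hQ.exists_mul_mul_clear_pivot hπ (s := s) ?_ (eq_bot_iff.2 ?_)
  · rw [hG.1 _ (by omega)]
    simp [hzero]
  · refine (Ideal.map_mono (hG.detIdeal_le (by omega))).trans ?_
    rw [Ideal.map_span, Set.image_singleton, map_pow, hp, zero_pow hpos,
      Ideal.span_singleton_zero]

theorem HasDetDivisors.rowDivisible [IsDomain R] (hQ : ProjectivesFree Q)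
    (hπ : Function.Surjective π) (hp0 : p ≠ 0) (hp : π p = 0) {r : ℕ} {δ : ℕ → ℕ}
    {G : Matrix (Fin r) (Fin r) R}
    (hG : HasDetDivisors (fun j => p ^ δ j) G) :
    RowDivisible (fun i : Fin r => p ^ (δ (i + 1) - δ i)) G := by
  induction r generalizing δ with
  | zero => exact rowDivisible_of_forall_dvd fun i => i.elim0
  | succ r ih =>
    rcases Nat.eq_zero_or_pos r with rfl | hr
    · refine rowDivisible_of_forall_dvd fun i j => ?_
      rw [Fin.fin_one_eq_zero i, Fin.fin_one_eq_zero j, ← det_fin_one G]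
      exact (pow_dvd_pow p (Nat.sub_le _ _)).trans hG.2
    have hp1 := not_isUnit_of_map_eq_zero hp
    obtain ⟨G, rfl⟩ := exists_eq_smul_of_forall_dvd (a := p ^ δ 1) (M := G) fun i j => by
      rw [← Ideal.mem_span_singleton, ← hG.1 1 (by omega), ← det_fin_one_of (G i j)]
      exact det_submatrix_mem_detIdeal G (fun _ => i) (fun _ => j)
    set δ' : ℕ → ℕ := fun j => δ j - j * δ 1 with hδ'
    have hG' : HasDetDivisors (fun j => p ^ δ' j) G := hG.of_smul hp0 hp1
    have hδ1 : δ' 1 = 0 := by simp [hδ']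
    refine RowDivisible.smul (d := fun i : Fin (r + 1) => p ^ (δ' (i + 1) - δ' i)) ?_ fun i => ?_
    · by_cases h : ∃ j ≤ r, δ' (j + 1) ≠ 0
      · obtain ⟨U, V, hU, hV, h00, hrow, hcol⟩ :=
          hG'.exists_mul_mul_clear_pivot hQ hπ hp hδ1 h
        exact .of_mul_mul hU hV (.of_submatrix_succ (by simp [hδ1]) hcol
          (ih ((hG'.mul_mul hU hV).submatrix_succ h00 hrow hcol)))
      · push Not at h
        exact rowDivisible_of_forall_dvd fun i j => by simp [h i (by omega)]
    · rw [← pow_add]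
      refine pow_dvd_pow p ?_
      have hle := hG.mul_le_of_smul hp0 hp1 i.2
      have hsucc : ((i : ℕ) + 1) * δ 1 = i * δ 1 + δ 1 := by ring
      simp only [hδ', hsucc]
      omega

end LocalRows

section LocalizationMker

variable {R Q : Type*} [CommRing R] [CommRing Q] {φ : R →+* Q} {p x : R}

lemma isCoprime_of_isUnit_map (hφ : Function.Surjective φ) (hker : RingHom.ker φ = Ideal.span {p})
    (h : IsUnit (φ x)) : IsCoprime x p := by
  obtain ⟨b, hb⟩ := h.exists_left_inv
  obtain ⟨b, rfl⟩ := hφ b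
  have hmem : b * x - 1 ∈ RingHom.ker φ := by
    rw [RingHom.mem_ker, map_sub, map_mul, hb, map_one, sub_self]
  rw [hker, Ideal.mem_span_singleton] at hmem
  obtain ⟨c, hc⟩ := hmem
  exact ⟨b, -c, by linear_combination hc⟩

variable (L : Type*) [CommRing L] [Algebra R L] [IsLocalization (MonoidHom.mker φ) L]

variable (φ) in
/-- The map `L →+* Q` induced by `φ : R →+* Q` on the localization `L` of `R` at the elements that
`φ` maps to `1`. -/
noncomputable def liftMker : L →+* Q :=
  IsLocalization.lift (M := MonoidHom.mker φ) (g := φ) fun y => by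
    rw [MonoidHom.mem_mker.1 y.2]
    exact isUnit_one

variable (φ) in
lemma liftMker_algebraMap (x : R) : liftMker φ L (algebraMap R L x) = φ x :=
  IsLocalization.lift_eq _ x

lemma liftMker_surjective (hφ : Function.Surjective φ) : Function.Surjective (liftMker φ L) :=
  fun y => (hφ y).imp' (algebraMap R L) fun x hx => (liftMker_algebraMap φ L x).trans hx

lemma isUnit_algebraMap_of_isUnit_map (hφ : Function.Surjective φ) (h : IsUnit (φ x)) :
    IsUnit (algebraMap R L x) := by
  obtain ⟨b, hb⟩ := h.exists_right_inv
  obtain ⟨b, rfl⟩ := hφ b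
  have hunit := IsLocalization.map_units L
    (⟨x * b, MonoidHom.mem_mker.2 ((map_mul φ x b).trans hb)⟩ : MonoidHom.mker φ)
  rw [map_mul] at hunit
  exact isUnit_of_mul_isUnit_left hunit

lemma isLocalHom_liftMker (hφ : Function.Surjective φ) : IsLocalHom (liftMker φ L) where
  map_nonunit y hy := by
    obtain ⟨x, s, hs⟩ := IsLocalization.exists_mk'_eq (MonoidHom.mker φ) y
    have hys : y * algebraMap R L s = algebraMap R L x := by
      rw [← hs, IsLocalization.mk'_spec]
    have hx : liftMker φ L y = φ x := by
      rw [← liftMker_algebraMap φ L x, ← hys, map_mul, liftMker_algebraMap,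
        MonoidHom.mem_mker.1 s.2, mul_one]
    have hunit := isUnit_algebraMap_of_isUnit_map L hφ (hx ▸ hy)
    rw [← hys] at hunit
    exact isUnit_of_mul_isUnit_left hunit

lemma pow_dvd_of_algebraMap_pow_dvd (hφ : Function.Surjective φ)
    (hker : RingHom.ker φ = Ideal.span {p}) {n : ℕ}
    (h : algebraMap R L p ^ n ∣ algebraMap R L x) : p ^ n ∣ x := by
  have hmem : algebraMap R L x ∈ (Ideal.span {p ^ n}).map (algebraMap R L) := by
    rw [Ideal.map_span, Set.image_singleton, map_pow]
    exact Ideal.mem_span_singleton.2 h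
  obtain ⟨s, hs, hsx⟩ :=
    (IsLocalization.algebraMap_mem_map_algebraMap_iff (MonoidHom.mker φ) L _ _).1 hmem
  have hcop : IsCoprime s p :=
    isCoprime_of_isUnit_map hφ hker (by rw [MonoidHom.mem_mker.1 hs]; exact isUnit_one)
  exact hcop.symm.pow_left.dvd_of_dvd_mul_left (Ideal.mem_span_singleton.1 hsx)

end LocalizationMker

section RowsModPrimePower

variable {R Q : Type*} [CommRing R] [CommRing Q] {φ : R →+* Q} {p : R}

lemma HasDetDivisors.map_localization (hφ : Function.Surjective φ) (hp : φ p = 0) {r : ℕ}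
    {δ : ℕ → ℕ} {c : ℕ → R} (hc : ∀ j ≤ r, IsCoprime (c j) p) {G : Matrix (Fin r) (Fin r) R}
    (hG : HasDetDivisors (fun j => p ^ δ j * c j) G) (L : Type*) [CommRing L] [Algebra R L]
    [IsLocalization (MonoidHom.mker φ) L] :
    HasDetDivisors (fun j => algebraMap R L p ^ δ j) (G.map (algebraMap R L)) := by
  have hspan : ∀ j ≤ r, (Ideal.span {p ^ δ j * c j}).map (algebraMap R L) =
      Ideal.span {algebraMap R L p ^ δ j} := fun j hj => by
    obtain ⟨u, v, huv⟩ := hc j hj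
    have hunit : IsUnit (φ (c j)) := IsUnit.of_mul_eq_one_right (φ u) <| by
      rw [← map_mul, ← map_one φ, ← huv, map_add, map_mul φ v, hp, mul_zero, add_zero]
    rw [Ideal.map_span, Set.image_singleton, map_mul, map_pow]
    exact Ideal.span_singleton_mul_right_unit (isUnit_algebraMap_of_isUnit_map L hφ hunit) _
  refine ⟨fun j hj => ?_, ?_⟩
  · rw [detIdeal_map, hG.1 j hj, hspan j hj.le]
  · rw [← Ideal.span_singleton_le_span_singleton, ← detIdeal_square, detIdeal_map,
      ← hspan r le_rfl]
    exact Ideal.map_mono (hG.detIdeal_le le_rfl)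

lemma mker_le_nonZeroDivisors [IsDomain R] [Nontrivial Q] :
    MonoidHom.mker φ ≤ nonZeroDivisors R :=
  fun x hx => mem_nonZeroDivisors_of_ne_zero fun h0 => by
    rw [MonoidHom.mem_mker, h0, map_zero] at hx
    exact zero_ne_one hx

variable [IsDomain R] [IsDomain Q]

lemma HasDetDivisors.exists_isCoprime_det_mul_dvd (hQ : ProjectivesFree Q)
    (hφ : Function.Surjective φ) (hker : RingHom.ker φ = Ideal.span {p}) (hp0 : p ≠ 0) {r : ℕ}
    {δ : ℕ → ℕ} {c : ℕ → R} (hc : ∀ j ≤ r, IsCoprime (c j) p) {G : Matrix (Fin r) (Fin r) R}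
    (hG : HasDetDivisors (fun j => p ^ δ j * c j) G) :
    ∃ N : Matrix (Fin r) (Fin r) R, IsCoprime N.det p ∧
      ∀ i j : Fin r, p ^ (δ (i + 1) - δ i) ∣ (N * G) i j := by
  have hp : φ p = 0 := by rw [← RingHom.mem_ker, hker]; exact Ideal.mem_span_singleton_self p
  let L := Localization (MonoidHom.mker φ)
  have hS := mker_le_nonZeroDivisors (φ := φ)
  have : IsDomain L := IsLocalization.isDomain_localization hS
  have hinj : Function.Injective (algebraMap R L) := IsLocalization.injective _ hS
  have := isLocalHom_liftMker L hφ
  obtain ⟨U, hU, hUd⟩ := (hG.map_localization hφ hp hc L).rowDivisible hQ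
    (liftMker_surjective L hφ) ((map_ne_zero_iff _ hinj).2 hp0)
    ((liftMker_algebraMap φ L p).trans hp)
  obtain ⟨d, hd, N, hN⟩ := exists_map_eq_smul_of_isLocalization (MonoidHom.mker φ) U
  refine ⟨N, ?_, fun i j => ?_⟩
  · have hdet : IsUnit (algebraMap R L N.det) := by
      rw [RingHom.map_det, RingHom.mapMatrix_apply, hN, det_smul]
      exact ((IsLocalization.map_units L ⟨d, hd⟩).pow _).mul hU
    exact isCoprime_of_isUnit_map hφ hker (liftMker_algebraMap φ L _ ▸ hdet.map (liftMker φ L))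
  · refine pow_dvd_of_algebraMap_pow_dvd L hφ hker ?_
    have hNG : (N * G).map (algebraMap R L) = algebraMap R L d • (U * G.map (algebraMap R L)) := by
      rw [Matrix.map_mul, hN, Matrix.smul_mul]
    exact (hUd i j).trans ((Dvd.intro_left _ rfl).trans (congrFun₂ hNG i j).symm.dvd)

theorem HasDetDivisors.exists_det_sub_one_dvd_mul_dvd (hQ : ProjectivesFree Q)
    (hφ : Function.Surjective φ) (hker : RingHom.ker φ = Ideal.span {p}) (hp0 : p ≠ 0) {r : ℕ}
    {δ : ℕ → ℕ} {c : ℕ → R} (hc : ∀ j ≤ r, IsCoprime (c j) p) {G : Matrix (Fin r) (Fin r) R}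
    (hG : HasDetDivisors (fun j => p ^ δ j * c j) G) (E : ℕ) :
    ∃ M : Matrix (Fin r) (Fin r) R, p ^ E ∣ M.det - 1 ∧
      ∀ i j : Fin r, p ^ (δ (i + 1) - δ i) ∣ (M * G) i j := by
  cases r with
  | zero => exact ⟨1, by simp, fun i => i.elim0⟩
  | succ r =>
    obtain ⟨N, hN, hNG⟩ := hG.exists_isCoprime_det_mul_dvd hQ hφ hker hp0 hc
    obtain ⟨b, b', hb⟩ := hN.pow_right (n := E)
    refine ⟨diagonal (Fin.cons b 1) * N, ?_, fun i j => ?_⟩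
    · rw [det_mul, det_diagonal, Fin.prod_univ_succ]
      simp only [Fin.cons_zero, Fin.cons_succ, Pi.one_apply, Finset.prod_const_one, mul_one]
      exact ⟨-b', by linear_combination hb⟩
    · rw [Matrix.mul_assoc, diagonal_mul]
      exact (hNG i j).mul_left _

end RowsModPrimePower

/-! ### Row divisibility over a polynomial ring with principal coefficients -/

section ChineseRemainder

variable {A : Type*} [CommRing A] [IsDomain A] [IsPrincipalIdealRing A] {T : Finset A} {k n : ℕ}

theorem exists_det_eq_one_forall_eq_add_pow_smul (hT : ∀ p ∈ T, Prime p)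
    (hcop : (T : Set A).Pairwise IsCoprime) (E : ℕ)
    {M : A → Matrix (Fin n) (Fin n) (MvPolynomial (Fin k) A)}
    (hM : ∀ p ∈ T, C p ^ (E + 1) ∣ (M p).det - 1) :
    ∃ U : Matrix (Fin n) (Fin n) (MvPolynomial (Fin k) A), U.det = 1 ∧
      ∀ p ∈ T, ∃ Y, U = M p + (C p ^ (E + 1) : MvPolynomial (Fin k) A) • Y := by
  classical
  induction T using Finset.induction_on with
  | empty => exact ⟨1, by simp, by simp⟩
  | insert p T hpT ih =>
    rw [Finset.coe_insert, Set.pairwise_insert_of_symm] at hcop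
    rw [Finset.forall_mem_insert] at hT hM
    obtain ⟨U, hU, hUM⟩ := ih hT.2 hcop.1 hM.2
    obtain ⟨V, ⟨hV, Z, hVZ⟩, Y, hVY⟩ := exists_isCongrSL_eq_add_pow_smul hT.1
      (q := ∏ q ∈ T, q ^ (E + 1)) (M := M p * U.adjugate)
      (IsCoprime.prod_left fun q hq =>
        (hcop.2 q hq fun h => hpT (h ▸ hq)).symm.pow_left) E
      (by rw [det_mul, det_adjugate, hU, one_pow, mul_one]; exact hM.1)
    refine ⟨V * U, by rw [det_mul, hV, hU, one_mul], (Finset.forall_mem_insert ..).2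
      ⟨⟨Y * U, ?_⟩, fun q hq => ?_⟩⟩
    · rw [hVY, Matrix.add_mul, Matrix.mul_assoc, adjugate_mul, hU, one_smul, Matrix.mul_one,
        Matrix.smul_mul]
    · obtain ⟨X, hX⟩ := hUM q hq
      obtain ⟨t, ht⟩ := Finset.dvd_prod_of_mem (fun q => q ^ (E + 1)) hq
      refine ⟨X + (C t : MvPolynomial (Fin k) A) • (Z * U), ?_⟩
      rw [hVZ, ht, Matrix.add_mul, Matrix.one_mul, Matrix.smul_mul, smul_add, ← add_assoc, ← hX,
        smul_smul, map_mul, map_pow]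

end ChineseRemainder

section PrimePowers

variable {A : Type*} [CommRing A] [IsDomain A] [IsPrincipalIdealRing A]

open UniqueFactorizationMonoid in
lemma exists_finset_prime_dvd_prod_pow_multiplicity {a : A} (ha : a ≠ 0) :
    ∃ T : Finset A, (∀ p ∈ T, Prime p) ∧ (T : Set A).Pairwise IsCoprime ∧
      ∀ b, b ∣ a → b ∣ ∏ p ∈ T, p ^ multiplicity p b := by
  classical
  let _ := UniqueFactorizationMonoid.strongNormalizationMonoid (α := A)
  have hprime : ∀ p ∈ (normalizedFactors a).toFinset, Prime p := fun p hp =>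
    prime_of_normalized_factor p (Multiset.mem_toFinset.1 hp)
  have hnorm : ∀ p ∈ (normalizedFactors a).toFinset, normalize p = p := fun p hp =>
    normalize_normalized_factor p (Multiset.mem_toFinset.1 hp)
  refine ⟨(normalizedFactors a).toFinset, hprime, fun p hp q hq hpq => ?_, fun b hb => ?_⟩
  · rw [(hprime p hp).irreducible.coprime_iff_not_dvd]
    refine fun hdvd => hpq ?_
    rw [← hnorm p hp, ← hnorm q hq, normalize_eq_normalize_iff_associated]
    exact (hprime p hp).irreducible.associated_of_dvd (hprime q hq).irreducible hdvd
  · have hb0 : b ≠ 0 := ne_zero_of_dvd_ne_zero ha hb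
    have hsub : (normalizedFactors b).toFinset ⊆ (normalizedFactors a).toFinset :=
      Multiset.toFinset_subset.2 (Multiset.subset_of_le
        ((dvd_iff_normalizedFactors_le_normalizedFactors hb0 ha).1 hb))
    refine (prod_normalizedFactors hb0).symm.dvd.trans (dvd_of_eq ?_)
    rw [Finset.prod_multiset_count_of_subset _ _ hsub]
    refine Finset.prod_congr rfl fun p hp => ?_
    rw [multiplicity_eq_count_normalizedFactors (hprime p hp).irreducible hb0, hnorm p hp]

variable {k r : ℕ} {h : ℕ → A} {F : Matrix (Fin r) (Fin r) (MvPolynomial (Fin k) A)}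

lemma HasDetDivisors.exists_pow_multiplicity_dvd (hh : ∀ i < r, h i ≠ 0)
    (hF : HasDetDivisors (fun j => C (∏ i ∈ Finset.range j, h i)) F) {p : A} (hp : Prime p)
    (E : ℕ) :
    ∃ M : Matrix (Fin r) (Fin r) (MvPolynomial (Fin k) A), C p ^ E ∣ M.det - 1 ∧
      ∀ i j : Fin r, C p ^ multiplicity p (h i) ∣ (M * F) i j := by
  have : (Ideal.span {p}).IsMaximal :=
    PrincipalIdealRing.isMaximal_of_irreducible hp.irreducible
  let _ : Field (A ⧸ Ideal.span {p}) := Ideal.Quotient.field _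
  have hfac : ∀ i < r, ∃ c, h i = p ^ multiplicity p (h i) * c ∧ IsCoprime c p := fun i hi => by
    obtain ⟨c, hc, hpc⟩ := (FiniteMultiplicity.of_prime_left hp
      (hh i hi)).exists_eq_pow_mul_and_not_dvd
    exact ⟨c, hc, (hp.irreducible.coprime_iff_not_dvd.2 hpc).symm⟩
  choose! c hc hcp using hfac
  have hprod : ∀ j ≤ r, C (σ := Fin k) (∏ i ∈ Finset.range j, h i) =
      C p ^ (∑ i ∈ Finset.range j, multiplicity p (h i)) * C (∏ i ∈ Finset.range j, c i) :=
    fun j hj => by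
      rw [← map_pow, ← map_mul, ← Finset.prod_pow_eq_pow_sum, ← Finset.prod_mul_distrib]
      exact congrArg C (Finset.prod_congr rfl fun i hi =>
        hc i ((Finset.mem_range.1 hi).trans_le hj))
  have hdiv : HasDetDivisors (fun j => C p ^ (∑ i ∈ Finset.range j, multiplicity p (h i)) *
      C (∏ i ∈ Finset.range j, c i)) F :=
    ⟨fun j hj => by simpa only [← hprod j hj.le] using hF.1 j hj,
      by simpa only [← hprod r le_rfl] using hF.2⟩
  obtain ⟨M, hM, hMF⟩ := hdiv.exists_det_sub_one_dvd_mul_dvd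
    (projectivesFree_mvPolynomial (A ⧸ Ideal.span {p}) k)
    (φ := MvPolynomial.map (Ideal.Quotient.mk (Ideal.span {p})))
    (MvPolynomial.map_surjective _ Ideal.Quotient.mk_surjective)
    (by rw [MvPolynomial.ker_map, Ideal.mk_ker, Ideal.map_span, Set.image_singleton])
    ((map_ne_zero_iff _ (C_injective _ _)).2 hp.ne_zero)
    (fun j hj => (IsCoprime.prod_left fun i hi =>
      hcp i ((Finset.mem_range.1 hi).trans_le hj)).map C) E
  exact ⟨M, hM, fun i j => by simpa [Finset.sum_range_succ] using hMF i j⟩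

theorem HasDetDivisors.exists_det_eq_one_C_dvd (hh : ∀ i < r, h i ≠ 0)
    (hF : HasDetDivisors (fun j => C (∏ i ∈ Finset.range j, h i)) F) :
    ∃ U : Matrix (Fin r) (Fin r) (MvPolynomial (Fin k) A), U.det = 1 ∧
      ∀ i j : Fin r, C (h i) ∣ (U * F) i j := by
  obtain ⟨T, hT, hcop, hdvd⟩ := exists_finset_prime_dvd_prod_pow_multiplicity
    (Finset.prod_ne_zero_iff.2 fun i hi => hh i (Finset.mem_range.1 hi))
  set E := T.sup fun p => Finset.univ.sup fun i : Fin r => multiplicity p (h i)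
  have hE : ∀ p ∈ T, ∀ i : Fin r, multiplicity p (h i) ≤ E + 1 := fun p hp i =>
    (Finset.le_sup (f := fun i : Fin r => multiplicity p (h i)) (Finset.mem_univ i)).trans
      ((Finset.le_sup (f := fun p => Finset.univ.sup fun i : Fin r => multiplicity p (h i))
        hp).trans E.le_succ)
  have hlocal : ∀ p ∈ T, _ := fun p hp => hF.exists_pow_multiplicity_dvd hh (hT p hp) (E + 1)
  choose! M hM hMF using hlocal
  obtain ⟨U, hU, hUM⟩ := exists_det_eq_one_forall_eq_add_pow_smul hT hcop E hM
  refine ⟨U, hU, fun i j => ?_⟩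
  have hprod := map_dvd (C (σ := Fin k))
    (hdvd (h i) (Finset.dvd_prod_of_mem h (Finset.mem_range.2 i.2)))
  rw [map_prod] at hprod
  simp only [map_pow] at hprod
  refine hprod.trans (Finset.prod_dvd_of_coprime
    (fun p hp q hq hpq => ((hcop hp hq hpq).map C).pow) fun p hp => ?_)
  obtain ⟨Y, hY⟩ := hUM p hp
  rw [hY, Matrix.add_mul, Matrix.smul_mul]
  exact dvd_add (hMF p hp i j) ((pow_dvd_pow _ (hE p hp i)).mul_right _)

end PrimePowers

/-! ### Splitting off a linear factor of the determinant -/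

section DerivationDet

variable {R B : Type*} [CommRing R] [CommRing B] [Algebra B R] (D : Derivation B R R)

lemma derivation_prod {ι : Type*} [DecidableEq ι] (s : Finset ι) (f : ι → R) :
    D (∏ i ∈ s, f i) = ∑ i ∈ s, D (f i) * ∏ j ∈ s.erase i, f j := by
  induction s using Finset.induction_on with
  | empty => simp
  | insert a s ha ih =>
    rw [Finset.prod_insert ha, Derivation.leibniz, ih, Finset.sum_insert ha, Finset.erase_insert ha,
      smul_eq_mul, smul_eq_mul, Finset.mul_sum, add_comm, mul_comm (∏ i ∈ s, f i)]
    refine congrArg _ (Finset.sum_congr rfl fun i hi => ?_)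
    rw [Finset.erase_insert_of_ne (ne_of_mem_of_not_mem hi ha).symm,
      Finset.prod_insert fun h => ha (Finset.mem_of_mem_erase h), mul_left_comm]

lemma derivation_det {n : Type*} [Fintype n] [DecidableEq n] (F : Matrix n n R) :
    D F.det = ∑ i, (F.updateRow i (D ∘ F i)).det := by
  have hdet : ∀ M : Matrix n n R, M.det =
      ∑ σ : Equiv.Perm n, ((Equiv.Perm.sign σ : ℤ) : R) * ∏ i, M i (σ i) := fun M => by
    rw [← det_transpose, det_apply']
    rfl
  simp only [hdet, map_sum]
  rw [Finset.sum_comm]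
  refine Finset.sum_congr rfl fun σ _ => ?_
  rw [Derivation.leibniz, Derivation.map_intCast, smul_zero, add_zero, smul_eq_mul,
    derivation_prod, Finset.mul_sum]
  refine Finset.sum_congr rfl fun i _ => congrArg _ ?_
  rw [← Finset.mul_prod_erase Finset.univ _ (Finset.mem_univ i), updateRow_self]
  exact congrArg _ (Finset.prod_congr rfl fun j hj => by
    rw [updateRow_ne (Finset.ne_of_mem_erase hj)])

variable {k : ℕ} (F : Matrix (Fin (k + 1)) (Fin (k + 1)) R)

lemma derivation_det_mem_detIdeal : D F.det ∈ detIdeal k F := by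
  rw [derivation_det]
  refine Ideal.sum_mem _ fun i _ => ?_
  rw [det_succ_row _ i]
  refine Ideal.sum_mem _ fun j _ => Ideal.mul_mem_left _ _ ?_
  rw [submatrix_updateRow_succAbove]
  exact det_submatrix_mem_detIdeal F _ _

lemma det_mem_detIdeal : F.det ∈ detIdeal k F :=
  detIdeal_succ_le k F (det_submatrix_mem_detIdeal F id id)

lemma adjugate_mem_detIdeal (i j : Fin (k + 1)) : F.adjugate i j ∈ detIdeal k F := by
  rw [adjugate_fin_succ_eq_det_submatrix]
  exact Ideal.mul_mem_left _ _ (det_submatrix_mem_detIdeal F _ _)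

variable {D F}

lemma detIdeal_eq_top_of_det_eq_unit_mul {g u : R} (hg : D g = 1) (hu : IsUnit u)
    (hF : F.det = u * g) : detIdeal k F = ⊤ := by
  have hgF : g ∈ detIdeal k F :=
    (Ideal.unit_mul_mem_iff_mem _ hu).1 (hF ▸ det_mem_detIdeal F)
  have hDF : u + g * D u ∈ detIdeal k F := by
    simpa only [hF, Derivation.leibniz, hg, smul_eq_mul, mul_one] using
      derivation_det_mem_detIdeal D F
  exact Ideal.eq_top_of_isUnit_mem _
    ((Ideal.add_mem_iff_left _ (Ideal.mul_mem_right _ _ hgF)).1 hDF) hu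

end DerivationDet

section CornerBlock

variable {R : Type*} [CommRing R] {k : ℕ}

/-- The square matrix with leading block `W`, last column `c` above the corner entry `b`, and
zeros in the rest of the last row. -/
def cornerBlock (W : Matrix (Fin k) (Fin k) R) (c : Fin k → R) (b : R) :
    Matrix (Fin (k + 1)) (Fin (k + 1)) R :=
  Matrix.of (Fin.snoc (fun i => Fin.snoc (W i) (c i)) (Fin.snoc 0 b))

section Entries

variable (W : Matrix (Fin k) (Fin k) R) (c : Fin k → R) (b : R) (i j : Fin k)

@[simp] lemma cornerBlock_castSucc_castSucc : cornerBlock W c b i.castSucc j.castSucc = W i j := by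
  simp [cornerBlock]

@[simp] lemma cornerBlock_castSucc_last : cornerBlock W c b i.castSucc (Fin.last k) = c i := by
  simp [cornerBlock]

@[simp] lemma cornerBlock_last_castSucc : cornerBlock W c b (Fin.last k) j.castSucc = 0 := by
  simp [cornerBlock]

@[simp] lemma cornerBlock_last_last : cornerBlock W c b (Fin.last k) (Fin.last k) = b := by
  simp [cornerBlock]

end Entries

lemma det_cornerBlock (W : Matrix (Fin k) (Fin k) R) (c : Fin k → R) (b : R) :
    (cornerBlock W c b).det = W.det * b := by
  have hW : (cornerBlock W c b).submatrix Fin.castSucc Fin.castSucc = W := by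
    ext i j
    simp
  rw [det_succ_row _ (Fin.last k), Fin.sum_univ_castSucc]
  simp [hW, ← two_mul, pow_mul, mul_comm W.det]

lemma cornerBlock_mul (W W' : Matrix (Fin k) (Fin k) R) (c c' : Fin k → R) (b b' : R) :
    cornerBlock W c b * cornerBlock W' c' b' =
      cornerBlock (W * W') (W *ᵥ c' + b' • c) (b * b') := by
  ext i j
  rw [Matrix.mul_apply, Fin.sum_univ_castSucc]
  cases i using Fin.lastCases <;> cases j using Fin.lastCases <;>
    simp [Matrix.mul_apply, mulVec, dotProduct, mul_comm]

lemma cornerBlock_diagonal (v : Fin k → R) (b : R) :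
    cornerBlock (diagonal v) 0 b = diagonal (Fin.snoc v b : Fin (k + 1) → R) := by
  ext i j
  cases i using Fin.lastCases <;> cases j using Fin.lastCases <;>
    simp [diagonal_apply, Fin.castSucc_ne_last, (Fin.castSucc_ne_last _).symm]

lemma exists_eq_diagonal_mul {m n : Type*} [Fintype m] [DecidableEq m] {v : m → R}
    {G : Matrix m n R} (h : ∀ i j, v i ∣ G i j) : ∃ W : Matrix m n R, G = diagonal v * W := by
  choose W hW using h
  exact ⟨Matrix.of W, by ext i j; exact (hW i j).trans (diagonal_mul _ _ _ _).symm⟩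

end CornerBlock

section Peel

variable {R : Type*} [CommRing R] {φ : R →+* R} {g : R}

/-- The endomorphism `φ` is a retraction of the ring onto a complement of the ideal `(g)`: it
kills `g` and is the identity modulo `g`. -/
def IsRetraction (φ : R →+* R) (g : R) : Prop :=
  φ g = 0 ∧ ∀ y, g ∣ y - φ y

lemma IsRetraction.apply_apply (h : IsRetraction φ g) (y : R) : φ (φ y) = φ y := by
  obtain ⟨t, ht⟩ := h.2 y
  have := congrArg φ ht
  rwa [map_sub, map_mul, h.1, zero_mul, sub_eq_zero, eq_comm] at this

lemma IsRetraction.dvd_iff (h : IsRetraction φ g) {y : R} : g ∣ y ↔ φ y = 0 := by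
  refine ⟨fun ⟨t, ht⟩ => by rw [ht, map_mul, h.1, zero_mul], fun hy => ?_⟩
  simpa only [hy, sub_zero] using h.2 y

lemma IsRetraction.map_map (h : IsRetraction φ g) {m n : Type*} (F : Matrix m n R) :
    (F.map φ).map φ = F.map φ := by
  ext i j
  exact h.apply_apply _

variable [IsDomain R]

lemma IsRetraction.prime (h : IsRetraction φ g) (hg : g ≠ 0) : Prime g :=
  ⟨hg, fun hu => zero_ne_one (α := R) (by
    simpa only [map_one, eq_comm] using h.dvd_iff.1 (hu.dvd : g ∣ 1)),
    fun a b hab => by simpa only [h.dvd_iff, map_mul, mul_eq_zero] using hab⟩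

lemma ProjectivesFree.exists_mul_last_row_eq_zero (hR : ProjectivesFree R) {k : ℕ}
    {F : Matrix (Fin (k + 1)) (Fin (k + 1)) R} (htop : detIdeal k F = ⊤) (hF : F.det = 0) :
    ∃ U : Matrix (Fin (k + 1)) (Fin (k + 1)) R, IsUnit U.det ∧ (U * F) (Fin.last k) = 0 := by
  obtain ⟨-, -, U, V, G, hU, hV, hUV, -⟩ := hR.exists_mul_mul_eq_padCols_padRows one_ne_zero
    (htop.trans Ideal.span_singleton_one.symm) (by
      rw [detIdeal_square, hF, Ideal.span_singleton_zero])
  refine ⟨U, hU, funext fun j => ?_⟩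
  rw [← mul_nonsing_inv_cancel_right V (U * F) hV, hUV, Matrix.mul_apply]
  exact Finset.sum_eq_zero fun i _ => by simp [padCols, padRows]

theorem ProjectivesFree.exists_eq_mul_cornerBlock_mul (hR : ProjectivesFree R)
    (hφ : IsRetraction φ g) {B : Type*} [CommRing B] [Algebra B R] {D : Derivation B R R}
    (hD : D g = 1) {k : ℕ} {F : Matrix (Fin (k + 1)) (Fin (k + 1)) R} {u : R} (hu : IsUnit u)
    (hF : F.det = u * g) :
    ∃ Q P : Matrix (Fin (k + 1)) (Fin (k + 1)) R, Q.map φ = Q ∧ IsUnit P.det ∧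
      F = Q * cornerBlock 1 0 g * P := by
  have hg : g ≠ 0 := by
    rintro rfl
    exact zero_ne_one ((map_zero D).symm.trans hD)
  obtain ⟨U, hU, hUF⟩ := hR.exists_mul_last_row_eq_zero (F := F.map φ)
    (by rw [detIdeal_map, detIdeal_eq_top_of_det_eq_unit_mul hD hu hF, Ideal.map_top])
    (by rw [← RingHom.mapMatrix_apply, ← RingHom.map_det, hF, map_mul, hφ.1, mul_zero])
  have hrow : ∀ j, g ∣ (U.map φ * F) (Fin.last k) j := fun j => hφ.dvd_iff.2 <| by
    have hmap : (U.map φ * F).map φ = (U * F.map φ).map φ := by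
      rw [Matrix.map_mul, Matrix.map_mul, hφ.map_map, hφ.map_map]
    simpa only [map_apply, hUF, Pi.zero_apply, map_zero] using congrFun₂ hmap (Fin.last k) j
  obtain ⟨P, hP⟩ : ∃ P : Matrix (Fin (k + 1)) (Fin (k + 1)) R,
      U.map φ * F = cornerBlock 1 0 g * P := by
    rw [← diagonal_one, cornerBlock_diagonal]
    refine exists_eq_diagonal_mul fun i j => ?_
    cases i using Fin.lastCases with
    | last => simpa using hrow j
    | cast i => simp
  have hdetU : (U.map φ).det = φ U.det := (RingHom.map_det φ U).symm
  refine ⟨(U⁻¹).map φ, P, hφ.map_map _, ?_, ?_⟩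
  · have hdet := congrArg det hP
    rw [det_mul, det_mul, det_cornerBlock, det_one, one_mul, hF, hdetU, ← mul_assoc,
      mul_comm] at hdet
    exact mul_left_cancel₀ hg hdet ▸ (hU.map φ).mul hu
  · rw [Matrix.mul_assoc, ← hP, ← Matrix.mul_assoc, ← Matrix.map_mul, nonsing_inv_mul _ hU,
      Matrix.map_one _ (map_zero φ) (map_one φ), Matrix.one_mul]

end Peel

/-! ### Square matrices of determinant `g * C h` -/

section TriangularMinors

variable {R : Type*} [CommRing R] {k : ℕ}

lemma eq_cornerBlock_of_submatrix_eq_padRows {G : Matrix (Fin (k + 1)) (Fin (k + 1)) R}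
    {N : Matrix (Fin k) (Fin k) R} (h : G.submatrix id Fin.castSucc = padRows (k + 1) N) :
    G = cornerBlock N (fun i => G i.castSucc (Fin.last k)) (G (Fin.last k) (Fin.last k)) := by
  ext i j
  cases j using Fin.lastCases with
  | last => cases i using Fin.lastCases <;> simp
  | cast j =>
    refine (congrFun₂ h i j).trans ?_
    cases i using Fin.lastCases <;> simp [padRows]

lemma prod_mul_mem_detIdeal_cornerBlock (v w : Fin k → R) (b : R) (i : Fin k) :
    (∏ s : Fin i, v (Fin.castLE i.2.le s)) * w i ∈
      detIdeal (i + 1) (cornerBlock (diagonal v) w b) := by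
  let e : Fin i → Fin k := Fin.castLE i.2.le
  have hinj : Function.Injective e := Fin.castLE_injective i.2.le
  have he : ∀ s, e s ≠ i := fun s => Fin.ne_of_val_ne s.2.ne
  have hminor : (cornerBlock (diagonal v) w b).submatrix
      (Fin.snoc (fun s => (e s).castSucc) i.castSucc : Fin (i + 1) → Fin (k + 1))
      (Fin.snoc (fun s => (e s).castSucc) (Fin.last k) : Fin (i + 1) → Fin (k + 1)) =
      cornerBlock (diagonal (v ∘ e)) (w ∘ e) (w i) := by
    ext s t
    cases s using Fin.lastCases <;> cases t using Fin.lastCases <;>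
      simp [diagonal_apply, (he _).symm, hinj.eq_iff]
  have hmem := det_submatrix_mem_detIdeal (cornerBlock (diagonal v) w b)
    (Fin.snoc (fun s => (e s).castSucc) i.castSucc : Fin (i + 1) → Fin (k + 1))
    (Fin.snoc (fun s => (e s).castSucc) (Fin.last k) : Fin (i + 1) → Fin (k + 1))
  rwa [hminor, det_cornerBlock, det_diagonal] at hmem

variable [IsDomain R] {g : R}

lemma dvd_of_detIdeal_cornerBlock_le (hg : Prime g) {H : ℕ → R} (hH0 : ∀ i < k, H i ≠ 0)
    (hgH : ∀ i < k, ¬ g ∣ H i) {w : Fin k → R} {b : R}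
    (hd : ∀ j ≤ k, detIdeal j (cornerBlock (diagonal fun i : Fin k => H i) (g • w) b) ≤
      Ideal.span {∏ t ∈ Finset.range j, H t}) (i : Fin k) : H i ∣ w i := by
  have hdvd := Ideal.mem_span_singleton.1 (hd (i + 1) i.2 (prod_mul_mem_detIdeal_cornerBlock
    (fun i : Fin k => H i) (g • w) b i))
  simp only [Fin.val_castLE] at hdvd
  rw [Fin.prod_univ_eq_prod_range, Finset.prod_range_succ, mul_dvd_mul_iff_left
    (Finset.prod_ne_zero_iff.2 fun t ht => hH0 t ((Finset.mem_range.1 ht).trans i.2))] at hdvd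
  exact (hg.left_dvd_or_dvd_right_of_dvd_mul hdvd).resolve_left (hgH i i.2)

lemma not_dvd_of_detIdeal_eq_span (hg : Prime g) {F : Matrix (Fin (k + 1)) (Fin (k + 1)) R}
    {d c : R} (hd : detIdeal k F = Ideal.span {d}) (hF : F.det = g * c) (hc : ¬ g ∣ c) :
    ¬ g ∣ d := by
  intro hgd
  obtain ⟨Y, hY⟩ := exists_eq_smul_of_forall_dvd (M := F.adjugate) fun i j =>
    hgd.trans (Ideal.mem_span_singleton.1 (hd ▸ adjugate_mem_detIdeal F i j))
  have hdet : g ^ (k + 1) * Y.det = (g * c) ^ k := by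
    simpa [hY, hF, det_smul] using det_adjugate F
  rw [mul_pow, pow_succ, mul_assoc] at hdet
  exact hc (hg.dvd_of_dvd_pow ⟨_, (mul_left_cancel₀ (pow_ne_zero k hg.ne_zero) hdet).symm⟩)

end TriangularMinors

lemma exists_prod_range_eq_of_dvd_succ {M : Type*} [CommMonoid M] {a : ℕ → M} {n : ℕ}
    (h0 : a 0 = 1) (h : ∀ j < n, a j ∣ a (j + 1)) :
    ∃ q : ℕ → M, ∀ j ≤ n, ∏ i ∈ Finset.range j, q i = a j := by
  choose! q hq using h
  refine ⟨q, fun j hj => ?_⟩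
  induction j with
  | zero => rw [Finset.prod_range_zero, h0]
  | succ j ih => rw [Finset.prod_range_succ, ih (Nat.le_of_succ_le hj), ← hq j hj]

lemma C_dvd_C_iff {σ A : Type*} [CommSemiring A] {a b : A} :
    (C a : MvPolynomial σ A) ∣ C b ↔ a ∣ b := by
  refine ⟨fun h => ?_, map_dvd C⟩
  simpa only [constantCoeff_C] using map_dvd constantCoeff h

section InvariantFactors

variable {A : Type*} [CommRing A] [IsDomain A] {σ : Type*} {g : MvPolynomial σ A} {k : ℕ}
  {F : Matrix (Fin (k + 1)) (Fin (k + 1)) (MvPolynomial σ A)} {h : A}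

lemma dvd_C_of_detIdeal_eq_span (hg : Prime g) (hgC : ∀ a : A, a ≠ 0 → ¬ g ∣ C a) (hh : h ≠ 0)
    (hdet : Associated (g * C h) F.det) {d : MvPolynomial σ A}
    (hd : detIdeal k F = Ideal.span {d}) : d ∣ C h := by
  have hdF : d ∣ F.det := Ideal.mem_span_singleton.1 (hd ▸ det_mem_detIdeal F)
  have hdvd : d ∣ g * C h := hdF.trans hdet.symm.dvd
  obtain ⟨u, hu⟩ := hdet
  refine (hg.left_dvd_or_dvd_right_of_dvd_mul hdvd).resolve_left
    (not_dvd_of_detIdeal_eq_span hg hd (hu.symm.trans (mul_assoc _ _ _)) ?_)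
  rw [u.isUnit.dvd_mul_right]
  exact hgC h hh

lemma exists_detIdeal_eq_span_C_prod (hg : Prime g) (hgC : ∀ a : A, a ≠ 0 → ¬ g ∣ C a)
    (hh : h ≠ 0) (hdet : Associated (g * C h) F.det)
    (hF : ∀ j ≤ k, ∃ d, detIdeal j F = Ideal.span {d}) :
    ∃ H : ℕ → A, (∀ j ≤ k, detIdeal j F = Ideal.span {C (∏ i ∈ Finset.range j, H i)}) ∧
      ∏ i ∈ Finset.range (k + 1), H i = h := by
  have hdiv : ∀ j ≤ k, ∃ a, detIdeal j F = Ideal.span {C a} ∧ a ∣ h ∧ (j = 0 → a = 1) := by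
    intro j hj
    obtain rfl | hj0 := eq_or_ne j 0
    · exact ⟨1, by rw [detIdeal_zero, C_1, Ideal.span_singleton_one], one_dvd h, fun _ => rfl⟩
    obtain ⟨d, hd⟩ := hF j hj
    obtain ⟨e, he⟩ := hF k le_rfl
    have hde : d ∣ e := by
      rw [← Ideal.span_singleton_le_span_singleton, ← hd, ← he]
      exact detIdeal_antitone F hj
    obtain ⟨a, ha, rfl⟩ := (dvd_C_iff_exists hh).1
      (hde.trans (dvd_C_of_detIdeal_eq_span hg hgC hh hdet he))
    exact ⟨a, hd, ha, fun h => absurd h hj0⟩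
  choose! a ha hah ha0 using hdiv
  have hstep : ∀ j < k + 1, (if j ≤ k then a j else h) ∣ if j + 1 ≤ k then a (j + 1) else h := by
    intro j hj
    rw [if_pos (Nat.le_of_lt_succ hj)]
    split_ifs with hjk
    · rw [← C_dvd_C_iff (σ := σ), ← Ideal.span_singleton_le_span_singleton, ← ha _ hjk,
        ← ha j (Nat.le_of_succ_le hjk)]
      exact detIdeal_succ_le j F
    · exact hah j (Nat.le_of_lt_succ hj)
  obtain ⟨H, hH⟩ := exists_prod_range_eq_of_dvd_succ (a := fun j => if j ≤ k then a j else h)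
    (by rw [if_pos k.zero_le, ha0 0 k.zero_le rfl]) hstep
  refine ⟨H, fun j hj => ?_, (hH (k + 1) le_rfl).trans (if_neg (Nat.not_succ_le_self k))⟩
  rw [hH j (hj.trans k.le_succ), if_pos hj, ha j hj]

end InvariantFactors

section TallMatrix

variable {A : Type*} [CommRing A] [IsDomain A] [IsPrincipalIdealRing A] {n r k : ℕ} {h : ℕ → A}

lemma HasDetDivisors.exists_mul_eq_diagonal_mul
    {F : Matrix (Fin r) (Fin r) (MvPolynomial (Fin n) A)} (hh : ∀ i < r, h i ≠ 0)
    (hF : HasDetDivisors (fun j => C (∏ i ∈ Finset.range j, h i)) F) :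
    ∃ U W : Matrix (Fin r) (Fin r) (MvPolynomial (Fin n) A), U.det = 1 ∧
      U * F = diagonal (fun i : Fin r => C (h i)) * W ∧
      F.det = C (∏ i ∈ Finset.range r, h i) * W.det := by
  obtain ⟨U, hU, hdvd⟩ := hF.exists_det_eq_one_C_dvd hh
  obtain ⟨W, hW⟩ := exists_eq_diagonal_mul hdvd
  refine ⟨U, W, hU, hW, ?_⟩
  have hdet := congrArg det hW
  rwa [det_mul, hU, one_mul, det_mul, det_diagonal,
    Fin.prod_univ_eq_prod_range fun i => C (h i), ← map_prod] at hdet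

lemma ProjectivesFree.exists_mul_eq_padRows_diagonal_mul
    (hR : ProjectivesFree (MvPolynomial (Fin n) A))
    {M : Matrix (Fin (k + 1)) (Fin k) (MvPolynomial (Fin n) A)} (hh : ∀ i < k, h i ≠ 0)
    (hM : ∀ j ≤ k, detIdeal j M = Ideal.span {C (∏ i ∈ Finset.range j, h i)}) :
    ∃ (U : Matrix (Fin (k + 1)) (Fin (k + 1)) (MvPolynomial (Fin n) A))
      (W : Matrix (Fin k) (Fin k) (MvPolynomial (Fin n) A)), IsUnit U.det ∧ IsUnit W.det ∧
      U * M = padRows (k + 1) (diagonal (fun i : Fin k => C (h i)) * W) := by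
  have hne : (C (∏ i ∈ Finset.range k, h i) : MvPolynomial (Fin n) A) ≠ 0 :=
    C_eq_zero.not.2 (Finset.prod_ne_zero_iff.2 fun i hi => hh i (Finset.mem_range.1 hi))
  obtain ⟨-, -, U, V, G, hU, hV, hUV, hG⟩ := hR.exists_mul_mul_eq_padCols_padRows hne (hM k le_rfl)
    (detIdeal_eq_bot_of_card_cols_lt (by simp) M)
  have hpad : padCols k (padRows (k + 1) G) = padRows (k + 1) G := by
    ext i j
    simp [padCols]
  have hGd : HasDetDivisors (fun j => C (∏ i ∈ Finset.range j, h i)) G :=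
    ⟨fun j hj => by rw [hG, hM j hj.le], by
      rw [← Ideal.mem_span_singleton, ← hM k le_rfl, ← hG, detIdeal_square]
      exact Ideal.mem_span_singleton_self _⟩
  obtain ⟨U₁, W, hU₁, hW, hdet⟩ := hGd.exists_mul_eq_diagonal_mul hh
  have hWu : IsUnit W.det := by
    have hspan := (detIdeal_square G).symm.trans ((hG k).trans (hM k le_rfl))
    obtain ⟨u, hu⟩ := Ideal.span_singleton_eq_span_singleton.1 hspan
    rw [hdet, mul_assoc] at hu
    exact IsUnit.of_mul_eq_one _ (mul_left_cancel₀ hne (hu.trans (mul_one _).symm))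
  obtain ⟨U₂, hU₂, hpadMul⟩ := exists_det_eq_and_mul_padRows k.le_succ U₁
  refine ⟨U₂ * U, W * V⁻¹, ?_, ?_, ?_⟩
  · rwa [det_mul, hU₂, hU₁, one_mul]
  · rw [det_mul]
    exact hWu.mul (isUnit_nonsing_inv_det _ hV)
  · rw [hpad] at hUV
    rw [Matrix.mul_assoc, ← mul_nonsing_inv_cancel_right V (U * M) hV, hUV, padRows_mul, hpadMul,
      ← Matrix.mul_assoc, hW, Matrix.mul_assoc]

end TallMatrix

section SquareNormalForm

variable {R : Type*} [CommRing R]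

/-- The square matrix `F` is equivalent to a diagonal matrix, the products of whose leading entries
generate the determinantal ideals of `F`. -/
def HasSmithFactorization {r : ℕ} (F : Matrix (Fin r) (Fin r) R) : Prop :=
  ∃ (U V : Matrix (Fin r) (Fin r) R) (Φ : ℕ → R), IsUnit U.det ∧ IsUnit V.det ∧
    F = U * diagonal (fun i : Fin r => Φ i) * V ∧
    ∀ j ≤ r, detIdeal j F = Ideal.span {∏ i ∈ Finset.range j, Φ i}

lemma HasSmithFactorization.map {S : Type*} [CommRing S] {r : ℕ} {F : Matrix (Fin r) (Fin r) R}
    (hF : HasSmithFactorization F) (f : R →+* S) : HasSmithFactorization (F.map f) := by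
  obtain ⟨U, V, Φ, hU, hV, hUV, hd⟩ := hF
  refine ⟨U.map f, V.map f, f ∘ Φ, ?_, ?_, ?_, fun j hj => ?_⟩
  · exact RingHom.map_det f U ▸ hU.map f
  · exact RingHom.map_det f V ▸ hV.map f
  · rw [hUV, Matrix.map_mul, Matrix.map_mul, diagonal_map (map_zero f)]
    rfl
  · rw [detIdeal_map, hd j hj, Ideal.map_span, Set.image_singleton, map_prod]
    rfl

lemma HasSmithFactorization.of_cornerBlock {k : ℕ} {F U V : Matrix (Fin (k + 1)) (Fin (k + 1)) R}
    {v : ℕ → R} {b : R} (hU : IsUnit U.det) (hV : IsUnit V.det)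
    (hF : F = U * cornerBlock (diagonal fun i : Fin k => v i) 0 b * V)
    (hd : ∀ j ≤ k, detIdeal j F = Ideal.span {∏ i ∈ Finset.range j, v i}) :
    HasSmithFactorization F := by
  let Φ : ℕ → R := fun i => if i < k then v i else b
  have hΦ : diagonal (fun i : Fin (k + 1) => Φ i) =
      cornerBlock (diagonal fun i : Fin k => v i) 0 b := by
    rw [cornerBlock_diagonal]
    refine congrArg diagonal (funext fun i => ?_)
    cases i using Fin.lastCases <;> simp [Φ]
  refine ⟨U, V, Φ, hU, hV, hΦ ▸ hF, fun j hj => ?_⟩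
  obtain rfl | hj := eq_or_lt_of_le hj
  · rw [hF, detIdeal_mul_isUnit _ _ hV, detIdeal_isUnit_mul _ hU, ← hΦ, detIdeal_square,
      det_diagonal, Fin.prod_univ_eq_prod_range]
  · rw [hd j (Nat.le_of_lt_succ hj)]
    exact congrArg (fun x => Ideal.span {x}) (Finset.prod_congr rfl fun i hi =>
      (if_pos ((Finset.mem_range.1 hi).trans_le (Nat.le_of_lt_succ hj))).symm)

lemma mul_cornerBlock_one_map {φ : R →+* R} {g : R} (hg : φ g = 0) {k : ℕ}
    {M : Matrix (Fin (k + 1)) (Fin (k + 1)) R} (hM : M.map φ = M) :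
    (M * cornerBlock 1 0 g).map φ = padCols (k + 1) (M.submatrix id Fin.castSucc) := by
  rw [Matrix.map_mul, hM, ← diagonal_one, cornerBlock_diagonal, diagonal_map (map_zero φ)]
  ext i j
  rw [mul_diagonal]
  cases j using Fin.lastCases <;> simp [padCols, hg]

variable {A : Type*} [CommRing A] [IsDomain A] [IsPrincipalIdealRing A] {n k : ℕ}
  {φ : MvPolynomial (Fin n) A →+* MvPolynomial (Fin n) A} {g : MvPolynomial (Fin n) A}

theorem IsRetraction.exists_mul_cornerBlock_eq (hR : ProjectivesFree (MvPolynomial (Fin n) A))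
    (hφ : IsRetraction φ g) (hφC : ∀ a, φ (C a) = C a) (hg : Prime g)
    {M : Matrix (Fin (k + 1)) (Fin (k + 1)) (MvPolynomial (Fin n) A)} (hM : M.map φ = M)
    {H : ℕ → A} (hH : ∀ i < k, H i ≠ 0) (hd : ∀ j ≤ k, detIdeal j (M * cornerBlock 1 0 g) =
      Ideal.span {C (∏ i ∈ Finset.range j, H i)}) :
    ∃ U V b, IsUnit U.det ∧ IsUnit V.det ∧ M * cornerBlock 1 0 g =
      U * cornerBlock (diagonal fun i : Fin k => C (H i)) 0 b * V := by
  set M₁ := M.submatrix id (Fin.castSucc (n := k))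
  have hM₁ : ∀ j ≤ k, detIdeal j M₁ = Ideal.span {C (∏ i ∈ Finset.range j, H i)} := fun j hj => by
    rw [← detIdeal_padCols k.le_succ M₁, Nat.succ_eq_add_one, ← mul_cornerBlock_one_map hφ.1 hM,
      detIdeal_map, hd j hj, Ideal.map_span, Set.image_singleton, hφC]
  obtain ⟨U, W, hU, hW, hUM⟩ := hR.exists_mul_eq_padRows_diagonal_mul hH hM₁
  obtain ⟨w, b, hw⟩ : ∃ w b, U * M =
      cornerBlock (diagonal (fun i : Fin k => C (H i)) * W) w b :=
    ⟨_, _, eq_cornerBlock_of_submatrix_eq_padRows hUM⟩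
  have hfac : U * (M * cornerBlock 1 0 g) =
      cornerBlock (diagonal fun i : Fin k => C (H i)) (g • w) (b * g) * cornerBlock W 0 1 := by
    rw [← Matrix.mul_assoc, hw, cornerBlock_mul, cornerBlock_mul]
    simp
  have hWu : IsUnit (cornerBlock W 0 1).det := by rwa [det_cornerBlock, mul_one]
  have hdvd : ∀ i : Fin k, C (H i) ∣ w i := dvd_of_detIdeal_cornerBlock_le hg (b := b * g)
    (H := fun i => C (H i)) (fun i hi => C_eq_zero.not.2 (hH i hi))
    (fun i hi => by rw [hφ.dvd_iff, hφC, C_eq_zero]; exact hH i hi) fun j hj => by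
      rw [← detIdeal_mul_isUnit j _ hWu, ← hfac, detIdeal_isUnit_mul j hU, hd j hj, map_prod]
  choose c hc using hdvd
  refine ⟨U⁻¹, cornerBlock 1 (g • c) 1 * cornerBlock W 0 1, b * g,
    isUnit_nonsing_inv_det _ hU, ?_, ?_⟩
  · rwa [det_mul, det_cornerBlock, det_one, mul_one, one_mul]
  · have hclear : cornerBlock (diagonal fun i : Fin k => C (H i)) (g • w) (b * g) =
        cornerBlock (diagonal fun i : Fin k => C (H i)) 0 (b * g) * cornerBlock 1 (g • c) 1 := by
      rw [cornerBlock_mul, Matrix.mul_one, mul_one, smul_zero, add_zero]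
      congr 1
      ext1 i
      rw [mulVec_diagonal, Pi.smul_apply, Pi.smul_apply, hc, smul_eq_mul, smul_eq_mul,
        mul_left_comm]
    rw [← nonsing_inv_mul_cancel_left U (M * _) hU, hfac, hclear]
    simp only [Matrix.mul_assoc]

lemma IsRetraction.exists_mul_eq_mul_cornerBlock_one_mul
    (hR : ProjectivesFree (MvPolynomial (Fin n) A)) (hφ : IsRetraction φ g)
    (hφC : ∀ a, φ (C a) = C a) {B : Type*} [CommRing B] [Algebra B (MvPolynomial (Fin n) A)]
    {D : Derivation B (MvPolynomial (Fin n) A) (MvPolynomial (Fin n) A)} (hD : D g = 1)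
    {F : Matrix (Fin (k + 1)) (Fin (k + 1)) (MvPolynomial (Fin n) A)} {H : ℕ → A}
    (hH : ∀ i < k + 1, H i ≠ 0) (hF : HasDetDivisors (fun j => C (∏ i ∈ Finset.range j, H i)) F)
    (hdet : Associated (g * C (∏ i ∈ Finset.range (k + 1), H i)) F.det) :
    ∃ U M P : Matrix (Fin (k + 1)) (Fin (k + 1)) (MvPolynomial (Fin n) A),
      IsUnit U.det ∧ IsUnit P.det ∧ M.map φ = M ∧ U * F = M * cornerBlock 1 0 g * P := by
  obtain ⟨U, F₁, hU, hUF, hdetF⟩ := hF.exists_mul_eq_diagonal_mul hH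
  obtain ⟨u, hu⟩ := hdet
  have hprod : (C (∏ i ∈ Finset.range (k + 1), H i) : MvPolynomial (Fin n) A) ≠ 0 :=
    C_eq_zero.not.2 (Finset.prod_ne_zero_iff.2 fun i hi => hH i (Finset.mem_range.1 hi))
  have hF₁ : F₁.det = u * g := mul_left_cancel₀ hprod (by
    rw [← hdetF, ← hu]; ring)
  obtain ⟨Q, P, hQ, hP, rfl⟩ := hR.exists_eq_mul_cornerBlock_mul hφ hD u.isUnit hF₁
  refine ⟨U, diagonal (fun i : Fin (k + 1) => C (H i)) * Q, P, hU ▸ isUnit_one, hP, ?_, ?_⟩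
  · rw [Matrix.map_mul, hQ, diagonal_map (map_zero φ)]
    simp only [hφC]
  · rw [hUF]
    simp only [Matrix.mul_assoc]

theorem hasSmithFactorization_of_associated_mul_C (hR : ProjectivesFree (MvPolynomial (Fin n) A))
    (hφ : IsRetraction φ g) (hφC : ∀ a, φ (C a) = C a)
    {B : Type*} [CommRing B] [Algebra B (MvPolynomial (Fin n) A)]
    {D : Derivation B (MvPolynomial (Fin n) A) (MvPolynomial (Fin n) A)} (hD : D g = 1)
    {F : Matrix (Fin (k + 1)) (Fin (k + 1)) (MvPolynomial (Fin n) A)} {h : A} (hh : h ≠ 0)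
    (hdet : Associated (g * C h) F.det) (hF : ∀ j ≤ k, ∃ d, detIdeal j F = Ideal.span {d}) :
    HasSmithFactorization F := by
  have hg : Prime g := hφ.prime (by rintro rfl; exact zero_ne_one ((map_zero D).symm.trans hD))
  have hgC : ∀ a : A, a ≠ 0 → ¬ g ∣ C a := fun a ha => by
    rwa [hφ.dvd_iff, hφC, C_eq_zero]
  obtain ⟨H, hH, rfl⟩ := exists_detIdeal_eq_span_C_prod hg hgC hh hdet hF
  have hH0 : ∀ i < k + 1, H i ≠ 0 := fun i hi =>
    Finset.prod_ne_zero_iff.1 hh i (Finset.mem_range.2 hi)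
  have hdiv : HasDetDivisors (fun j => C (∏ i ∈ Finset.range j, H i)) F :=
    ⟨fun j hj => hH j (Nat.le_of_lt_succ hj), (Dvd.intro_left g rfl).trans hdet.dvd⟩
  obtain ⟨U₁, M, P, hU₁, hP, hM, hFM⟩ :=
    hφ.exists_mul_eq_mul_cornerBlock_one_mul hR hφC hD hH0 hdiv hdet
  have hd : ∀ j ≤ k, detIdeal j (M * cornerBlock 1 0 g) = _ := fun j hj => by
    rw [← detIdeal_mul_isUnit j _ hP, ← hFM, detIdeal_isUnit_mul j hU₁, hH j hj]
  obtain ⟨U₂, V, b, hU₂, hV, hdiag⟩ := hφ.exists_mul_cornerBlock_eq hR hφC hg hM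
    (fun i hi => hH0 i (hi.trans k.lt_succ_self)) hd
  have hVP : IsUnit (V * P).det := by
    rw [det_mul]
    exact hV.mul hP
  have hUU : IsUnit (U₁⁻¹ * U₂).det := by
    rw [det_mul]
    exact (isUnit_nonsing_inv_det _ hU₁).mul hU₂
  refine .of_cornerBlock (v := fun i => C (H i)) (b := b) hUU hVP ?_ fun j hj => ?_
  · rw [← nonsing_inv_mul_cancel_left U₁ F hU₁, hFM, hdiag]
    simp only [Matrix.mul_assoc]
  · rw [hH j hj, map_prod]

end SquareNormalForm

/-! ### Determinant `(z₁ - f) * h` over a field -/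

section Substitution

variable {σ A : Type*} [CommRing A] {i : σ} {f : MvPolynomial σ A}

lemma pderiv_X_sub_of_mem_supported (hf : f ∈ supported A {i}ᶜ) : pderiv i (X i - f) = 1 := by
  rw [map_sub, pderiv_X_self,
    pderiv_eq_zero_of_notMem_vars fun hi => mem_supported.1 hf hi rfl, sub_zero]

variable [DecidableEq σ]

lemma bind₁_update_X_of_mem_supported (hf : f ∈ supported A {i}ᶜ) :
    bind₁ (Function.update X i f) f = f := by
  refine hom_congr_vars (f₁ := (bind₁ (Function.update X i f)).toRingHom) (f₂ := RingHom.id _)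
    (by ext; simp) (fun j hj _ => ?_) rfl
  have hji : j ≠ i := mem_supported.1 hf hj
  simp [hji]

lemma isRetraction_bind₁_update_X (hf : f ∈ supported A {i}ᶜ) :
    IsRetraction (bind₁ (Function.update X i f)).toRingHom (X i - f) := by
  refine ⟨?_, fun y => ?_⟩
  · simp [bind₁_update_X_of_mem_supported hf]
  · rw [← Ideal.mem_span_singleton, ← Ideal.Quotient.mk_eq_mk_iff_sub_mem]
    have hcomp : Ideal.Quotient.mk (Ideal.span {X i - f}) =
        (Ideal.Quotient.mk (Ideal.span {X i - f})).comp
          (bind₁ (Function.update X i f)).toRingHom := by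
      refine MvPolynomial.ringHom_ext (fun a => by simp) fun j => ?_
      obtain rfl | hj := eq_or_ne j i
      · simp [Ideal.Quotient.mk_eq_mk_iff_sub_mem]
      · simp [hj]
    exact RingHom.congr_fun hcomp y

end Substitution

section LastVariable

variable (K : Type*) [Field K] (N : ℕ)

/-- `K[z₁, …, z_{N+2}]` as `K[z_{N+2}][z₁, …, z_{N+1}]`. -/
noncomputable def lastVarEquiv :
    MvPolynomial (Fin (N + 2)) K ≃ₐ[K] MvPolynomial (Fin (N + 1)) (Polynomial K) :=
  (renameEquiv K finSuccEquivLast).trans (optionEquivRight K _)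

variable {K N}

lemma lastVarEquiv_X_castSucc (i : Fin (N + 1)) : lastVarEquiv K N (X i.castSucc) = X i := by
  simp [lastVarEquiv]

lemma lastVarEquiv_X_last : lastVarEquiv K N (X (Fin.last (N + 1))) = C Polynomial.X := by
  simp [lastVarEquiv]

lemma exists_lastVarEquiv_eq_C {h : MvPolynomial (Fin (N + 2)) K}
    (hh : h ∈ supported K {Fin.last (N + 1)}) : ∃ h', lastVarEquiv K N h = C h' := by
  suffices hle : supported K {Fin.last (N + 1)} ≤
      (IsScalarTower.toAlgHom K (Polynomial K)
        (MvPolynomial (Fin (N + 1)) (Polynomial K))).range.comap (lastVarEquiv K N).toAlgHom by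
    obtain ⟨h', hh'⟩ := hle hh
    exact ⟨h', hh'.symm⟩
  rw [supported, Set.image_singleton]
  refine Algebra.adjoin_le (Set.singleton_subset_iff.2 ?_)
  exact ⟨Polynomial.X, lastVarEquiv_X_last.symm⟩

lemma lastVarEquiv_mem_supported {f : MvPolynomial (Fin (N + 2)) K}
    (hf : f ∈ supported K {t : Fin (N + 2) | (t : ℕ) ≠ 0}) :
    lastVarEquiv K N f ∈ supported (Polynomial K) {0}ᶜ := by
  suffices hle : supported K {t : Fin (N + 2) | (t : ℕ) ≠ 0} ≤
      ((supported (Polynomial K) {0}ᶜ).restrictScalars K).comap (lastVarEquiv K N).toAlgHom from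
    hle hf
  refine Algebra.adjoin_le ?_
  rintro _ ⟨t, ht, rfl⟩
  change lastVarEquiv K N (X t) ∈ supported (Polynomial K) {0}ᶜ
  cases t using Fin.lastCases with
  | last =>
    rw [lastVarEquiv_X_last]
    exact (supported (Polynomial K) {0}ᶜ).algebraMap_mem _
  | cast i =>
    rw [lastVarEquiv_X_castSucc]
    refine X_mem_supported.2 ?_
    rintro rfl
    exact ht rfl

theorem hasSmithFactorization_of_associated_det {k : ℕ}
    {F : Matrix (Fin (k + 1)) (Fin (k + 1)) (MvPolynomial (Fin (N + 2)) K)}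
    {f h : MvPolynomial (Fin (N + 2)) K}
    (hf : f ∈ supported K {t : Fin (N + 2) | (t : ℕ) ≠ 0})
    (hh : h ∈ supported K {Fin.last (N + 1)})
    (hF0 : F.det ≠ 0) (hdet : Associated ((X 0 - f) * h) F.det)
    (hF : ∀ j ≤ k, ∃ d, detIdeal j F = Ideal.span {d}) : HasSmithFactorization F := by
  let ε : MvPolynomial (Fin (N + 2)) K ≃+* MvPolynomial (Fin (N + 1)) (Polynomial K) :=
    (lastVarEquiv K N).toRingEquiv
  obtain ⟨h', hh'⟩ : ∃ h', ε h = C h' := exists_lastVarEquiv_eq_C hh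
  have hf' : ε f ∈ supported (Polynomial K) {0}ᶜ := lastVarEquiv_mem_supported hf
  have hε0 : ε (X 0) = X 0 := lastVarEquiv_X_castSucc 0
  have hdet' : Associated ((X 0 - ε f) * C h') (F.map ε.toRingHom).det := by
    have hmap := hdet.map ε
    rw [map_mul, map_sub, hε0, hh'] at hmap
    exact (RingHom.map_det ε.toRingHom F) ▸ hmap
  have hh0 : h' ≠ 0 := by
    rintro rfl
    rw [map_zero, EmbeddingLike.map_eq_zero_iff] at hh'
    rw [hh', mul_zero] at hdet
    exact hF0 (hdet.eq_zero_iff.1 rfl)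
  have hε : (F.map ε.toRingHom).map ε.symm.toRingHom = F := by
    ext1 i j
    simp
  rw [← hε]
  refine (hasSmithFactorization_of_associated_mul_C
    ((projectivesFree_mvPolynomial K (N + 2)).of_ringEquiv ε) (isRetraction_bind₁_update_X hf')
    (fun a => by simp) (pderiv_X_sub_of_mem_supported hf') hh0 hdet' fun j hj => ?_).map _
  obtain ⟨d, hd⟩ := hF j hj
  exact ⟨ε d, by rw [detIdeal_map, hd, Ideal.map_span, Set.image_singleton]; rfl⟩

end LastVariable

/-! ### Equivalence to the Smith form -/

section SmithForm

variable {R : Type*} [CommRing R] {l m r k : ℕ}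

lemma exists_det_eq_and_padCols_mul (h : r ≤ m) (N : Matrix (Fin r) (Fin r) R) :
    ∃ W : Matrix (Fin m) (Fin m) R, W.det = N.det ∧
      ∀ {l : Type*} (Y : Matrix l (Fin r) R), padCols m Y * W = padCols m (Y * N) := by
  obtain ⟨W, hW, hY⟩ := exists_det_eq_and_mul_padRows h Nᵀ
  refine ⟨Wᵀ, by rw [det_transpose, hW, det_transpose], fun {l} Y => ?_⟩
  simpa only [transpose_mul, padRows_transpose, transpose_transpose] using
    congrArg transpose (hY Yᵀ)

lemma matEquiv_of_mul_mul_eq {F G : Matrix (Fin l) (Fin m) R} {U : Matrix (Fin l) (Fin l) R}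
    {V : Matrix (Fin m) (Fin m) R} (hU : IsUnit U.det) (hV : IsUnit V.det) (h : U * F * V = G) :
    MatEquiv F G := by
  refine ⟨U⁻¹, V⁻¹, isUnit_nonsing_inv_det _ hU, isUnit_nonsing_inv_det _ hV, ?_⟩
  rw [← h, Matrix.mul_assoc U F V, nonsing_inv_mul_cancel_left _ _ hU,
    mul_nonsing_inv_cancel_right _ _ hV]

lemma MatEquiv.trans {F G H : Matrix (Fin l) (Fin m) R} (hFG : MatEquiv F G)
    (hGH : MatEquiv G H) : MatEquiv F H := by
  obtain ⟨U, V, hU, hV, rfl⟩ := hFG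
  obtain ⟨U', V', hU', hV', rfl⟩ := hGH
  refine ⟨U * U', V' * V, ?_, ?_, by simp only [Matrix.mul_assoc]⟩
  · rw [det_mul]
    exact hU.mul hU'
  · rw [det_mul]
    exact hV'.mul hV

lemma MatEquiv.padCols_padRows (hl : r ≤ l) (hm : r ≤ m) {G H : Matrix (Fin r) (Fin r) R}
    (h : MatEquiv G H) : MatEquiv (padCols m (padRows l G)) (padCols m (padRows l H)) := by
  obtain ⟨U, V, hU, hV, rfl⟩ := h
  obtain ⟨W₁, hW₁, hpad₁⟩ := exists_det_eq_and_mul_padRows hl U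
  obtain ⟨W₂, hW₂, hpad₂⟩ := exists_det_eq_and_padCols_mul hm V
  refine ⟨W₁, W₂, hW₁ ▸ hU, hW₂ ▸ hV, ?_⟩
  rw [mul_padCols, hpad₁, hpad₂, padRows_mul]

lemma padCols_padRows_diagonal (Φ : ℕ → R) :
    padCols m (padRows l (diagonal fun i : Fin r => Φ i)) =
      smithDiag (fun i : Fin l => if (i : ℕ) < r then Φ i else 0) := by
  ext i j
  simp only [padCols, padRows, smithDiag, of_apply, diagonal_apply, Fin.mk.injEq]
  grind

lemma det_smithDiag_submatrix_castLE (hl : k ≤ l) (hm : k ≤ m) (Φ : Fin l → R) :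
    ((smithDiag Φ : Matrix (Fin l) (Fin m) R).submatrix (Fin.castLE hl) (Fin.castLE hm)).det =
      ∏ j : Fin k, Φ (Fin.castLE hl j) := by
  rw [← det_diagonal]
  congr 1
  ext i j
  simp [smithDiag, diagonal_apply, Fin.ext_iff]

lemma prod_Iic_eq_prod_castLE (Φ : Fin l → R) (i : Fin l) :
    ∏ j ∈ Finset.Iic i, Φ j = ∏ j : Fin (i + 1), Φ (Fin.castLE i.isLt j) := by
  have hIic : Finset.Iic i = Finset.univ.map (Fin.castLEEmb i.isLt) := by
    rw [← Finset.Iic_top]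
    exact (Fin.map_castLEEmb_Iic (Fin.last i) i.isLt).symm
  rw [hIic, Finset.prod_map]
  rfl

lemma HasRank.detIdeal_ne_bot {F : Matrix (Fin l) (Fin m) R} (h : HasRank F r) (hk : k ≤ r) :
    detIdeal k F ≠ ⊥ := by
  obtain ⟨p, hp, hp0⟩ := h.1
  have hpr : p ∈ detIdeal r F := span_minorsSet F r ▸ Ideal.subset_span hp
  exact fun hbot => hp0 ((Submodule.mem_bot R).1 (hbot ▸ detIdeal_antitone F hk hpr))

lemma HasRank.detIdeal_succ_eq_bot {F : Matrix (Fin l) (Fin m) R} (h : HasRank F r) :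
    detIdeal (r + 1) F = ⊥ := by
  rw [← span_minorsSet, Ideal.span_eq_bot]
  exact h.2

lemma HasRank.le_rows_and_le_cols {F : Matrix (Fin l) (Fin m) R} (h : HasRank F r) :
    r ≤ l ∧ r ≤ m := by
  obtain ⟨_, ⟨ρ, c, -⟩, -⟩ := h.1
  exact ⟨by simpa using Fintype.card_le_of_embedding ρ,
    by simpa using Fintype.card_le_of_embedding c⟩

lemma JkUnit.detIdeal_eq_span {F : Matrix (Fin l) (Fin m) R} {d : R} (h : JkUnit F k)
    (hd : IsGcdMinors F k d) : detIdeal k F = Ideal.span {d} := by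
  obtain ⟨e, he, htop⟩ := h
  rw [detIdeal_eq_span_of_reducedIdeal_eq_top he.1 htop]
  exact le_antisymm (Ideal.span_singleton_le_span_singleton.2 (he.2 d hd.1))
    (Ideal.span_singleton_le_span_singleton.2 (hd.2 e he.1))

lemma detIdeal_eq_span_of_matEquiv_smithDiag {F : Matrix (Fin l) (Fin m) R} {Φ : Fin l → R}
    (h : MatEquiv F (smithDiag Φ)) {i : Fin l} (hi : (i : ℕ) < m)
    (hgcd : IsGcdMinors F (i + 1) (∏ j ∈ Finset.Iic i, Φ j)) :
    detIdeal (i + 1) F = Ideal.span {∏ j ∈ Finset.Iic i, Φ j} := by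
  apply le_antisymm
  · rw [← span_minorsSet, Ideal.span_le]
    exact fun p hp => Ideal.mem_span_singleton.2 (hgcd.1 p hp)
  · obtain ⟨U, V, hU, hV, hF⟩ := h
    rw [Ideal.span_singleton_le_iff_mem, hF, detIdeal_mul_isUnit _ _ hV, detIdeal_isUnit_mul _ hU,
      prod_Iic_eq_prod_castLE, ← det_smithDiag_submatrix_castLE i.isLt hi]
    exact det_submatrix_mem_detIdeal _ _ _

theorem SmithEquivAt.jkUnit [IsDomain R] {F : Matrix (Fin l) (Fin m) R} (hF : SmithEquivAt F r)
    (hrank : HasRank F r) (hk : 1 ≤ k) (hkr : k ≤ r) : JkUnit F k := by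
  obtain ⟨Φ, hgcd, -, hequiv⟩ := hF
  obtain ⟨hrl, hrm⟩ := hrank.le_rows_and_le_cols
  obtain ⟨i, rfl⟩ : ∃ i : Fin l, k = i + 1 := ⟨⟨k - 1, by omega⟩, by simp; omega⟩
  have hspan := detIdeal_eq_span_of_matEquiv_smithDiag hequiv (hkr.trans hrm) (hgcd i hkr)
  refine ⟨_, hgcd i hkr, reducedIdeal_eq_top_of_detIdeal_eq_span (fun h0 => ?_) hspan⟩
  exact hrank.detIdeal_ne_bot hkr (by rw [hspan, h0, Ideal.span_singleton_eq_bot])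

lemma hasSmithFactorization_fin_zero (F : Matrix (Fin 0) (Fin 0) R) : HasSmithFactorization F := by
  refine ⟨1, 1, 0, by simp, by simp, Subsingleton.elim _ _, fun j hj => ?_⟩
  obtain rfl := Nat.le_zero.1 hj
  simp [detIdeal_zero]

lemma HasSmithFactorization.smithEquivAt {G : Matrix (Fin r) (Fin r) R}
    (hG : HasSmithFactorization G) (hl : r ≤ l) (hm : r ≤ m) {F : Matrix (Fin l) (Fin m) R}
    (hFG : MatEquiv F (padCols m (padRows l G))) : SmithEquivAt F r := by
  obtain ⟨U, V, Φ, hU, hV, hUV, hd⟩ := hG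
  refine ⟨fun i => if (i : ℕ) < r then Φ i else 0, fun i hi => ?_, fun i hi => if_neg hi.not_gt, ?_⟩
  · have hprod : ∏ j ∈ Finset.Iic i, (if (j : ℕ) < r then Φ j else 0) =
        ∏ j ∈ Finset.range (i + 1), Φ j := by
      rw [prod_Iic_eq_prod_castLE, Finset.prod_range]
      exact Finset.prod_congr rfl fun j _ => if_pos (j.is_le.trans_lt hi)
    obtain ⟨P, Q, hP, hQ, rfl⟩ := hFG
    refine isGcdMinors_of_detIdeal_eq_span ?_
    rw [hprod, ← hd (i + 1) hi, detIdeal_mul_isUnit _ _ hQ, detIdeal_isUnit_mul _ hP,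
      detIdeal_padCols hm, detIdeal_padRows hl]
  · rw [← padCols_padRows_diagonal]
    exact hFG.trans (MatEquiv.padCols_padRows hl hm ⟨U, V, hU, hV, hUV⟩)

theorem smithEquivAt_of_forall_jkUnit {K : Type*} [Field K] {N : ℕ}
    {F : Matrix (Fin l) (Fin m) (MvPolynomial (Fin (N + 2)) K)} (hrank : HasRank F r)
    {f h : MvPolynomial (Fin (N + 2)) K}
    (hf : f ∈ supported K {t : Fin (N + 2) | (t : ℕ) ≠ 0})
    (hh : h ∈ supported K {Fin.last (N + 1)}) (hd : IsGcdMinors F r ((X 0 - f) * h))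
    (hJ : ∀ k, 1 ≤ k → k ≤ r → JkUnit F k) : SmithEquivAt F r := by
  have hprincipal : ∀ k ≤ r, ∃ d, detIdeal k F = Ideal.span {d} := fun k hkr => by
    obtain rfl | hk := k.eq_zero_or_pos
    · exact ⟨1, by rw [detIdeal_zero, Ideal.span_singleton_one]⟩
    · obtain ⟨d, hgcd, htop⟩ := hJ k hk hkr
      exact ⟨d, detIdeal_eq_span_of_reducedIdeal_eq_top hgcd.1 htop⟩
  obtain ⟨d, hspan⟩ := hprincipal r le_rfl
  have hd0 : d ≠ 0 := fun h0 => hrank.detIdeal_ne_bot le_rfl (by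
    rw [hspan, h0, Ideal.span_singleton_eq_bot])
  obtain ⟨hrl, hrm, U, V, G, hU, hV, hUV, hG⟩ :=
    (projectivesFree_mvPolynomial K (N + 2)).exists_mul_mul_eq_padCols_padRows hd0 hspan
      hrank.detIdeal_succ_eq_bot
  suffices hsq : HasSmithFactorization G from
    hsq.smithEquivAt hrl hrm (matEquiv_of_mul_mul_eq hU hV hUV)
  cases r with
  | zero => exact hasSmithFactorization_fin_zero G
  | succ k =>
    have hdet : Ideal.span {(X 0 - f) * h} = Ideal.span {G.det} := by
      rw [← detIdeal_square, hG, (hJ _ k.succ_pos le_rfl).detIdeal_eq_span hd]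
    have hdet0 : G.det ≠ 0 := by
      rwa [Ne, ← Ideal.span_singleton_eq_bot, ← detIdeal_square, hG, hspan,
        Ideal.span_singleton_eq_bot]
    exact hasSmithFactorization_of_associated_det hf hh hdet0
      (Ideal.span_singleton_eq_span_singleton.1 hdet) fun j hj => by
        simpa only [hG] using hprincipal j (hj.trans k.le_succ)

end SmithForm

theorem statement3_general {K : Type*} [Field K] (n : ℕ) (hn : 2 ≤ n) (l m r : ℕ)
    (F : Matrix (Fin l) (Fin m) (MvPolynomial (Fin n) K))
    (hrank : HasRank F r)
    (f h : MvPolynomial (Fin n) K)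
    (hf : f ∈ MvPolynomial.supported K {t : Fin n | (t : ℕ) ≠ 0})
    (hh : h ∈ MvPolynomial.supported K {(⟨n - 1, by omega⟩ : Fin n)})
    (hd : IsGcdMinors F r ((MvPolynomial.X (⟨0, by omega⟩ : Fin n) - f) * h)) :
    SmithEquivAt F r ↔ ∀ k : ℕ, 1 ≤ k → k ≤ r → JkUnit F k := by
  refine ⟨fun hF _ => hF.jkUnit hrank, fun hJ => ?_⟩
  obtain ⟨N, rfl⟩ := Nat.exists_eq_add_of_le' hn
  exact smithEquivAt_of_forall_jkUnit hrank hf hh hd hJ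

theorem statement3 {K : Type*} [Field K] (n : ℕ) (hn : 2 ≤ n) (l m r : ℕ) (hlm : l < m)
    (F : Matrix (Fin l) (Fin m) (MvPolynomial (Fin n) K))
    (hrank : HasRank F r)
    (f h : MvPolynomial (Fin n) K)
    (hf : f ∈ MvPolynomial.supported K {t : Fin n | (t : ℕ) ≠ 0})
    (hh : h ∈ MvPolynomial.supported K {(⟨n - 1, by omega⟩ : Fin n)})
    (hd : IsGcdMinors F r ((MvPolynomial.X (⟨0, by omega⟩ : Fin n) - f) * h)) :
    SmithEquivAt F r ↔ ∀ k : ℕ, 1 ≤ k → k ≤ r → JkUnit F k := by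
  exact statement3_general n hn l m r F hrank f h hf hh hd
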